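/- arXiv:2002.11087 — 2 statements merged into one kernel-verified Lean document; each statement's English description precedes it below -/
import Mathlib

section
/- Let q be of Cartan type B_2: q_11 = q^2, q_22 = q, q_12 q_21 = q^{-2}, with N = ord q > 2 and finite. Then in any pre-Nichols algebra of q with finite GK-dimension, the quantum Serre relations x_{112} = (ad_c x_1)^2 x_2 = 0 and x_{2221} = (ad_c x_2)^3 x_1 = 0 hold; i.e. the distinguished pre-Nichols algebra of type B_2 is eminent. -/
open scoped TensorProduct ENNReal

noncomputable section

namespace Stmt17

/-- The Gelfand–Kirillov dimension of a `k`-algebra `A`. -/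
def GKdim (k A : Type*) [Field k] [Ring A] [Algebra k A] : ℝ≥0∞ :=
  ⨆ S : Finset A,
    Filter.limsup
      (fun n : ℕ => ENNReal.ofReal (Real.logb n
        (Module.finrank k ((Submodule.span k (insert (1 : A) (S : Set A))) ^ n : Submodule k A))))
      Filter.atTop

/-- The `ℤ²`-homogeneous component of degree `d` of the free (tensor) algebra. -/
def piece (k : Type*) [Field k] (d : Fin 2 → ℤ) : Submodule k (FreeAlgebra k (Fin 2)) :=
  Submodule.span k {y | ∃ l : List (Fin 2),
    (∀ i, (l.count i : ℤ) = d i) ∧ y = (l.map (FreeAlgebra.ι k)).prod}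

/-- The bicharacter on `ℤ²` extending a braiding matrix `Q`. -/
def qb {k : Type*} [Field k] (Q : Fin 2 → Fin 2 → kˣ) (α β : Fin 2 → ℤ) : kˣ :=
  ∏ a, ∏ b, Q a b ^ (α a * β b)

/-- Degree of the generator `x_a`. -/
def ee (a : Fin 2) : Fin 2 → ℤ := Pi.single a 1

/-- Braided commutator of two homogeneous elements carried with their degrees. -/
def brk {k : Type*} [Field k] (Q : Fin 2 → Fin 2 → kˣ)
    (p r : FreeAlgebra k (Fin 2) × (Fin 2 → ℤ)) :
    FreeAlgebra k (Fin 2) × (Fin 2 → ℤ) :=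
  (p.1 * r.1 - (qb Q p.2 r.2 : k) • (r.1 * p.1), p.2 + r.2)

/-- The generator `x_a` together with its degree. -/
def gen (k : Type*) [Field k] (a : Fin 2) : FreeAlgebra k (Fin 2) × (Fin 2 → ℤ) :=
  (FreeAlgebra.ι k a, ee a)

end Stmt17

open Stmt17

set_option linter.unusedSimpArgs false

namespace QShuffle

variable {k : Type*} [Field k]

/-- The scalar `χ(c, x)` obtained by moving the letter `c` across the word `x`. -/
def chi (Q : Fin 2 → Fin 2 → k) (c : Fin 2) (x : List (Fin 2)) : k := (x.map (Q c)).prod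

/-- The quantum shuffle product of two functions on words, evaluated at a word. -/
def sh (Q : Fin 2 → Fin 2 → k) :
    List (Fin 2) → (List (Fin 2) → k) → (List (Fin 2) → k) → k
  | [], f, g => f [] * g []
  | c :: w, f, g =>
      sh Q w (fun x => f (c :: x)) g + sh Q w (fun x => chi Q c x * f x) (fun x => g (c :: x))

/-- The quantum shuffle product of two functions on words. -/
def star (Q : Fin 2 → Fin 2 → k) (f g : List (Fin 2) → k) : List (Fin 2) → k :=
  fun w => sh Q w f g

/-- The counit: the indicator function of the empty word. -/
def eps : List (Fin 2) → k := fun x => if x = [] then 1 else 0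

/-- The function `u w ↦ g w`, vanishing on words that do not start with `u`. -/
def pre : List (Fin 2) → (List (Fin 2) → k) → List (Fin 2) → k
  | [], g => g
  | c :: u, g => fun x => match x with
    | [] => 0
    | d :: x => if d = c then pre u g x else 0

/-- The indicator function of a word. -/
def dl (u : List (Fin 2)) : List (Fin 2) → k := pre u eps

variable (Q : Fin 2 → Fin 2 → k)

@[simp] lemma chi_nil (c : Fin 2) : chi Q c [] = 1 := by simp [chi]

@[simp] lemma chi_cons (c d : Fin 2) (x : List (Fin 2)) :
    chi Q c (d :: x) = Q c d * chi Q c x := by simp [chi]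

@[simp] lemma chi_append (c : Fin 2) (x y : List (Fin 2)) :
    chi Q c (x ++ y) = chi Q c x * chi Q c y := by simp [chi]

@[simp] lemma pre_nil (g : List (Fin 2) → k) : pre [] g = g := rfl

@[simp] lemma pre_cons_nil (c : Fin 2) (u : List (Fin 2)) (g : List (Fin 2) → k) :
    pre (c :: u) g [] = 0 := rfl

@[simp] lemma pre_cons_cons (c d : Fin 2) (u x : List (Fin 2)) (g : List (Fin 2) → k) :
    pre (c :: u) g (d :: x) = if d = c then pre u g x else 0 := rfl

lemma pre_append (u v : List (Fin 2)) (g : List (Fin 2) → k) :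
    pre (u ++ v) g = pre u (pre v g) := by
  induction u with
  | nil => rfl
  | cons c u ih => funext x; cases x <;> simp [ih]

@[simp] lemma eps_nil : (eps : List (Fin 2) → k) [] = 1 := by simp [eps]

@[simp] lemma eps_cons (c : Fin 2) (x : List (Fin 2)) :
    (eps : List (Fin 2) → k) (c :: x) = 0 := by simp [eps]

lemma chi_mul_eps (c : Fin 2) : (fun x => chi Q c x * eps x) = (eps : List (Fin 2) → k) := by
  funext x; cases x <;> simp

lemma chi_mul_pre (c : Fin 2) (u : List (Fin 2)) (g : List (Fin 2) → k) :
    (fun x => chi Q c x * pre u g x) = chi Q c u • pre u (fun x => chi Q c x * g x) := by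
  induction u with
  | nil => simp
  | cons d u ih =>
    funext x
    cases x with
    | nil => simp
    | cons e x =>
      have := congrFun ih x
      simp only [Pi.smul_apply, smul_eq_mul] at this
      by_cases h : e = d
      · subst h; simp [mul_assoc, this]
      · simp [h]

lemma chi_mul_dl (c : Fin 2) (u : List (Fin 2)) :
    (fun x => chi Q c x * dl u x) = chi Q c u • dl u := by
  rw [dl, chi_mul_pre, chi_mul_eps]

lemma dl_apply (u x : List (Fin 2)) : (dl u : List (Fin 2) → k) x = if x = u then 1 else 0 := by
  induction u generalizing x with
  | nil => simp [dl, eps]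
  | cons c u ih =>
    cases x with
    | nil => simp [dl]
    | cons d x =>
      have := ih x
      rw [dl] at this ⊢
      by_cases h : d = c <;> simp [h, this]

lemma sh_add_left (w : List (Fin 2)) (f f' g : List (Fin 2) → k) :
    sh Q w (f + f') g = sh Q w f g + sh Q w f' g := by
  induction w generalizing f f' g with
  | nil => simp [sh, add_mul]
  | cons c w ih =>
    have h1 := ih (fun x => f (c :: x)) (fun x => f' (c :: x)) g
    have h2 := ih (fun x => chi Q c x * f x) (fun x => chi Q c x * f' x) (fun x => g (c :: x))
    have e2 : (fun x => chi Q c x * (f + f') x)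
      = (fun x => chi Q c x * f x) + fun x => chi Q c x * f' x := by
      funext x; simp [mul_add]
    have e1 : (fun x => (f + f') (c :: x)) = (fun x => f (c :: x)) + fun x => f' (c :: x) := rfl
    simp only [sh, e1, e2, h1, h2]; ring

lemma sh_add_right (w : List (Fin 2)) (f g g' : List (Fin 2) → k) :
    sh Q w f (g + g') = sh Q w f g + sh Q w f g' := by
  induction w generalizing f g g' with
  | nil => simp [sh, mul_add]
  | cons c w ih =>
    have h1 := ih (fun x => f (c :: x)) g g'
    have h2 := ih (fun x => chi Q c x * f x) (fun x => g (c :: x)) (fun x => g' (c :: x))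
    have e1 : (fun x => (g + g') (c :: x)) = (fun x => g (c :: x)) + fun x => g' (c :: x) := rfl
    simp only [sh, e1, h1, h2]; ring

lemma sh_smul_left (w : List (Fin 2)) (a : k) (f g : List (Fin 2) → k) :
    sh Q w (a • f) g = a * sh Q w f g := by
  induction w generalizing f g with
  | nil => simp [sh, mul_assoc]
  | cons c w ih =>
    have h1 := ih (fun x => f (c :: x)) g
    have h2 := ih (fun x => chi Q c x * f x) (fun x => g (c :: x))
    have e2 : (fun x => chi Q c x * (a • f) x) = a • fun x => chi Q c x * f x := by
      funext x; simp; ring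
    have e1 : (fun x => (a • f) (c :: x)) = a • fun x => f (c :: x) := rfl
    simp only [sh, e1, e2, h1, h2]; ring

lemma sh_smul_right (w : List (Fin 2)) (a : k) (f g : List (Fin 2) → k) :
    sh Q w f (a • g) = a * sh Q w f g := by
  induction w generalizing f g with
  | nil => simp [sh]; ring
  | cons c w ih =>
    have h1 := ih (fun x => f (c :: x)) g
    have h2 := ih (fun x => chi Q c x * f x) (fun x => g (c :: x))
    have e1 : (fun x => (a • g) (c :: x)) = a • fun x => g (c :: x) := rfl
    simp only [sh, e1, h1, h2]; ring

@[simp] lemma sh_zero_left (w : List (Fin 2)) (g : List (Fin 2) → k) :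
    sh Q w (fun _ => 0) g = 0 := by
  have := sh_smul_left Q w 0 0 g
  rw [zero_smul, zero_mul] at this
  exact this

@[simp] lemma sh_zero_right (w : List (Fin 2)) (f : List (Fin 2) → k) :
    sh Q w f (fun _ => 0) = 0 := by
  have := sh_smul_right Q w 0 f 0
  rw [zero_smul, zero_mul] at this
  exact this

@[simp] lemma sh_eps_left (w : List (Fin 2)) (g : List (Fin 2) → k) : sh Q w eps g = g w := by
  induction w generalizing g with
  | nil => simp [sh]
  | cons c w ih => simp [sh, chi_mul_eps, ih]

@[simp] lemma sh_eps_right (w : List (Fin 2)) (f : List (Fin 2) → k) : sh Q w f eps = f w := by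
  induction w generalizing f with
  | nil => simp [sh]
  | cons c w ih => simp [sh, ih]

end QShuffle

namespace QShuffle

variable {k : Type*} [Field k]

/-- The block `0 1 ⋯ 1` with `h` letters `1`. -/
def blk (h : ℕ) : List (Fin 2) := 0 :: List.replicate h 1

/-- The word obtained from `x` by prepending `s` blocks. -/
def dpow (h : ℕ) : ℕ → List (Fin 2) → List (Fin 2)
  | 0, x => x
  | s + 1, x => blk h ++ dpow h s x

variable (Q : Fin 2 → Fin 2 → k) (h : ℕ)

/-- The scalar obtained by moving a block across the word `x`. -/
def dchi (x : List (Fin 2)) : k := chi Q 0 x * chi Q 1 x ^ h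

/-- The sum `1 + Q₁₁ + ⋯ + Q₁₁ ^ (h - 1)`. -/
def geo : k := ∑ j ∈ Finset.range h, Q 1 1 ^ j

/-- The functions whose values at `D ^ s 1 x` vanish for nonempty `x`. -/
def HC (f : List (Fin 2) → k) : Prop := ∀ s x, x ≠ [] → f (dpow h s (1 :: x)) = 0

@[simp] lemma dchi_nil : dchi Q h [] = 1 := by simp [dchi]

@[simp] lemma dchi_append (x y : List (Fin 2)) :
    dchi Q h (x ++ y) = dchi Q h x * dchi Q h y := by simp [dchi]; ring

variable {h}

lemma HC.shift {f : List (Fin 2) → k} (hf : HC h f) : HC h fun x => f (blk h ++ x) :=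
  fun s x hx => hf (s + 1) x hx

lemma HC.twist {f : List (Fin 2) → k} (hf : HC h f) (c : List (Fin 2) → k) :
    HC h fun x => c x * f x := fun s x hx => by simp [hf s x hx]

lemma HC.cons_one {f : List (Fin 2) → k} (hf : HC h f) :
    (fun x => f (1 :: x)) = f [1] • eps := by
  funext x
  cases x with
  | nil => simp
  | cons c x => simpa [dpow] using hf 0 (c :: x) (by simp)

lemma HC.mul_cons_one {f : List (Fin 2) → k} (hf : HC h f) (c : List (Fin 2) → k) :
    (fun x => c x * f (1 :: x)) = (c [] * f [1]) • eps := by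
  funext x
  have := congrFun hf.cons_one x
  simp only [Pi.smul_apply, smul_eq_mul] at this
  rw [this]
  cases x <;> simp

lemma HC.mul_cons_one_one {f : List (Fin 2) → k} (hf : HC h f) (c : List (Fin 2) → k) :
    (fun x => c x * f (1 :: 1 :: x)) = fun _ => 0 := by
  funext x
  have : f (1 :: 1 :: x) = 0 := hf 0 (1 :: x) (by simp)
  simp [this]

/-- Splitting off a block of the word when the right factor starts with a block. -/
lemma sh_blk_right (hh : h = 1 ∨ h = 2) {f : List (Fin 2) → k} (hf : HC h f)
    (g : List (Fin 2) → k) (w : List (Fin 2)) :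
    sh Q (blk h ++ w) f (pre (blk h) g) = sh Q w (fun x => f (blk h ++ x)) (pre (blk h) g)
      + sh Q w (fun x => dchi Q h x * f x) g + Q 0 1 * geo Q h * f [1] * pre [1] g w := by
  have h1 := hf.mul_cons_one (fun x => chi Q 0 (1 :: x))
  rcases hh with rfl | rfl
  · simp only [blk, geo, List.replicate, sh, List.cons_append, List.nil_append, pre_cons_cons, h1,
      dchi, sh_smul_left]
    simp [add_assoc, mul_assoc, mul_left_comm, -chi_cons]
    simp
    ring
  · have h2 := hf.mul_cons_one (fun x => chi Q 1 x * chi Q 0 (1 :: x))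
    have h3 := hf.mul_cons_one (fun x => chi Q 1 (1 :: x) * chi Q 0 (1 :: x))
    have h4 := hf.mul_cons_one_one (fun x => chi Q 0 (1 :: 1 :: x))
    simp only [mul_assoc] at h2 h3 h4
    simp only [blk, geo, List.replicate, sh, List.cons_append, List.nil_append, pre_cons_cons,
      dchi, if_true, h2, h3, h4, sh_smul_left]
    simp [Finset.sum_range_succ, pow_two, mul_assoc, mul_left_comm, -chi_cons]
    simp
    ring

/-- Splitting off a block of the word when the left factor starts with a block. -/
lemma sh_blk_left (hh : h = 1 ∨ h = 2) {f : List (Fin 2) → k} (hf : HC h f)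
    (g : List (Fin 2) → k) (w : List (Fin 2)) :
    sh Q (blk h ++ w) (pre (blk h) g) f = sh Q w g f
      + sh Q w (fun x => dchi Q h x * pre (blk h) g x) (fun x => f (blk h ++ x))
      + geo Q h * f [1] * chi Q 1 w * pre [1] g w := by
  have h1 := hf.cons_one
  rcases hh with rfl | rfl
  · simp only [blk, geo, List.replicate, sh, List.cons_append, List.nil_append, pre_cons_cons, h1,
      dchi, sh_smul_right]
    simp [add_assoc, mul_assoc, mul_left_comm, -chi_cons]
    ring
  · have h2 := hf.mul_cons_one_one (fun _ => 1)
    simp only [one_mul] at h2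
    simp only [blk, geo, List.replicate, sh, List.cons_append, List.nil_append, pre_cons_cons, h1,
      dchi, sh_smul_right, h2]
    simp [mul_assoc, mul_left_comm, Finset.sum_range_succ, pow_two]
    ring

lemma sh_one_left {g : List (Fin 2) → k} (hg : ∀ x, g (1 :: x) = 0) {f : List (Fin 2) → k}
    (hf : HC h f) (w : List (Fin 2)) : sh Q (1 :: w) f g = f [1] * g w := by
  simp [sh, hg, hf.cons_one, sh_smul_left]

lemma sh_one_right {g : List (Fin 2) → k} (hg : ∀ x, g (1 :: x) = 0) {f : List (Fin 2) → k}
    (hf : HC h f) (w : List (Fin 2)) : sh Q (1 :: w) g f = f [1] * chi Q 1 w * g w := by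
  simp [sh, hg, hf.cons_one, sh_smul_right]; ring

end QShuffle

namespace QShuffle

variable {k : Type*} [Field k]

variable (Q : Fin 2 → Fin 2 → k) (h : ℕ)

lemma dchi_cons (c : Fin 2) (x : List (Fin 2)) :
    dchi Q h (c :: x) = dchi Q h [c] * dchi Q h x := dchi_append Q h [c] x

lemma dchi_mul_pre (u : List (Fin 2)) (g : List (Fin 2) → k) :
    (fun x => dchi Q h x * pre u g x) = dchi Q h u • pre u (fun x => dchi Q h x * g x) := by
  induction u with
  | nil => simp
  | cons d u ih =>
    funext x
    cases x with
    | nil => simp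
    | cons e x =>
      have := congrFun ih x
      simp only [Pi.smul_apply, smul_eq_mul] at this
      by_cases hd : e = d
      · subst hd
        simp only [pre_cons_cons, if_true, Pi.smul_apply, smul_eq_mul]
        rw [dchi_cons, dchi_cons Q h e u, mul_assoc, this, mul_assoc]
      · simp [hd]

lemma dchi_mul_eps : (fun x => dchi Q h x * eps x) = (eps : List (Fin 2) → k) := by
  funext x; cases x <;> simp

lemma dchi_mul_pre_eps (u : List (Fin 2)) :
    (fun x => dchi Q h x * pre u eps x) = dchi Q h u • pre u (eps : List (Fin 2) → k) := by
  rw [dchi_mul_pre, dchi_mul_eps]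

lemma dchi_mul_DD : (fun x => dchi Q h x * pre (blk h) (pre (blk h) eps) x)
    = dchi Q h (blk h) ^ 2 • pre (blk h) (pre (blk h) (eps : List (Fin 2) → k)) := by
  rw [← pre_append, dchi_mul_pre_eps, dchi_append, pow_two]

lemma chi_mul_pre_eps_apply (c : Fin 2) (u x : List (Fin 2)) :
    chi Q c x * pre u eps x = chi Q c u * pre u eps x := by
  have := congrFun (chi_mul_dl Q c u) x
  simpa [dl] using this

@[simp] lemma dpow_zero (x : List (Fin 2)) : dpow h 0 x = x := rfl

lemma dpow_succ (s : ℕ) (x : List (Fin 2)) : dpow h (s + 1) x = blk h ++ dpow h s x := rfl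

lemma dchi_dpow (s : ℕ) (x : List (Fin 2)) :
    dchi Q h (dpow h s x) = dchi Q h (blk h) ^ s * dchi Q h x := by
  induction s with
  | zero => simp [dpow]
  | succ s ih => simp [dpow, ih, pow_succ]; ring

lemma pre_one_dpow (s : ℕ) (g : List (Fin 2) → k) (x : List (Fin 2)) :
    pre [1] g (dpow h s (1 :: x)) = if s = 0 then g x else 0 := by
  cases s <;> simp [dpow_succ, blk]

lemma pre_blk_one (g : List (Fin 2) → k) (x : List (Fin 2)) : pre (blk h) g (1 :: x) = 0 := by
  simp [blk]

lemma pre_blk_nil (g : List (Fin 2) → k) : pre (blk h) g [] = 0 := rfl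

/-- The scalar `χ(D, D)`. -/
abbrev cP : k := dchi Q h (blk h)
/-- The scalar `χ(D, 1)`. -/
abbrev cF : k := dchi Q h [1]
/-- The scalar `χ(1, D)`. -/
abbrev cG : k := chi Q 1 (blk h)
/-- The scalar `Q₀₁ (1 + ⋯ + Q₁₁ ^ (h - 1))`. -/
abbrev cR : k := Q 0 1 * geo Q h
/-- The scalar `Q₁₁ (1 + ⋯ + Q₁₁ ^ (h - 1))`. -/
abbrev cS : k := Q 1 1 * geo Q h

/-- Coefficients of right multiplication by `D`. -/
def rr : ℕ → k
  | 0 => cF Q h + cR Q h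
  | s + 1 => rr s + cP Q h ^ (s + 1) * cF Q h

/-- Coefficients of left multiplication by `D`. -/
def ll : ℕ → k
  | 0 => 1 + cS Q h
  | s + 1 => 1 + cP Q h * ll s

/-- Coefficients of right multiplication by `DD`. -/
def rrr : ℕ → k
  | 0 => cF Q h * rr Q h 0
  | s + 1 => rrr s + cP Q h ^ (s + 1) * cF Q h * rr Q h (s + 1)

/-- Coefficients of left multiplication by `DD`. -/
def lll : ℕ → k
  | 0 => ll Q h 0
  | s + 1 => ll Q h (s + 1) + cP Q h ^ 2 * lll s

/-- The scalar `χ(D ^ s 1, D)`. -/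
def cc (s : ℕ) : k := cP Q h ^ s * cG Q h

variable {h}

section
variable (hh : h = 1 ∨ h = 2) {f : List (Fin 2) → k} (hf : HC h f)
include hh hf

lemma sh_D_right (s : ℕ) : sh Q (dpow h (s + 1) [1]) f (pre (blk h) eps)
    = rr Q h s * f (dpow h s [1]) := by
  induction s generalizing f with
  | zero =>
    rw [dpow_succ, sh_blk_right Q hh hf, dpow_zero, sh_one_left Q (pre_blk_one h _) hf.shift]
    simp [pre_blk_nil, rr]
    ring
  | succ s ih =>
    rw [dpow_succ, sh_blk_right Q hh hf, ih hf.shift, sh_eps_right, pre_one_dpow, dchi_dpow, rr,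
      dpow]
    simp
    ring

lemma sh_D_left (s : ℕ) : sh Q (dpow h (s + 1) [1]) (pre (blk h) eps) f
    = ll Q h s * f (dpow h s [1]) := by
  induction s generalizing f with
  | zero =>
    rw [dpow_succ, sh_blk_left Q hh hf, dpow_zero, dchi_mul_pre_eps, sh_smul_left,
      sh_one_right Q (pre_blk_one h _) hf.shift]
    simp [pre_blk_nil, ll]
    ring
  | succ s ih =>
    rw [dpow_succ, sh_blk_left Q hh hf, dchi_mul_pre_eps, sh_smul_left, ih hf.shift,
      sh_eps_left, pre_one_dpow, ll, dpow_succ]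
    simp
    ring

lemma sh_D_right_append (s : ℕ) {x : List (Fin 2)} (hx : x ≠ []) :
    sh Q (dpow h s (1 :: x)) f (pre (blk h) eps) = f (dpow h s [1]) * pre (blk h) eps x := by
  induction s generalizing f with
  | zero => rw [dpow_zero, sh_one_left Q (pre_blk_one h _) hf]; rfl
  | succ s ih =>
    rw [dpow_succ, sh_blk_right Q hh hf, ih hf.shift, sh_eps_right, pre_one_dpow, hf s x hx, dpow_succ]
    simp [eps, hx]

lemma sh_D_left_append (s : ℕ) {x : List (Fin 2)} (hx : x ≠ []) :
    sh Q (dpow h s (1 :: x)) (pre (blk h) eps) f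
      = cc Q h s * f (dpow h s [1]) * pre (blk h) eps x := by
  induction s generalizing f with
  | zero =>
    rw [dpow_zero, sh_one_right Q (pre_blk_one h _) hf]
    rw [mul_assoc, chi_mul_pre_eps_apply]
    simp [dpow, cc]; ring
  | succ s ih =>
    rw [dpow_succ, sh_blk_left Q hh hf, dchi_mul_pre_eps, sh_smul_left, ih hf.shift,
      sh_eps_left, pre_one_dpow, hf s x hx, dpow_succ]
    simp [eps, hx, cc]
    ring

lemma sh_DD_right_one : sh Q (dpow h 1 [1]) f (pre (blk h) (pre (blk h) eps)) = 0 := by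
  rw [dpow_succ, sh_blk_right Q hh hf, dpow_zero, sh_one_left Q (pre_blk_one h _) hf.shift,
    sh_one_left Q (pre_blk_one h _) (hf.twist _)]
  simp [pre_blk_nil]

lemma sh_DD_left_one : sh Q (dpow h 1 [1]) (pre (blk h) (pre (blk h) eps)) f = 0 := by
  rw [dpow_succ, sh_blk_left Q hh hf, dpow_zero, dchi_mul_DD, sh_smul_left,
    sh_one_right Q (pre_blk_one h _) hf.shift, sh_one_right Q (pre_blk_one h _) hf]
  simp [pre_blk_nil]

lemma sh_DD_right (s : ℕ) : sh Q (dpow h (s + 1 + 1) [1]) f (pre (blk h) (pre (blk h) eps))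
    = rrr Q h s * f (dpow h s [1]) := by
  induction s generalizing f with
  | zero =>
    rw [dpow_succ, sh_blk_right Q hh hf, sh_D_right Q hh (hf.twist _), pre_one_dpow,
      sh_DD_right_one Q hh hf.shift, rrr]
    simp
    ring
  | succ s ih =>
    rw [dpow_succ, sh_blk_right Q hh hf, ih hf.shift, sh_D_right Q hh (hf.twist _), pre_one_dpow,
      dchi_dpow, rrr, dpow_succ]
    simp
    ring

lemma sh_DD_left (s : ℕ) : sh Q (dpow h (s + 1 + 1) [1]) (pre (blk h) (pre (blk h) eps)) f
    = lll Q h s * f (dpow h s [1]) := by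
  induction s generalizing f with
  | zero =>
    rw [dpow_succ, sh_blk_left Q hh hf, dchi_mul_DD, sh_smul_left, sh_D_left Q hh hf,
      pre_one_dpow, sh_DD_left_one Q hh hf.shift, lll]
    simp
  | succ s ih =>
    rw [dpow_succ, sh_blk_left Q hh hf, dchi_mul_DD, sh_smul_left, sh_D_left Q hh hf,
      pre_one_dpow, ih hf.shift, lll, dpow_succ]
    simp
    ring

lemma sh_DD_right_append (s : ℕ) {x : List (Fin 2)} (hx : x ≠ []) :
    sh Q (dpow h s (1 :: x)) f (pre (blk h) (pre (blk h) eps))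
      = f (dpow h s [1]) * pre (blk h) (pre (blk h) eps) x
        + pre (blk h) eps x * sh Q (dpow h s [1]) f (pre (blk h) eps) := by
  induction s generalizing f with
  | zero =>
    rw [dpow_zero, sh_one_left Q (pre_blk_one h _) hf, dpow_zero,
      sh_one_left Q (pre_blk_one h _) hf]
    simp [pre_blk_nil]
  | succ s ih =>
    rw [dpow_succ, sh_blk_right Q hh hf, ih hf.shift, sh_D_right_append Q hh (hf.twist _) _ hx,
      pre_one_dpow, dpow_succ, sh_blk_right Q hh hf, sh_eps_right, pre_one_dpow]
    split_ifs <;> simp <;> ring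

lemma sh_DD_left_append (s : ℕ) {x : List (Fin 2)} (hx : x ≠ []) :
    sh Q (dpow h s (1 :: x)) (pre (blk h) (pre (blk h) eps)) f
      = cc Q h s ^ 2 * f (dpow h s [1]) * pre (blk h) (pre (blk h) eps) x
        + pre (blk h) eps x * (if s = 0 then 0 else
          cc Q h (s - 1) * ll Q h (s - 1) * f (dpow h (s - 1) [1])) := by
  induction s generalizing f with
  | zero =>
    rw [dpow_zero, sh_one_right Q (pre_blk_one h _) hf, ← pre_append, mul_assoc,
      chi_mul_pre_eps_apply]
    simp [cc]
    ring
  | succ s ih =>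
    rw [dpow_succ, sh_blk_left Q hh hf, dchi_mul_DD, sh_smul_left, ih hf.shift,
      sh_D_left_append Q hh hf _ hx, pre_one_dpow, dpow_succ]
    cases s with
    | zero =>
      have := chi_mul_pre_eps_apply Q 1 (blk h) x
      simp [cc, ll]
      linear_combination geo Q h * f [1] * Q 1 1 * this
    | succ s =>
      simp [cc, ll, dpow_succ]
      ring

end
end QShuffle

namespace QShuffle

variable {k : Type*} [Field k]

variable (Q : Fin 2 → Fin 2 → k) (h : ℕ)

/-- The functions vanishing on all words `D ^ s 1 x` other than `D ^ n 1`. -/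
def Cl (n : ℕ) (f : List (Fin 2) → k) : Prop :=
  ∀ s x, f (dpow h s (1 :: x)) ≠ 0 → s = n ∧ x = []

/-- The scalar by which the braided commutator with `D` acts. -/
def c₁ (n : ℕ) : k := ll Q h n - cc Q h n * rr Q h n

/-- The scalar by which the second order braided commutator with `DD` acts. -/
def c₂ (n : ℕ) : k :=
  lll Q h n - cc Q h n ^ 2 * rrr Q h n - cc Q h n * (c₁ Q h n * rr Q h (n + 1))

variable {h}

lemma Cl.HC {n : ℕ} {f : List (Fin 2) → k} (hf : Cl h n f) : HC h f := by
  intro s x hx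
  by_contra hne
  exact hx (hf s x hne).2

lemma Cl.eq_zero {n s : ℕ} {f : List (Fin 2) → k} (hf : Cl h n f) (hs : s ≠ n)
    (x : List (Fin 2)) : f (dpow h s (1 :: x)) = 0 := by
  by_contra hne
  exact hs (hf s x hne).1

/-- The braided commutator of `D` with `f`. -/
def T₁ (h n : ℕ) (f : List (Fin 2) → k) : List (Fin 2) → k :=
  star Q (pre (blk h) eps) f - cc Q h n • star Q f (pre (blk h) eps)

/-- The second order braided commutator of `DD` with `f`. -/
def T₂ (h n : ℕ) (f : List (Fin 2) → k) : List (Fin 2) → k :=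
  star Q (pre (blk h) (pre (blk h) eps)) f
    - cc Q h n ^ 2 • star Q f (pre (blk h) (pre (blk h) eps))
    - cc Q h n • star Q (T₁ Q h n f) (pre (blk h) eps)

section
variable (hh : h = 1 ∨ h = 2) {n : ℕ} {f : List (Fin 2) → k} (hf : Cl h n f)
include hf in
lemma T₁_one : T₁ Q h n f [1] = 0 := by
  simp only [T₁, star, Pi.sub_apply, Pi.smul_apply, smul_eq_mul]
  rw [sh_one_left Q (pre_blk_one h _) hf.HC, sh_one_right Q (pre_blk_one h _) hf.HC]
  simp [pre_blk_nil]

include hh hf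

lemma T₁_apply (s : ℕ) : T₁ Q h n f (dpow h (s + 1) [1])
    = if s = n then c₁ Q h n * f (dpow h n [1]) else 0 := by
  simp only [T₁, star, Pi.sub_apply, Pi.smul_apply, smul_eq_mul]
  rw [sh_D_left Q hh hf.HC, sh_D_right Q hh hf.HC]
  split_ifs with hs
  · subst hs; rw [c₁]; ring
  · rw [hf.eq_zero hs]; ring

lemma T₁_Cl : Cl h (n + 1) (T₁ Q h n f) := by
  intro s x hne
  by_cases hx : x = []
  · subst hx
    refine ⟨?_, rfl⟩
    cases s with
    | zero => exact absurd (T₁_one Q hf) hne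
    | succ s =>
      rw [T₁_apply Q hh hf] at hne
      split_ifs at hne with hs
      · rw [hs]
      · exact absurd rfl hne
  · refine absurd ?_ hne
    simp only [T₁, star, Pi.sub_apply, Pi.smul_apply, smul_eq_mul]
    rw [sh_D_left_append Q hh hf.HC s hx, sh_D_right_append Q hh hf.HC s hx]
    by_cases hs : s = n
    · subst hs; ring
    · rw [hf.eq_zero hs]; ring

lemma T₂_apply (s : ℕ) : T₂ Q h n f (dpow h (s + 1 + 1) [1])
    = if s = n then c₂ Q h n * f (dpow h n [1]) else 0 := by
  simp only [T₂, star, Pi.sub_apply, Pi.smul_apply, smul_eq_mul]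
  rw [sh_DD_left Q hh hf.HC, sh_DD_right Q hh hf.HC, sh_D_right Q hh (T₁_Cl Q hh hf).HC,
    T₁_apply Q hh hf]
  split_ifs with hs
  · subst hs; rw [c₂]; ring
  · rw [hf.eq_zero hs]; ring

lemma T₂_Cl : Cl h (n + 1 + 1) (T₂ Q h n f) := by
  intro s x hne
  by_cases hx : x = []
  · subst hx
    refine ⟨?_, rfl⟩
    match s with
    | 0 =>
      refine absurd ?_ hne
      simp only [T₂, star, Pi.sub_apply, Pi.smul_apply, smul_eq_mul, dpow_zero]
      rw [sh_one_left Q (pre_blk_one h _) hf.HC, sh_one_right Q (pre_blk_one h _) hf.HC,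
        sh_one_left Q (pre_blk_one h _) (T₁_Cl Q hh hf).HC]
      simp [pre_blk_nil]
    | 1 =>
      refine absurd ?_ hne
      simp only [T₂, star, Pi.sub_apply, Pi.smul_apply, smul_eq_mul]
      rw [sh_DD_left_one Q hh hf.HC, sh_DD_right_one Q hh hf.HC,
        sh_D_right Q hh (T₁_Cl Q hh hf).HC, dpow_zero, T₁_one Q hf]
      simp
    | s + 2 =>
      rw [T₂_apply Q hh hf] at hne
      split_ifs at hne with hs
      · rw [hs]
      · exact absurd rfl hne
  · refine absurd ?_ hne
    simp only [T₂, star, Pi.sub_apply, Pi.smul_apply, smul_eq_mul]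
    rw [sh_DD_left_append Q hh hf.HC s hx, sh_DD_right_append Q hh hf.HC s hx,
      sh_D_right_append Q hh (T₁_Cl Q hh hf).HC s hx]
    cases s with
    | zero =>
      rw [dpow_zero, T₁_one Q hf, sh_one_left Q (pre_blk_one h _) hf.HC]
      by_cases hs : 0 = n
      · subst hs; simp [pre_blk_nil, mul_assoc]
      · have := hf.eq_zero hs []
        rw [dpow_zero] at this
        rw [this]; simp
    | succ s =>
      rw [T₁_apply Q hh hf, sh_D_right Q hh hf.HC]
      have key : (cc Q h (s + 1) ^ 2 - cc Q h n ^ 2) * f (dpow h (s + 1) [1]) = 0 := by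
        by_cases hs : s + 1 = n
        · subst hs; ring
        · rw [hf.eq_zero hs]; ring
      by_cases hs : s = n
      · subst hs
        simp [c₁]
        linear_combination pre (blk h) (pre (blk h) eps) x * key
      · simp [hs]
        rw [hf.eq_zero hs]
        linear_combination pre (blk h) (pre (blk h) eps) x * key

end

/-- Multiplication by a class function on the left detects the leading blocks. -/
lemma sh_Cl_left (hh : h = 1 ∨ h = 2) {t n : ℕ} (ht : t ≤ n) {e g : List (Fin 2) → k}
    (he : Cl h n e) (hg : ∀ r ≤ t, ∀ x, g (dpow h r (1 :: x)) = 0) (x : List (Fin 2)) :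
    sh Q (dpow h t (1 :: x)) e g = if t = n then e (dpow h n [1]) * g x else 0 := by
  induction t generalizing n e g with
  | zero =>
    rw [dpow_zero, sh_one_left Q (fun x => hg 0 le_rfl x) he.HC]
    by_cases hn : 0 = n
    · subst hn; simp
    · rw [if_neg hn, ← dpow_zero h [1], he.eq_zero hn]; simp
  | succ t ih =>
    have he1 (x) : e (1 :: x) = 0 := he.eq_zero (s := 0) (by omega) x
    have hg1 (x) : g (1 :: x) = 0 := hg 0 (Nat.zero_le _) x
    have split (w) : sh Q (blk h ++ w) e g = sh Q w (fun x => e (blk h ++ x)) g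
        + sh Q w (fun x => dchi Q h x * e x) (fun x => g (blk h ++ x)) := by
      rcases hh with rfl | rfl
      · simp [blk, sh, he1, hg1, dchi, mul_left_comm, mul_assoc]
      · simp [blk, sh, he1, hg1, dchi, mul_left_comm, mul_assoc, pow_two]
    obtain ⟨n, rfl⟩ : ∃ m, n = m + 1 := Nat.exists_eq_succ_of_ne_zero (by omega)
    have h1 : Cl h n fun x => e (blk h ++ x) := fun s x hne => by
      have := he (s + 1) x hne
      exact ⟨by omega, this.2⟩
    have h2 : Cl h (n + 1) fun x => dchi Q h x * e x := fun s x hne =>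
      he s x (right_ne_zero_of_mul hne)
    rw [dpow_succ, split, ih (by omega) h1 (fun r hr => hg r (by omega)),
      ih (by omega) h2 (fun r hr => hg (r + 1) (by omega)), if_neg (by omega : ¬ t = n + 1)]
    simp [dpow_succ]

/-- A space of functions closed under the quantum shuffle product. -/
structure ShClosed (A : Submodule k (List (Fin 2) → k)) : Prop where
  eps_mem : eps ∈ A
  star_mem : ∀ {f g}, f ∈ A → g ∈ A → star Q f g ∈ A

variable {Q}

lemma ShClosed.T₁_mem {A : Submodule k (List (Fin 2) → k)} (hA : ShClosed Q A)
    (hD : pre (blk h) eps ∈ A) {f : List (Fin 2) → k} (hf : f ∈ A) (n : ℕ) : T₁ Q h n f ∈ A :=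
  A.sub_mem (hA.star_mem hD hf) (A.smul_mem _ (hA.star_mem hf hD))

lemma ShClosed.T₂_mem {A : Submodule k (List (Fin 2) → k)} (hA : ShClosed Q A)
    (hD : pre (blk h) eps ∈ A) (hDD : pre (blk h) (pre (blk h) eps) ∈ A)
    {f : List (Fin 2) → k} (hf : f ∈ A) (n : ℕ) : T₂ Q h n f ∈ A :=
  A.sub_mem (A.sub_mem (hA.star_mem hDD hf) (A.smul_mem _ (hA.star_mem hf hDD)))
    (A.smul_mem _ (hA.star_mem (hA.T₁_mem hD hf n) hD))

/-- Starting from the letter `1`, the commutators with `D` and `DD` give nonzero class functions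
for infinitely many classes. -/
lemma exists_chain (hh : h = 1 ∨ h = 2) {A : Submodule k (List (Fin 2) → k)} (hA : ShClosed Q A)
    (h1 : dl [1] ∈ A) (hD : pre (blk h) eps ∈ A)
    (hc : ∀ n, c₁ Q h n ≠ 0 ∨ (pre (blk h) (pre (blk h) eps) ∈ A ∧ c₂ Q h n ≠ 0)) :
    ∃ (t : ℕ → ℕ) (e : ℕ → List (Fin 2) → k), (∀ i, t i < t (i + 1)) ∧ (∀ i, t i ≤ 2 * i) ∧
      ∀ i, e i ∈ A ∧ Cl h (t i) (e i) ∧ e i (dpow h (t i) [1]) ≠ 0 := by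
  let Good (p : ℕ × (List (Fin 2) → k)) : Prop :=
    p.2 ∈ A ∧ Cl h p.1 p.2 ∧ p.2 (dpow h p.1 [1]) ≠ 0
  have step (p : {p // Good p}) : ∃ p' : {p // Good p}, p.1.1 < p'.1.1 ∧ p'.1.1 ≤ p.1.1 + 2 := by
    obtain ⟨⟨n, f⟩, hfA, hf, hf0⟩ := p
    by_cases h0 : c₁ Q h n = 0
    · obtain ⟨hDD, h2⟩ := (hc n).resolve_left (by simpa using h0)
      refine ⟨⟨⟨n + 1 + 1, T₂ Q h n f⟩, hA.T₂_mem hD hDD hfA n, T₂_Cl Q hh hf, ?_⟩, ?_, ?_⟩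
      · simp only [T₂_apply Q hh hf]
        simpa using ⟨h2, hf0⟩
      · simp only; omega
      · simp only; omega
    · refine ⟨⟨⟨n + 1, T₁ Q h n f⟩, hA.T₁_mem hD hfA n, T₁_Cl Q hh hf, ?_⟩, ?_, ?_⟩
      · simp only [T₁_apply Q hh hf]
        simpa using ⟨h0, hf0⟩
      · simp
      · simp
  choose next hnext using step
  have g0 : Good (0, dl [1]) := by
    refine ⟨h1, ?_, ?_⟩
    · intro s x hne
      simp only [dl_apply] at hne
      cases s with
      | zero => simpa using hne
      | succ s => simp [dpow_succ, blk] at hne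
    · simp [dl_apply]
  let p : ℕ → {p // Good p} := fun i => Nat.rec ⟨_, g0⟩ (fun _ p => next p) i
  refine ⟨fun i => (p i).1.1, fun i => (p i).1.2, fun i => (hnext (p i)).1, fun i => ?_,
    fun i => (p i).2⟩
  induction i with
  | zero => simp [p]
  | succ i ih =>
    have := (hnext (p i)).2
    change (p i).1.1 ≤ 2 * i at ih
    change (next (p i)).1.1 ≤ _
    omega

lemma length_dpow (s : ℕ) (x : List (Fin 2)) :
    (dpow h s x).length = s * (h + 1) + x.length := by
  induction s with
  | zero => simp
  | succ s ih => simp [dpow_succ, blk, ih]; ring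

/-- Exponentially many words separated by a space closed under the quantum shuffle product. -/
theorem exists_separated (hh : h = 1 ∨ h = 2) {A : Submodule k (List (Fin 2) → k)}
    (hA : ShClosed Q A) (h1 : dl [1] ∈ A) (hD : pre (blk h) eps ∈ A)
    (hc : ∀ n, c₁ Q h n ≠ 0 ∨ (pre (blk h) (pre (blk h) eps) ∈ A ∧ c₂ Q h n ≠ 0)) (n : ℕ) :
    ∃ (ι : Type) (_ : Fintype ι) (W : ι → List (Fin 2)) (E : ι → List (Fin 2) → k),
      Fintype.card ι = 2 ^ n ∧ (∀ i, (W i).length ≤ n * (6 * n + 1)) ∧ (∀ i, E i ∈ A) ∧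
      ∀ a : ι → k, (∀ i, ∑ j, a j * E i (W j) = 0) → a = 0 := by
  obtain ⟨t, e, ht, ht2, he⟩ := exists_chain hh hA h1 hD hc
  suffices H : ∀ m j, j + m ≤ n →
      ∃ (ι : Type) (_ : Fintype ι) (W : ι → List (Fin 2)) (E : ι → List (Fin 2) → k),
      Fintype.card ι = 2 ^ m ∧ (∀ i, (W i).length ≤ m * (6 * n + 1)) ∧ (∀ i, E i ∈ A) ∧
      (∀ a : ι → k, (∀ i, ∑ j, a j * E i (W j) = 0) → a = 0) ∧
      ∀ i, ∀ r < t j, ∀ x, E i (dpow h r (1 :: x)) = 0 by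
    obtain ⟨ι, hι, W, E, h1, h2, h3, h4, -⟩ := H n 0 (by omega)
    exact ⟨ι, hι, W, E, h1, h2, h3, h4⟩
  intro m
  induction m with
  | zero =>
    intro j _
    refine ⟨Unit, inferInstance, fun _ => [], fun _ => eps, by simp, by simp,
      fun _ => hA.eps_mem, fun a ha => ?_, fun _ r _ x => ?_⟩
    · funext u; simpa using ha u
    · cases r <;> simp [dpow_succ, blk]
  | succ m ih =>
    intro j hj
    obtain ⟨ι, hι, W, E, i1, i2, i3, i4, i5⟩ := ih (j + 1) (by omega)
    have hE (i) (r) (hr : r ≤ t j) (x) : E i (dpow h r (1 :: x)) = 0 :=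
      i5 i r (hr.trans_lt (ht j)) x
    obtain ⟨e1, e2, e3⟩ := he j
    refine ⟨ι ⊕ ι, inferInstance, Sum.elim (fun i => dpow h (t j) (1 :: W i)) W,
      Sum.elim (fun i => star Q (e j) (E i)) E, ?_, ?_, ?_, ?_, ?_⟩
    · rw [Fintype.card_sum, i1]; ring
    · rintro (i | i)
      · have := i2 i
        have h3 := ht2 j
        simp only [Sum.elim_inl, length_dpow, List.length_cons]
        have : t j * (h + 1) ≤ (2 * n) * 3 := Nat.mul_le_mul (by omega) (by omega)
        nlinarith
      · have := i2 i
        simp only [Sum.elim_inr]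
        nlinarith
    · rintro (i | i)
      · exact hA.star_mem e1 (i3 i)
      · exact i3 i
    · intro a ha
      have hr : (fun i => a (Sum.inr i)) = 0 := i4 _ fun i => by
        have := ha (Sum.inr i)
        simpa [Fintype.sum_sum_type, hE i (t j) le_rfl] using this
      have hl : (fun i => a (Sum.inl i)) = 0 := i4 _ fun i => by
        have := ha (Sum.inl i)
        simp only [Fintype.sum_sum_type, Sum.elim_inl, Sum.elim_inr, congrFun hr, Pi.zero_apply,
          zero_mul, Finset.sum_const_zero, add_zero, star] at this
        simp only [sh_Cl_left Q hh le_rfl e2 (hE i), if_true] at this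
        have h2 : e j (dpow h (t j) [1]) * ∑ l, a (Sum.inl l) * E i (W l) = 0 := by
          rw [← this, Finset.mul_sum]
          exact Finset.sum_congr rfl fun l _ => by ring
        exact (mul_eq_zero.1 h2).resolve_left e3
      funext i
      rcases i with i | i
      · exact congrFun hl i
      · exact congrFun hr i
    · rintro (i | i) r hr x
      · simp only [Sum.elim_inl, star]
        rw [sh_Cl_left Q hh hr.le e2 (fun r' hr' => hE i r' (hr'.trans hr.le)), if_neg hr.ne]
      · exact hE i r hr.le x

end QShuffle

namespace QShuffle

variable {k : Type*} [Field k]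

variable (Q : Fin 2 → Fin 2 → k) (h : ℕ)

/-- The geometric sum `1 + P + ⋯ + P ^ n`. -/
def gsum (P : k) (n : ℕ) : k := ∑ i ∈ Finset.range (n + 1), P ^ i

lemma gsum_zero (P : k) : gsum P 0 = 1 := by simp [gsum]

lemma gsum_succ (P : k) (n : ℕ) : gsum P (n + 1) = P * gsum P n + 1 := geom_sum_succ

lemma gsum_succ' (P : k) (n : ℕ) : gsum P (n + 1) = P ^ (n + 1) + gsum P n := geom_sum_succ'

lemma ll_eq (n : ℕ) : ll Q h n = gsum (cP Q h) n + cP Q h ^ n * cS Q h := by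
  induction n with
  | zero => simp [ll, gsum_zero]
  | succ n ih => rw [ll, ih, gsum_succ]; ring

lemma rr_eq (n : ℕ) : rr Q h n = cF Q h * gsum (cP Q h) n + cR Q h := by
  induction n with
  | zero => simp [rr, gsum_zero]
  | succ n ih => rw [rr, ih, gsum_succ']; ring

lemma lll_eq (n : ℕ) : (1 + cP Q h) * lll Q h n = gsum (cP Q h) n * gsum (cP Q h) (n + 1)
    + (1 + cP Q h) * cS Q h * cP Q h ^ n * gsum (cP Q h) n := by
  induction n with
  | zero => simp [lll, ll, gsum_succ, gsum_zero]; ring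
  | succ n ih =>
    rw [lll, ll_eq]
    have e1 := gsum_succ (cP Q h) n
    have e2 := gsum_succ (cP Q h) (n + 1)
    rw [e2, e1]
    rw [e1] at ih
    linear_combination cP Q h ^ 2 * ih

lemma rrr_eq (n : ℕ) : (1 + cP Q h) * rrr Q h n =
    cF Q h ^ 2 * gsum (cP Q h) n * gsum (cP Q h) (n + 1)
    + (1 + cP Q h) * cF Q h * cR Q h * gsum (cP Q h) n := by
  induction n with
  | zero => simp [rrr, rr, gsum_succ, gsum_zero]; ring
  | succ n ih =>
    rw [rrr, rr_eq]
    have e1 := gsum_succ' (cP Q h) n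
    have e2 := gsum_succ' (cP Q h) (n + 1)
    rw [e2, e1]
    rw [e1] at ih
    linear_combination ih

lemma rrr_eq_lll (n : ℕ) : rrr Q h n = cF Q h ^ 2 *
    (lll Q h n - cS Q h * cP Q h ^ n * gsum (cP Q h) n)
    + cF Q h * cR Q h * gsum (cP Q h) n := by
  induction n with
  | zero => simp [rrr, lll, ll, rr, gsum_zero]; ring
  | succ n ih =>
    rw [rrr, lll, rr_eq, ll_eq, ih]
    have h1 := lll_eq Q h n
    have e1 := gsum_succ' (cP Q h) n
    have e2 := gsum_succ (cP Q h) n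
    have e3 : cP Q h ^ (n + 1) = cP Q h * gsum (cP Q h) n + 1 - gsum (cP Q h) n := by
      linear_combination e2 - e1
    have e4 : cP Q h ^ n * cP Q h = cP Q h * gsum (cP Q h) n + 1 - gsum (cP Q h) n := by
      rw [← e3]; ring
    rw [e2] at h1 ⊢
    rw [pow_succ (cP Q h) n]
    linear_combination cF Q h ^ 2 * (1 - cP Q h) * h1
      + (cF Q h ^ 2 * (cP Q h * gsum (cP Q h) n + 1) + cF Q h * cR Q h) * e4

lemma c₁_eq (n : ℕ) : c₁ Q h n = gsum (cP Q h) n + cP Q h ^ n * cS Q h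
    - cP Q h ^ n * cG Q h * (cF Q h * gsum (cP Q h) n + cR Q h) := by
  rw [c₁, ll_eq, rr_eq, cc]

/-- In affine rank two type the first order commutators never vanish. -/
lemma c₁_ne_zero_of_affine (h1 : Q 0 0 * (Q 0 1 * Q 1 0) * Q 1 1 = 1)
    (h2 : Q 0 1 * Q 1 0 * Q 1 1 ^ 2 = 1) (h3 : Q 1 1 ^ 2 ≠ 1) (n : ℕ) : c₁ Q 1 n ≠ 0 := by
  have hP : cP Q 1 = 1 := by
    simp [cP, dchi, blk]; linear_combination h1
  rw [c₁_eq, hP]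
  have hF : cF Q 1 = Q 0 1 * Q 1 1 := by simp [dchi]
  have hG : cG Q 1 = Q 1 0 * Q 1 1 := by simp [cG, blk]
  have hg : geo Q 1 = 1 := by simp [geo]
  rw [hF, hG, cR, cS, hg, one_pow]
  intro h0
  apply h3
  linear_combination Q 1 1 * h0 + (Q 1 1 * gsum 1 n + 1) * h2

lemma c₂_eq {P F γ ρ : k} (hP : cP Q h = P) (hF : cF Q h = F) (hγ : cG Q h * F = γ)
    (hρ : cR Q h = F * ρ) (n : ℕ) :
    (1 + P) * c₂ Q h n = c₁ Q h n * c₁ Q h (n + 1)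
      - (P ^ n) ^ 2 * (cS Q h - γ * ρ) * (γ * (1 + ρ) + P * (1 + cS Q h)) := by
  have h1 := lll_eq Q h n
  have h2 := rrr_eq Q h n
  have e1 := gsum_succ' P n
  have e2 := gsum_succ P n
  rw [c₂, c₁_eq, c₁_eq, rr_eq, cc]
  rw [hP] at h1
  rw [hP, hF, hρ] at h2
  rw [hP, hF, hρ]
  have e3 : P ^ (n + 1) = P * gsum P n + 1 - gsum P n := by
      linear_combination e2 - e1
  have e4 : P ^ n * P = P * gsum P n + 1 - gsum P n := by
      rw [← e3]; ring
  subst hγ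
  rw [e2] at h1 h2 ⊢
  rw [pow_succ P n]
  linear_combination h1 - (P ^ n * cG Q h) ^ 2 * h2
    + P ^ n * (cS Q h - cG Q h * F * ρ) * e4

/-- Cartan type `B₂`, with `D = 01`. -/
lemma c₂_ne_zero_one {q : k} (h0 : Q 0 0 = q ^ 2) (h1 : Q 1 1 = q)
    (h2 : Q 0 1 * Q 1 0 * q ^ 2 = 1) (hq1 : q + 1 ≠ 0) (hq4 : q ^ 4 ≠ 1) (n : ℕ)
    (hc : c₁ Q 1 n = 0) : c₂ Q 1 n ≠ 0 := by
  have hq : q ≠ 0 := by rintro rfl; simp at h2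
  have hP : cP Q 1 = q := by
    simp [cP, dchi, blk, h0, h1]; linear_combination q * h2
  have hF : cF Q 1 = Q 0 1 * q := by simp [dchi, h1]
  have hG : cG Q 1 = Q 1 0 * q := by simp [cG, blk, h1]
  have hg : geo Q 1 = 1 := by simp [geo]
  have key := c₂_eq Q 1 hP hF (γ := 1) (ρ := q⁻¹) (by rw [hG]; linear_combination h2)
    (by rw [cR, hg]; field_simp) n
  intro h
  rw [h, hc, cS, hg, h1] at key
  have hx : q ^ n ≠ 0 := pow_ne_zero _ hq
  have : (q ^ n) ^ 2 * ((q ^ 4 - 1) * (q + 1)) = 0 := by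
    field_simp at key
    linear_combination key
  simp [hq, sub_eq_zero, hq4, hq1] at this

/-- Cartan type `B₂`, with `D = 011`. -/
lemma c₂_ne_zero_two [CharZero k] {q : k} (h0 : Q 0 0 = q ^ 2) (h1 : Q 1 1 = q)
    (h2 : Q 0 1 * Q 1 0 * q ^ 2 = 1) (hq1 : q ^ 2 ≠ 1) (hq3 : q ^ 3 ≠ 1) (n : ℕ)
    (hc : c₁ Q 2 n = 0) : c₂ Q 2 n ≠ 0 := by
  have hq : q ≠ 0 := by rintro rfl; simp at h2
  have hP : cP Q 2 = q ^ 2 := by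
    simp [cP, dchi, blk, h0, h1, List.replicate]
    linear_combination (q ^ 4 * (Q 0 1 * Q 1 0) + q ^ 2) * h2
  have hF : cF Q 2 = Q 0 1 * q ^ 2 := by simp [dchi, h1]
  have hG : cG Q 2 = Q 1 0 * q ^ 2 := by simp [cG, blk, h1, pow_two]
  have hg : geo Q 2 = 1 + q := by simp [geo, Finset.sum_range_succ, h1]
  have hγ : cG Q 2 * cF Q 2 = q ^ 2 := by rw [hG, hF]; linear_combination q ^ 2 * h2
  have hx : q ^ n ≠ 0 := pow_ne_zero _ hq
  by_cases hP1 : 1 + q ^ 2 = 0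
  · intro h
    have e := rrr_eq_lll Q 2 n
    have hxx : ((q ^ 2) ^ n) ^ 2 = 1 := by
      rw [← pow_mul, mul_comm, pow_mul, show (q ^ 2) ^ 2 = 1 by
        linear_combination (q ^ 2 - 1) * hP1, one_pow]
    have hs : q ^ 2 * gsum (q ^ 2) n + 1 = (q ^ 2) ^ (n + 1) + gsum (q ^ 2) n := by
      rw [← gsum_succ, gsum_succ']
    rw [c₂, hc, cc, hP] at h
    rw [c₁_eq, hP] at hc
    rw [hP] at e
    rw [cS, cR, hg, h1] at hc e
    rw [hF, hG] at hc
    rw [hF] at e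
    rw [hG] at h
    rw [pow_succ (q ^ 2) n] at hs
    have hq2 : q ^ 2 = -1 := by linear_combination hP1
    generalize gsum (q ^ 2) n = g at *
    generalize (q ^ 2) ^ n = x at *
    generalize lll Q 2 n = l at *
    generalize rrr Q 2 n = r at *
    have hg2 : 2 * g = 1 + x := by
      rw [hq2] at hs; linear_combination -hs
    have hc' : (x - 1) ^ 2 = 0 := by
      have : g + x * g - 2 * x = 0 := by
        linear_combination hc + (x * g * q ^ 2 + x * (1 + q)) * h2 + x * (g - 1) * hP1
      linear_combination 2 * this - (1 + x) * hg2
    have hx1 : x = 1 := by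
      have := pow_eq_zero_iff (two_ne_zero) |>.1 hc'
      linear_combination this
    have hg1 : g = 1 := by
      have : 2 * (g - 1) = 0 := by linear_combination hg2 + hx1
      simpa [sub_eq_zero] using this
    subst hx1 hg1
    have e1 : (Q 1 0 * q ^ 2) ^ 2 * (Q 0 1 * q ^ 2) ^ 2 = q ^ 4 := by
      linear_combination (q ^ 4 * (Q 0 1 * Q 1 0 * q ^ 2 + 1)) * h2
    have e2 : (Q 1 0 * q ^ 2) ^ 2 * (Q 0 1 * q ^ 2 * (Q 0 1 * (1 + q))) = q ^ 2 * (1 + q) := by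
      linear_combination (q ^ 2 * (1 + q) * (Q 0 1 * Q 1 0 * q ^ 2 + 1)) * h2
    have : 2 * q = 0 := by
      linear_combination h + (Q 1 0 * q ^ 2) ^ 2 * e + (l - q * (1 + q)) * e1 + e2
        + (l * (q ^ 2 - 1) + (1 + q) - (1 + q) * q * (q ^ 2 - 1) - 1) * hP1
    simp [hq] at this
  · have key := c₂_eq Q 2 hP hF (γ := q ^ 2) (ρ := (1 + q) * (q⁻¹) ^ 2) (by rw [← hF, hγ])
      (by rw [cR, hg]; field_simp) n
    intro h
    rw [h, hc, cS, hg, h1] at key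
    have : ((q ^ 2) ^ n) ^ 2 * ((q ^ 2 - 1) * (q ^ 3 - 1) * (1 + q ^ 2)) = 0 := by
      field_simp at key
      linear_combination (q - 1) * key
    simp [hq, sub_eq_zero, hP1, hq1, hq3] at this

end QShuffle

namespace Stmt17

/-- Exponentially many linearly independent elements in a quadratically growing power of a
finite-dimensional subspace force infinite Gelfand–Kirillov dimension. -/
theorem GKdim_eq_top {k A : Type*} [Field k] [Ring A] [Algebra k A] (S : Finset A)
    (H : ∀ n : ℕ, ∃ (ι : Type) (_ : Fintype ι) (v : ι → A), Fintype.card ι = 2 ^ n ∧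
      LinearIndependent k v ∧
      ∀ i, v i ∈ (Submodule.span k (insert (1 : A) (S : Set A)) ^ (n * (6 * n + 1)) :
        Submodule k A)) :
    GKdim k A = ⊤ := by
  set V := Submodule.span k (insert (1 : A) (S : Set A)) with hV
  have hVfg : V.FG := Submodule.fg_span ((S.finite_toSet).insert 1)
  have h1V : (1 : Submodule k A) ≤ V := by
    rw [Submodule.one_le]
    exact Submodule.subset_span (Set.mem_insert _ _)
  have hrank (n : ℕ) (m : ℕ) (hm : n * (6 * n + 1) ≤ m) :
      2 ^ n ≤ Module.finrank k (V ^ m : Submodule k A) := by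
    obtain ⟨ι, _, v, hcard, hli, hv⟩ := H n
    have hv' (i) : v i ∈ V ^ m := pow_le_pow_right' h1V hm (hv i)
    have : Module.Finite k (V ^ m : Submodule k A) :=
      Module.Finite.iff_fg.2 (hVfg.pow m)
    have hli' : LinearIndependent k (fun i => (⟨v i, hv' i⟩ : (V ^ m : Submodule k A))) :=
      LinearIndependent.of_comp (V ^ m).subtype hli
    rw [← hcard]
    exact hli'.fintype_card_le_finrank
  have hlarge (j : ℕ) (hj : 2 ≤ j) : (j : ℝ) / 22 ≤ Real.logb ((7 * j ^ 4 : ℕ) : ℝ)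
      (Module.finrank k (V ^ (7 * j ^ 4) : Submodule k A)) := by
    have hr := hrank (j ^ 2) (7 * j ^ 4) (by
      have : 1 ≤ j ^ 2 := Nat.one_le_pow _ _ (by omega)
      nlinarith)
    have hj' : (2 : ℝ) ≤ j := by exact_mod_cast hj
    have hbase : (1 : ℝ) < ((7 * j ^ 4 : ℕ) : ℝ) := by
      push_cast
      have : (1 : ℝ) ≤ (j : ℝ) ^ 4 := one_le_pow₀ (by linarith)
      linarith
    have hlog : Real.log ((7 * j ^ 4 : ℕ) : ℝ) ≤ 11 * j := by
      push_cast
      rw [Real.log_mul (by norm_num) (by positivity), Real.log_pow]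
      have h7 := Real.log_le_sub_one_of_pos (show (0 : ℝ) < 7 by norm_num)
      have hjl := Real.log_le_sub_one_of_pos (show (0 : ℝ) < j by linarith)
      push_cast
      nlinarith
    have hlogpos : 0 < Real.log ((7 * j ^ 4 : ℕ) : ℝ) := Real.log_pos hbase
    rw [Real.logb, le_div_iff₀ hlogpos]
    have h2 : ((2 : ℝ) ^ (j ^ 2)) ≤ Module.finrank k (V ^ (7 * j ^ 4) : Submodule k A) := by
      exact_mod_cast hr
    have h3 := Real.log_le_log (by positivity) h2
    rw [Real.log_pow] at h3
    have h4 := Real.log_two_gt_d9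
    push_cast at h3
    have h5 : (j : ℝ) / 22 * Real.log ((7 * j ^ 4 : ℕ) : ℝ) ≤ j / 22 * (11 * j) :=
      mul_le_mul_of_nonneg_left hlog (by positivity)
    nlinarith
  rw [eq_top_iff, ← ENNReal.iSup_natCast, iSup_le_iff]
  intro C
  refine le_trans ?_ (le_iSup _ S)
  refine Filter.le_limsup_of_frequently_le ?_
  rw [Filter.frequently_atTop]
  intro a
  set j := max (max a 2) (22 * C)
  have hj2 : 2 ≤ j := by simp [j]
  have hja : a ≤ j := by simp [j]
  have hjC : 22 * C ≤ j := le_max_right _ _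
  refine ⟨7 * j ^ 4, ?_, ?_⟩
  · have : j ≤ j ^ 4 := Nat.le_self_pow (by omega) j
    change a ≤ _
    omega
  · have h22 : (22 * C : ℝ) ≤ j := by exact_mod_cast hjC
    rw [← ENNReal.ofReal_natCast]
    exact ENNReal.ofReal_le_ofReal (le_trans (by linarith) (hlarge j hj2))

end Stmt17

namespace QShuffle

variable {k : Type*} [Field k]

/-- The noncommutative monomial of a word. -/
def wd (w : List (Fin 2)) : FreeAlgebra k (Fin 2) := (w.map (FreeAlgebra.ι k)).prod

@[simp] lemma wd_nil : (wd [] : FreeAlgebra k (Fin 2)) = 1 := rfl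

lemma wd_cons (c : Fin 2) (w : List (Fin 2)) :
    (wd (c :: w) : FreeAlgebra k (Fin 2)) = FreeAlgebra.ι k c * wd w := by simp [wd]

lemma wd_append (u w : List (Fin 2)) :
    (wd (u ++ w) : FreeAlgebra k (Fin 2)) = wd u * wd w := by simp [wd]

lemma basisFreeMonoid_apply (w : FreeMonoid (Fin 2)) :
    FreeAlgebra.basisFreeMonoid k (Fin 2) w = wd (FreeMonoid.toList w) := by
  simp [FreeAlgebra.basisFreeMonoid, FreeAlgebra.equivMonoidAlgebraFreeMonoid, wd, FreeMonoid.lift_apply]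

lemma free_hom_ext {M : Type*} [AddCommGroup M] [Module k M]
    {Λ Λ' : FreeAlgebra k (Fin 2) →ₗ[k] M} (h : ∀ w, Λ (wd w) = Λ' (wd w)) : Λ = Λ' :=
  (FreeAlgebra.basisFreeMonoid k (Fin 2)).ext fun w => by
    rw [basisFreeMonoid_apply]; exact h _

/-- The linear functional with prescribed values on words. -/
def lin (f : List (Fin 2) → k) : FreeAlgebra k (Fin 2) →ₗ[k] k :=
  (FreeAlgebra.basisFreeMonoid k (Fin 2)).constr k fun w => f (FreeMonoid.toList w)

@[simp] lemma lin_wd (f : List (Fin 2) → k) (w : List (Fin 2)) : lin f (wd w) = f w := by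
  have := (FreeAlgebra.basisFreeMonoid k (Fin 2)).constr_basis k
    (fun w => f (FreeMonoid.toList w)) (FreeMonoid.ofList w)
  rw [basisFreeMonoid_apply] at this
  exact this

/-- The `ℤ²`-degree of a word. -/
def dg (w : List (Fin 2)) : Fin 2 → ℤ := fun i => w.count i

lemma wd_mem_piece (w : List (Fin 2)) : wd w ∈ piece k (dg w) :=
  Submodule.subset_span ⟨w, fun _ => rfl, rfl⟩

lemma qb_zero (Q : Fin 2 → Fin 2 → kˣ) (γ : Fin 2 → ℤ) : qb Q 0 γ = 1 := by simp [qb]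

lemma qb_ee_dg (Q : Fin 2 → Fin 2 → kˣ) (c : Fin 2) (w : List (Fin 2)) :
    (qb Q (ee c) (dg w) : k) = chi (fun a b => (Q a b : k)) c w := by
  induction w with
  | nil => simp [qb, dg]
  | cons d w ih =>
    rw [chi_cons, ← ih]
    fin_cases c <;> fin_cases d <;>
      simp [qb, dg, ee, zpow_add] <;> ring

section Comul

variable {Q : Fin 2 → Fin 2 → kˣ}
    {m2 : (FreeAlgebra k (Fin 2) ⊗[k] FreeAlgebra k (Fin 2))
      →ₗ[k] (FreeAlgebra k (Fin 2) ⊗[k] FreeAlgebra k (Fin 2))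
      →ₗ[k] (FreeAlgebra k (Fin 2) ⊗[k] FreeAlgebra k (Fin 2))}
    (hm2 : ∀ (a b c d : FreeAlgebra k (Fin 2)) (β γ : Fin 2 → ℤ),
      b ∈ piece k β → c ∈ piece k γ →
      m2 (a ⊗ₜ b) (c ⊗ₜ d) = (qb Q β γ : k) • ((a * c) ⊗ₜ[k] (b * d)))
    {Δ : FreeAlgebra k (Fin 2) →ₗ[k] FreeAlgebra k (Fin 2) ⊗[k] FreeAlgebra k (Fin 2)}
    (hΔmul : ∀ x y, Δ (x * y) = m2 (Δ x) (Δ y))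
    (hΔone : Δ 1 = 1 ⊗ₜ 1)
    (hΔgen : ∀ a : Fin 2, Δ (FreeAlgebra.ι k a)
      = FreeAlgebra.ι k a ⊗ₜ 1 + 1 ⊗ₜ FreeAlgebra.ι k a)

/-- The convolution of two functionals, as a functional on the tensor square. -/
def conv (Λ M : FreeAlgebra k (Fin 2) →ₗ[k] k) :
    FreeAlgebra k (Fin 2) ⊗[k] FreeAlgebra k (Fin 2) →ₗ[k] k :=
  LinearMap.mul' k k ∘ₗ TensorProduct.map Λ M

@[simp] lemma conv_tmul (Λ M : FreeAlgebra k (Fin 2) →ₗ[k] k) (x y : FreeAlgebra k (Fin 2)) :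
    conv Λ M (x ⊗ₜ y) = Λ x * M y := by simp [conv]

include hm2 in
lemma conv_m2_left (Λ M : FreeAlgebra k (Fin 2) →ₗ[k] k) (c : Fin 2)
    (t : FreeAlgebra k (Fin 2) ⊗[k] FreeAlgebra k (Fin 2)) :
    conv Λ M (m2 (FreeAlgebra.ι k c ⊗ₜ 1) t)
      = conv (Λ ∘ₗ LinearMap.mulLeft k (FreeAlgebra.ι k c)) M t := by
  suffices h : conv Λ M ∘ₗ m2 (FreeAlgebra.ι k c ⊗ₜ 1)
      = conv (Λ ∘ₗ LinearMap.mulLeft k (FreeAlgebra.ι k c)) M from LinearMap.congr_fun h t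
  refine TensorProduct.ext (free_hom_ext fun u => free_hom_ext fun v => ?_)
  have := hm2 (FreeAlgebra.ι k c) 1 (wd u) (wd v) 0 (dg u)
    (by have := wd_mem_piece (k := k) []; rwa [show dg [] = 0 from funext fun _ => by simp [dg]] at this)
    (wd_mem_piece u)
  simp [this, qb_zero]

include hm2 in
lemma conv_m2_right (Λ M : FreeAlgebra k (Fin 2) →ₗ[k] k) (c : Fin 2)
    (t : FreeAlgebra k (Fin 2) ⊗[k] FreeAlgebra k (Fin 2)) :
    conv Λ M (m2 (1 ⊗ₜ FreeAlgebra.ι k c) t)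
      = conv (lin fun u => chi (fun a b => (Q a b : k)) c u * Λ (wd u))
        (M ∘ₗ LinearMap.mulLeft k (FreeAlgebra.ι k c)) t := by
  suffices h : conv Λ M ∘ₗ m2 (1 ⊗ₜ FreeAlgebra.ι k c)
      = conv (lin fun u => chi (fun a b => (Q a b : k)) c u * Λ (wd u))
        (M ∘ₗ LinearMap.mulLeft k (FreeAlgebra.ι k c)) from LinearMap.congr_fun h t
  refine TensorProduct.ext (free_hom_ext fun u => free_hom_ext fun v => ?_)
  have hc : FreeAlgebra.ι k c ∈ piece k (ee c) := by
    refine Submodule.subset_span ⟨[c], fun i => ?_, by simp⟩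
    fin_cases c <;> fin_cases i <;> simp [ee]
  have := hm2 1 (FreeAlgebra.ι k c) (wd u) (wd v) (ee c) (dg u) hc (wd_mem_piece u)
  simp [this, qb_ee_dg, mul_assoc]

include hm2 hΔmul hΔone hΔgen in
/-- The coproduct of the free algebra is dual to the quantum shuffle product. -/
lemma conv_comul (w : List (Fin 2)) (Λ M : FreeAlgebra k (Fin 2) →ₗ[k] k) :
    conv Λ M (Δ (wd w))
      = sh (fun a b => (Q a b : k)) w (fun x => Λ (wd x)) (fun x => M (wd x)) := by
  induction w generalizing Λ M with
  | nil => simp [hΔone, sh]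
  | cons c w ih =>
    rw [wd_cons, hΔmul, hΔgen, map_add, LinearMap.add_apply, map_add, conv_m2_left hm2,
      conv_m2_right hm2, ih, ih, sh]
    simp [wd_cons]

end Comul

section Dual

variable {B : Type*} [Ring B] [Algebra k B] (π : FreeAlgebra k (Fin 2) →ₐ[k] B)

/-- The functions on words induced by functionals on the quotient `B`. -/
def dualFns : Submodule k (List (Fin 2) → k) :=
  LinearMap.range (LinearMap.pi fun w => LinearMap.applyₗ (π (wd w)) :
    (B →ₗ[k] k) →ₗ[k] List (Fin 2) → k)

variable {π}

lemma mem_dualFns {f : List (Fin 2) → k} :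
    f ∈ dualFns π ↔ ∃ ψ : B →ₗ[k] k, lin f = ψ ∘ₗ π.toLinearMap := by
  constructor
  · rintro ⟨ψ, rfl⟩
    exact ⟨ψ, free_hom_ext fun w => by simp⟩
  · rintro ⟨ψ, h⟩
    refine ⟨ψ, funext fun w => ?_⟩
    have := LinearMap.congr_fun h (wd w)
    simpa using this.symm

lemma mem_dualFns_of_ker (hsurj : Function.Surjective π) (Λ : FreeAlgebra k (Fin 2) →ₗ[k] k)
    (h : ∀ x, π x = 0 → Λ x = 0) : (fun w => Λ (wd w)) ∈ dualFns π := by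
  have hs : Function.Surjective π.toLinearMap := hsurj
  refine ⟨(LinearMap.ker π.toLinearMap).liftQ Λ (fun x hx => h x hx) ∘ₗ
    (π.toLinearMap.quotKerEquivOfSurjective hs).symm.toLinearMap, funext fun w => ?_⟩
  have : (π.toLinearMap.quotKerEquivOfSurjective hs).symm (π (wd w))
      = (LinearMap.ker π.toLinearMap).mkQ (wd w) := by
    rw [LinearEquiv.symm_apply_eq]; rfl
  simp only [LinearMap.pi_apply, LinearMap.applyₗ_apply_apply, LinearMap.comp_apply,
    LinearEquiv.coe_coe, this, Submodule.mkQ_apply]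
  exact Submodule.liftQ_apply _ _ _

lemma linearIndependent_of_separated {ι : Type*} [Fintype ι] (y : ι → FreeAlgebra k (Fin 2))
    (f : ι → List (Fin 2) → k) (hf : ∀ i, f i ∈ dualFns π)
    (h : ∀ a : ι → k, (∀ i, ∑ j, a j * lin (f i) (y j) = 0) → a = 0) :
    LinearIndependent k fun i => π (y i) := by
  rw [Fintype.linearIndependent_iff]
  intro a ha i
  refine congrFun (h a fun i => ?_) i
  obtain ⟨ψ, hψ⟩ := mem_dualFns.1 (hf i)
  have := congrArg ψ ha
  simpa [hψ] using this

/-- The projection onto a homogeneous component. -/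
def projDeg (d : Fin 2 → ℤ) : FreeAlgebra k (Fin 2) →ₗ[k] FreeAlgebra k (Fin 2) :=
  (FreeAlgebra.basisFreeMonoid k (Fin 2)).constr k fun w =>
    if dg (FreeMonoid.toList w) = d then wd (FreeMonoid.toList w) else 0

lemma projDeg_wd (d : Fin 2 → ℤ) (w : List (Fin 2)) :
    projDeg d (wd w : FreeAlgebra k (Fin 2)) = if dg w = d then wd w else 0 := by
  have := (FreeAlgebra.basisFreeMonoid k (Fin 2)).constr_basis k
    (fun w => if dg (FreeMonoid.toList w) = d then wd (FreeMonoid.toList w) else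
      (0 : FreeAlgebra k (Fin 2))) (FreeMonoid.ofList w)
  rw [basisFreeMonoid_apply] at this
  exact this

lemma projDeg_of_mem {d e : Fin 2 → ℤ} {x : FreeAlgebra k (Fin 2)} (hx : x ∈ piece k e) :
    projDeg d x = if e = d then x else 0 := by
  refine Submodule.span_induction (p := fun x _ => projDeg d x = if e = d then x else 0)
    ?_ ?_ ?_ ?_ hx
  · rintro _ ⟨l, hl, rfl⟩
    have : dg l = e := funext hl
    have h := projDeg_wd (k := k) d l
    rw [this] at h
    exact h
  · simp
  · intro x y _ _ hx hy
    split_ifs at * <;> simp_all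
  · intro a x _ hx
    split_ifs at * <;> simp_all

/-- A homogeneous element with nonzero image is detected by a homogeneous function. -/
lemma exists_homogeneous (hsurj : Function.Surjective π)
    (hhom : ∀ x, π x = 0 → x ∈ Submodule.span k {y | π y = 0 ∧ ∃ d, y ∈ piece k d})
    {d : Fin 2 → ℤ} {z : FreeAlgebra k (Fin 2)} (hz : z ∈ piece k d) (hz0 : π z ≠ 0) :
    ∃ f ∈ dualFns π, (∀ w, dg w ≠ d → f w = 0) ∧ lin f z ≠ 0 := by
  obtain ⟨ψ, hψ⟩ : ∃ ψ : B →ₗ[k] k, ψ (π z) ≠ 0 := by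
    by_contra! H
    exact hz0 ((Module.forall_dual_apply_eq_zero_iff k _).1 H)
  set Λ := ψ ∘ₗ π.toLinearMap ∘ₗ projDeg d with hΛ
  have hlin : lin (fun w => Λ (wd w)) = Λ := free_hom_ext fun w => by simp
  refine ⟨fun w => Λ (wd w), mem_dualFns_of_ker hsurj Λ fun x hx => ?_, fun w hw => ?_, ?_⟩
  · refine Submodule.span_induction (p := fun x _ => Λ x = 0) ?_ ?_ ?_ ?_ (hhom x hx)
    · rintro y ⟨hy, e, he⟩
      simp only [hΛ, LinearMap.comp_apply, projDeg_of_mem he]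
      split_ifs <;> simp [hy]
    · simp
    · intro x y _ _ hx hy
      rw [map_add, hx, hy, add_zero]
    · intro a x _ hx
      rw [map_smul, hx, smul_zero]
  · simp [hΛ, projDeg_wd, hw]
  · rw [hlin]
    simpa [hΛ, projDeg_of_mem hz] using hψ

end Dual

end QShuffle

namespace QShuffle

variable {k : Type*} [Field k]

lemma dg_cons (c : Fin 2) (w : List (Fin 2)) : dg (c :: w) = ee c + dg w := by
  funext i
  fin_cases c <;> fin_cases i <;> simp [dg, ee] <;> ring

section Closed

variable {B : Type*} [Ring B] [Algebra k B] {π : FreeAlgebra k (Fin 2) →ₐ[k] B}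

lemma dl_mem_dualFns_of_unique (hsurj : Function.Surjective π)
    (hhom : ∀ x, π x = 0 → x ∈ Submodule.span k {y | π y = 0 ∧ ∃ d, y ∈ piece k d})
    (u : List (Fin 2)) (hu : π (wd u) ≠ 0) (h : ∀ w, dg w = dg u → w = u) :
    dl u ∈ dualFns π := by
  obtain ⟨f, hf, hfd, hfu⟩ := exists_homogeneous hsurj hhom (wd_mem_piece u) hu
  rw [lin_wd] at hfu
  have : dl u = (f u)⁻¹ • f := by
    funext w
    by_cases hw : w = u
    · simp [dl_apply, hw, hfu]
    · simp [dl_apply, hw, hfd w fun e => hw (h w e)]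
  rw [this]
  exact Submodule.smul_mem _ _ hf

lemma eq_nil_of_dg {w : List (Fin 2)} (h : dg w = dg []) : w = [] := by
  rcases w with _ | ⟨c, w⟩
  · rfl
  · have := congrFun h c
    simp [dg] at this
    omega

lemma eq_singleton_of_dg {w : List (Fin 2)} {a : Fin 2} (h : dg w = dg [a]) : w = [a] := by
  rcases w with _ | ⟨c, w⟩
  · have := congrFun h a
    simp [dg] at this
  · by_cases hc : c = a
    · subst hc
      rw [dg_cons, dg_cons] at h
      rw [eq_nil_of_dg (add_left_cancel h)]
    · have := congrFun h c
      simp [dg, Ne.symm hc] at this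
      omega

variable (hsurj : Function.Surjective π)
    (hhom : ∀ x, π x = 0 → x ∈ Submodule.span k {y | π y = 0 ∧ ∃ d, y ∈ piece k d})
    (htriv : ∀ (a : k) (v : Fin 2 → k),
      π (algebraMap k (FreeAlgebra k (Fin 2)) a + ∑ s, v s • FreeAlgebra.ι k s) = 0 →
      a = 0 ∧ v = 0)

include hsurj hhom htriv

lemma eps_mem_dualFns : eps ∈ dualFns π := by
  refine dl_mem_dualFns_of_unique hsurj hhom [] (fun h => ?_) fun w => eq_nil_of_dg
  exact one_ne_zero (htriv 1 0 (by simpa using h)).1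

lemma dl_singleton_mem_dualFns (a : Fin 2) : dl [a] ∈ dualFns π := by
  refine dl_mem_dualFns_of_unique hsurj hhom [a] (fun h => ?_) fun w => eq_singleton_of_dg
  have := congrFun (htriv 0 (Pi.single a 1) (by
    fin_cases a <;> simpa [wd_cons, Fin.sum_univ_two] using h)).2 a
  simp at this

variable {Q : Fin 2 → Fin 2 → kˣ}
    {m2 : (FreeAlgebra k (Fin 2) ⊗[k] FreeAlgebra k (Fin 2))
      →ₗ[k] (FreeAlgebra k (Fin 2) ⊗[k] FreeAlgebra k (Fin 2))
      →ₗ[k] (FreeAlgebra k (Fin 2) ⊗[k] FreeAlgebra k (Fin 2))}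
    (hm2 : ∀ (a b c d : FreeAlgebra k (Fin 2)) (β γ : Fin 2 → ℤ),
      b ∈ piece k β → c ∈ piece k γ →
      m2 (a ⊗ₜ b) (c ⊗ₜ d) = (qb Q β γ : k) • ((a * c) ⊗ₜ[k] (b * d)))
    {Δ : FreeAlgebra k (Fin 2) →ₗ[k] FreeAlgebra k (Fin 2) ⊗[k] FreeAlgebra k (Fin 2)}
    (hΔmul : ∀ x y, Δ (x * y) = m2 (Δ x) (Δ y))
    (hΔone : Δ 1 = 1 ⊗ₜ 1)
    (hΔgen : ∀ a : Fin 2, Δ (FreeAlgebra.ι k a)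
      = FreeAlgebra.ι k a ⊗ₜ 1 + 1 ⊗ₜ FreeAlgebra.ι k a)
    (hhopf : ∀ x, π x = 0 →
      TensorProduct.map π.toLinearMap π.toLinearMap (Δ x) = 0)

include hm2 hΔmul hΔone hΔgen hhopf

/-- The functions induced by the dual of a quotient bialgebra are closed under the shuffle
product. -/
theorem dualFns_shClosed : ShClosed (fun a b => (Q a b : k)) (dualFns π) where
  eps_mem := eps_mem_dualFns hsurj hhom htriv
  star_mem {f g} hf hg := by
    obtain ⟨ψ, hψ⟩ := mem_dualFns.1 hf
    obtain ⟨φ, hφ⟩ := mem_dualFns.1 hg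
    have : star (fun a b => (Q a b : k)) f g = fun w => (conv (lin f) (lin g) ∘ₗ Δ) (wd w) := by
      funext w
      rw [LinearMap.comp_apply, conv_comul hm2 hΔmul hΔone hΔgen]
      simp [star]
    rw [this]
    refine mem_dualFns_of_ker hsurj _ fun x hx => ?_
    rw [LinearMap.comp_apply, hψ, hφ, conv, TensorProduct.map_comp, LinearMap.comp_apply,
      LinearMap.comp_apply, hhopf x hx, map_zero, map_zero]

end Closed

section Blocks

/-- Evaluation of functions on the words in two chosen elements. -/
def til (p : Fin 2 → FreeAlgebra k (Fin 2)) :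
    (List (Fin 2) → k) →ₗ[k] (List (Fin 2) → k) where
  toFun f w := lin f (w.map p).prod
  map_add' f g := by
    have : lin (f + g) = lin f + lin g := free_hom_ext fun w => by simp
    funext w; simp [this]
  map_smul' a f := by
    have : lin (a • f) = a • lin f := free_hom_ext fun w => by simp
    funext w; simp [this]

lemma til_apply (p : Fin 2 → FreeAlgebra k (Fin 2)) (f : List (Fin 2) → k) (w : List (Fin 2)) :
    til p f w = lin f (w.map p).prod := rfl

/-- The function `x ↦ f (z x)` for an element `z` of the free algebra. -/
def shf (z : FreeAlgebra k (Fin 2)) (f : List (Fin 2) → k) : List (Fin 2) → k :=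
  fun x => lin f (z * wd x)

lemma lin_shf (z y : FreeAlgebra k (Fin 2)) (f : List (Fin 2) → k) :
    lin (shf z f) y = lin f (z * y) := by
  have : lin (shf z f) = lin f ∘ₗ LinearMap.mulLeft k z :=
    free_hom_ext fun w => by simp [shf]
  rw [this]; rfl

lemma til_nil (p : Fin 2 → FreeAlgebra k (Fin 2)) (f : List (Fin 2) → k) : til p f [] = f [] := by
  rw [til_apply, List.map_nil, List.prod_nil, ← wd_nil, lin_wd]

lemma til_cons (p : Fin 2 → FreeAlgebra k (Fin 2)) (f : List (Fin 2) → k) (c : Fin 2)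
    (w : List (Fin 2)) : til p f (c :: w) = til p (shf (p c) f) w := by
  rw [til_apply, til_apply, lin_shf]; simp

/-- Two elements of the free algebra that behave like primitive generators with braiding matrix
`Q'` with respect to the functions in `C`. -/
structure IsBlocks (Q Q' t : Fin 2 → Fin 2 → k) (p : Fin 2 → FreeAlgebra k (Fin 2))
    (C : Submodule k (List (Fin 2) → k)) : Prop where
  closed : ShClosed Q C
  shf_eps : ∀ c, shf (p c) eps = 0
  shf_mem : ∀ c {f}, f ∈ C → shf (p c) f ∈ C
  twist_mem : ∀ c {f}, f ∈ C → (fun x => chi t c x * f x) ∈ C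
  shf_twist : ∀ c d f, f ∈ C →
    shf (p d) (fun x => chi t c x * f x) = Q' c d • fun x => chi t c x * shf (p d) f x
  shf_star : ∀ c {f g}, f ∈ C → g ∈ C → shf (p c) (star Q f g)
    = star Q (shf (p c) f) g + star Q (fun x => chi t c x * f x) (shf (p c) g)

variable {Q Q' t : Fin 2 → Fin 2 → k} {p : Fin 2 → FreeAlgebra k (Fin 2)}
  {C : Submodule k (List (Fin 2) → k)} (H : IsBlocks Q Q' t p C)

include H

lemma IsBlocks.til_twist (c : Fin 2) {f : List (Fin 2) → k} (hf : f ∈ C) :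
    til p (fun x => chi t c x * f x) = fun x => chi Q' c x * til p f x := by
  funext w
  induction w generalizing f with
  | nil => simp [til_nil]
  | cons d w ih =>
    rw [til_cons, H.shf_twist c d f hf, map_smul, Pi.smul_apply, ih (H.shf_mem d hf), til_cons,
      chi_cons, smul_eq_mul, mul_assoc]

lemma IsBlocks.til_star {f g : List (Fin 2) → k} (hf : f ∈ C) (hg : g ∈ C) :
    til p (star Q f g) = star Q' (til p f) (til p g) := by
  funext w
  induction w generalizing f g with
  | nil => simp [til_nil, star, sh]
  | cons c w ih =>
    rw [til_cons, H.shf_star c hf hg, map_add, Pi.add_apply, ih (H.shf_mem c hf) hg,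
      ih (H.twist_mem c hf) (H.shf_mem c hg), H.til_twist c hf]
    have e (f) : (fun x => til p f (c :: x)) = til p (shf (p c) f) := funext fun x => til_cons ..
    simp only [star, sh, e]

lemma IsBlocks.til_eps : til p eps = (eps : List (Fin 2) → k) := by
  funext w
  cases w with
  | nil => simp [til_nil]
  | cons c w => rw [til_cons, H.shf_eps, map_zero]; simp

lemma IsBlocks.map_shClosed {A : Submodule k (List (Fin 2) → k)} (hA : ShClosed Q A) :
    ShClosed Q' ((A ⊓ C).map (til p)) where
  eps_mem := ⟨eps, ⟨hA.eps_mem, H.closed.eps_mem⟩, H.til_eps⟩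
  star_mem := by
    rintro _ _ ⟨f, ⟨hf, hf'⟩, rfl⟩ ⟨g, ⟨hg, hg'⟩, rfl⟩
    exact ⟨star Q f g, ⟨hA.star_mem hf hg, H.closed.star_mem hf' hg'⟩, H.til_star hf' hg'⟩

/-- Sufficient condition for infinite Gelfand–Kirillov dimension. -/
theorem IsBlocks.GKdim_eq_top {B : Type*} [Ring B] [Algebra k B]
    {π : FreeAlgebra k (Fin 2) →ₐ[k] B} (hA : ShClosed Q (dualFns π)) {h : ℕ} (hh : h = 1 ∨ h = 2)
    (h1 : dl [1] ∈ (dualFns π ⊓ C).map (til p)) (hD : dl (blk h) ∈ (dualFns π ⊓ C).map (til p))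
    (hc : ∀ n, c₁ Q' h n ≠ 0 ∨
      (dl (blk h ++ blk h) ∈ (dualFns π ⊓ C).map (til p) ∧ c₂ Q' h n ≠ 0)) :
    GKdim k B = ⊤ := by
  classical
  refine Stmt17.GKdim_eq_top {π (p 0), π (p 1)} fun n => ?_
  obtain ⟨ι, hι, W, E, hcard, hlen, hE, hsep⟩ := exists_separated hh (H.map_shClosed hA) h1 hD
    (fun n => (hc n).imp_right fun h => ⟨by simpa [dl, pre_append] using h.1, h.2⟩) n
  choose f hf hfE using hE
  refine ⟨ι, hι, fun i => π ((W i).map p).prod, hcard,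
    linearIndependent_of_separated _ f (fun i => (hf i).1) fun a ha => hsep a fun i => ?_,
    fun i => ?_⟩
  · rw [← ha i]
    exact Finset.sum_congr rfl fun j _ => by rw [← hfE]; rfl
  · set V := Submodule.span k (insert (1 : B) (({π (p 0), π (p 1)} : Finset B) : Set B)) with hV
    have h1V : (1 : Submodule k B) ≤ V := by
      rw [Submodule.one_le]
      exact Submodule.subset_span (Set.mem_insert _ _)
    refine pow_le_pow_right' h1V (hlen i) ?_
    beta_reduce
    generalize W i = w
    induction w with
    | nil => simpa [Submodule.mem_one] using ⟨1, map_one _⟩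
    | cons c w ih =>
      rw [List.map_cons, List.prod_cons, map_mul, List.length_cons, pow_succ']
      refine Submodule.mul_mem_mul (Submodule.subset_span ?_) ih
      fin_cases c <;> simp

end Blocks

end QShuffle

namespace QShuffle

variable {k : Type*} [Field k] (Q : Fin 2 → Fin 2 → k)

lemma star_dl_cons (c d : Fin 2) (u v : List (Fin 2)) :
    star Q (dl (c :: u)) (dl (d :: v)) = pre [c] (star Q (dl u) (dl (d :: v)))
      + chi Q d (c :: u) • pre [d] (star Q (dl (c :: u)) (dl v)) := by
  have hshift (e c : Fin 2) (u : List (Fin 2)) :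
      (fun x => dl (c :: u) (e :: x)) = if e = c then (dl u : List (Fin 2) → k) else fun _ => 0 := by
    funext x
    by_cases h : e = c <;> simp [dl, h]
  funext w
  rcases w with _ | ⟨e, w⟩
  · simp [star, sh, dl]
  · simp only [star, sh, Pi.add_apply, Pi.smul_apply, smul_eq_mul, pre_cons_cons, pre_nil,
      chi_mul_dl, sh_smul_left, hshift]
    by_cases h1 : e = c
    · subst h1
      by_cases h2 : e = d
      · subst h2; simp
      · simp [h2]
    · by_cases h2 : e = d
      · subst h2; simp [h1]
      · simp [h1, h2]

lemma star_eps_left (g : List (Fin 2) → k) : star Q (dl []) g = g := funext fun w => sh_eps_left Q w g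

lemma star_eps_right (f : List (Fin 2) → k) : star Q f (dl []) = f :=
  funext fun w => sh_eps_right Q w f

lemma pre_dl (c : Fin 2) (u : List (Fin 2)) :
    pre [c] (dl u : List (Fin 2) → k) = dl (c :: u) := (pre_append [c] u eps).symm

lemma pre_add (c : Fin 2) (f g : List (Fin 2) → k) : pre [c] (f + g) = pre [c] f + pre [c] g := by
  funext w
  rcases w with _ | ⟨e, w⟩
  · simp
  · by_cases h : e = c <;> simp [h]

lemma pre_smul (c : Fin 2) (a : k) (g : List (Fin 2) → k) : pre [c] (a • g) = a • pre [c] g := by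
  funext w
  rcases w with _ | ⟨e, w⟩
  · simp
  · by_cases h : e = c <;> simp [h]

/-- A shuffle-closed space of functions containing the letters, for a braiding matrix of Cartan
type `B₂`. -/
structure IsB2 (q : k) (A : Submodule k (List (Fin 2) → k)) : Prop where
  closed : ShClosed Q A
  h00 : Q 0 0 = q ^ 2
  h11 : Q 1 1 = q
  hz : Q 0 1 * Q 1 0 * q ^ 2 = 1
  hq : q ^ 2 ≠ 1
  m0 : dl [0] ∈ A
  m1 : dl [1] ∈ A

variable {Q} {q : k} {A : Submodule k (List (Fin 2) → k)}

lemma mem_of_comb₂ {c a₁ a₂ : k} {f g₁ g₂ : List (Fin 2) → k} (hc : c ≠ 0) (h₁ : g₁ ∈ A)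
    (h₂ : g₂ ∈ A) (h : c • f = a₁ • g₁ + a₂ • g₂) : f ∈ A :=
  (Submodule.smul_mem_iff A hc).1 (h ▸ A.add_mem (A.smul_mem _ h₁) (A.smul_mem _ h₂))

lemma mem_of_comb₃ {c a₁ a₂ a₃ : k} {f g₁ g₂ g₃ : List (Fin 2) → k} (hc : c ≠ 0) (h₁ : g₁ ∈ A)
    (h₂ : g₂ ∈ A) (h₃ : g₃ ∈ A) (h : c • f = a₁ • g₁ + a₂ • g₂ + a₃ • g₃) : f ∈ A :=
  (Submodule.smul_mem_iff A hc).1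
    (h ▸ A.add_mem (A.add_mem (A.smul_mem _ h₁) (A.smul_mem _ h₂)) (A.smul_mem _ h₃))

lemma mem_of_comb₄ {c a₁ a₂ a₃ a₄ : k} {f g₁ g₂ g₃ g₄ : List (Fin 2) → k} (hc : c ≠ 0)
    (h₁ : g₁ ∈ A) (h₂ : g₂ ∈ A) (h₃ : g₃ ∈ A) (h₄ : g₄ ∈ A)
    (h : c • f = a₁ • g₁ + a₂ • g₂ + a₃ • g₃ + a₄ • g₄) : f ∈ A :=
  (Submodule.smul_mem_iff A hc).1 (h ▸ A.add_mem (A.add_mem (A.add_mem (A.smul_mem _ h₁)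
    (A.smul_mem _ h₂)) (A.smul_mem _ h₃)) (A.smul_mem _ h₄))

namespace IsB2

variable (D : IsB2 Q q A)

include D

lemma q_ne_zero : q ≠ 0 := by
  rintro rfl
  simpa using D.hz

lemma dl_01 : dl [0, 1] ∈ A := by
  refine mem_of_comb₂ (a₁ := q ^ 2) (a₂ := - q ^ 2 * Q 1 0) (sub_ne_zero.2 D.hq)
    (D.closed.star_mem D.m0 D.m1) (D.closed.star_mem D.m1 D.m0) ?_
  have hz := D.hz
  simp only [star_dl_cons, star_eps_left, star_eps_right, pre_dl, pre_add, pre_smul, chi_cons,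
    chi_nil, mul_one, D.h00, D.h11]
  match_scalars <;> grind

lemma dl_10 : dl [1, 0] ∈ A := by
  refine mem_of_comb₂ (a₁ := 1) (a₂ := - Q 0 1) one_ne_zero
    (D.closed.star_mem D.m1 D.m0) D.dl_01 ?_
  simp only [star_dl_cons, star_eps_left, star_eps_right, pre_dl, pre_add, pre_smul, chi_cons,
    chi_nil, mul_one, D.h00, D.h11]
  match_scalars <;> grind

lemma dl_011 : dl [0, 1, 1] ∈ A := by
  refine mem_of_comb₂ (a₁ := q) (a₂ := - q ^ 2 * Q 1 0) (sub_ne_zero.2 D.hq)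
    (D.closed.star_mem D.dl_01 D.m1) (D.closed.star_mem D.m1 D.dl_01) ?_
  have hz := D.hz
  simp only [star_dl_cons, star_eps_left, star_eps_right, pre_dl, pre_add, pre_smul, chi_cons,
    chi_nil, mul_one, D.h00, D.h11]
  match_scalars <;> grind

lemma dl_101 : dl [1, 0, 1] ∈ A := by
  refine mem_of_comb₂ (a₁ := 1) (a₂ := - Q 0 1 * (1 + q)) one_ne_zero
    (D.closed.star_mem D.m1 D.dl_01) D.dl_011 ?_
  simp only [star_dl_cons, star_eps_left, star_eps_right, pre_dl, pre_add, pre_smul, chi_cons,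
    chi_nil, mul_one, D.h00, D.h11]
  match_scalars <;> grind

lemma dl_110 : dl [1, 1, 0] ∈ A := by
  refine mem_of_comb₂ (c := 1 + q) (a₁ := 1) (a₂ := - (q * Q 0 1)) (fun h => D.hq (by grind))
    (D.closed.star_mem D.m1 D.dl_10) D.dl_101 ?_
  simp only [star_dl_cons, star_eps_left, star_eps_right, pre_dl, pre_add, pre_smul, chi_cons,
    chi_nil, mul_one, D.h00, D.h11]
  match_scalars <;> grind

lemma dl_010 {x y w : k}
    (hf : x • dl [0, 0, 1] + y • dl [0, 1, 0] + w • dl [1, 0, 0] ∈ A)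
    (h0 : x - (q ^ 2 * Q 0 1 + Q 0 1) * y + q ^ 2 * Q 0 1 ^ 2 * w ≠ 0) : dl [0, 1, 0] ∈ A := by
  have hz := D.hz
  have hq := D.q_ne_zero
  refine mem_of_comb₃ (c := - (q ^ 2 * Q 1 0) *
      (x - (q ^ 2 * Q 0 1 + Q 0 1) * y + q ^ 2 * Q 0 1 ^ 2 * w)) (a₁ := 1 + q ^ 2) (a₂ := - x)
    (a₃ := - (w * Q 0 1 * q ^ 2)) ?_ hf (D.closed.star_mem D.m0 D.dl_01)
    (D.closed.star_mem D.m0 D.dl_10) ?_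
  · refine mul_ne_zero (fun h => ?_) h0
    grind
  · simp only [star_dl_cons, star_eps_left, star_eps_right, pre_dl, pre_add, pre_smul, chi_cons,
    chi_nil, mul_one, D.h00, D.h11]
    match_scalars <;> grind

lemma dl_0110 : dl [0, 1, 1, 0] ∈ A := by
  have hz := D.hz
  refine mem_of_comb₂ (c := q ^ 2 - 1) (a₁ := - (q ^ 2 * Q 0 1 ^ 2)) (a₂ := q ^ 2)
    (sub_ne_zero.2 D.hq)
    (D.closed.star_mem D.m0 D.dl_011) (D.closed.star_mem D.dl_011 D.m0) ?_
  simp only [star_dl_cons, star_eps_left, star_eps_right, pre_dl, pre_add, pre_smul, chi_cons,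
    chi_nil, mul_one, D.h00, D.h11]
  match_scalars <;> grind

lemma dl_0101 (h : dl [0, 1, 0] ∈ A) : dl [0, 1, 0, 1] ∈ A := by
  have hz := D.hz
  refine mem_of_comb₃ (c := q ^ 2 - 1) (a₁ := q ^ 2) (a₂ := - (Q 1 0 ^ 2 * q ^ 3))
    (a₃ := - (Q 1 0 * (1 + q) * (q ^ 2 - q))) (sub_ne_zero.2 D.hq)
    (D.closed.star_mem h D.m1) (D.closed.star_mem D.m1 h) D.dl_0110 ?_
  simp only [star_dl_cons, star_eps_left, star_eps_right, pre_dl, pre_add, pre_smul, chi_cons,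
    chi_nil, mul_one, D.h00, D.h11]
  match_scalars <;> grind

lemma dl_0111 (h3 : 1 + q + q ^ 2 ≠ 0) {x₀ x₁ x₂ x₃ : k}
    (hf : x₀ • dl [0, 1, 1, 1] + x₁ • dl [1, 0, 1, 1] + x₂ • dl [1, 1, 0, 1]
      + x₃ • dl [1, 1, 1, 0] ∈ A)
    (h0 : x₀ - Q 0 1 * (1 + q + q ^ 2) * x₁ + q * Q 0 1 ^ 2 * (1 + q + q ^ 2) * x₂
      - q ^ 3 * Q 0 1 ^ 3 * x₃ ≠ 0) : dl [0, 1, 1, 1] ∈ A := by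
  refine mem_of_comb₄ (c := (1 + q + q ^ 2) * (1 + q) *
      (x₀ - Q 0 1 * (1 + q + q ^ 2) * x₁ + q * Q 0 1 ^ 2 * (1 + q + q ^ 2) * x₂
      - q ^ 3 * Q 0 1 ^ 3 * x₃)) (a₁ := (1 + q + q ^ 2) * (1 + q)) (a₂ := - ((1 + q) * x₃))
    (a₃ := - ((1 + q + q ^ 2) * x₂ - x₃ * q ^ 2 * Q 0 1))
    (a₄ := ((1 + q + q ^ 2) * x₂ - x₃ * q ^ 2 * Q 0 1) * (1 + q) * q * Q 0 1
      - (1 + q + q ^ 2) * (1 + q) * x₁)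
    (mul_ne_zero (mul_ne_zero h3 fun h => D.hq (by grind)) h0) hf
    (D.closed.star_mem D.m1 D.dl_110) (D.closed.star_mem D.m1 D.dl_101)
    (D.closed.star_mem D.m1 D.dl_011) ?_
  simp only [star_dl_cons, star_eps_left, star_eps_right, pre_dl, pre_add, pre_smul, chi_cons,
    chi_nil, mul_one, D.h00, D.h11]
  match_scalars <;> grind

lemma dl_0111_of_cube (h3 : 1 + q + q ^ 2 = 0) {x₀ x₁ x₂ x₃ : k}
    (hf : x₀ • dl [0, 1, 1, 1] + x₁ • dl [1, 0, 1, 1] + x₂ • dl [1, 1, 0, 1]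
      + x₃ • dl [1, 1, 1, 0] ∈ A)
    (h0 : x₀ - Q 0 1 * (1 + q + q ^ 2) * x₁ + q * Q 0 1 ^ 2 * (1 + q + q ^ 2) * x₂
      - q ^ 3 * Q 0 1 ^ 3 * x₃ ≠ 0) (h111 : dl [1, 1, 1] ∈ A) : dl [0, 1, 1, 1] ∈ A := by
  have hz := D.hz
  have h1011 : dl [1, 0, 1, 1] ∈ A := by
    convert D.closed.star_mem D.m1 D.dl_011 using 1
    simp only [star_dl_cons, star_eps_left, star_eps_right, pre_dl, pre_add, pre_smul, chi_cons,
    chi_nil, mul_one, D.h00, D.h11]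
    match_scalars <;> grind
  have h1101 : dl [1, 1, 0, 1] ∈ A := by
    refine mem_of_comb₂ (c := 1 + q) (a₁ := 1) (a₂ := - ((1 + q) * q * Q 0 1))
      (fun h => D.hq (by grind)) (D.closed.star_mem D.m1 D.dl_101) h1011 ?_
    simp only [star_dl_cons, star_eps_left, star_eps_right, pre_dl, pre_add, pre_smul, chi_cons,
    chi_nil, mul_one, D.h00, D.h11]
    match_scalars <;> grind
  refine mem_of_comb₄ (c := Q 1 0 ^ 3 * x₀ - x₃) (a₁ := Q 1 0 ^ 3) (a₂ := - x₃)
    (a₃ := x₃ * Q 1 0 - Q 1 0 ^ 3 * x₁) (a₄ := x₃ * Q 1 0 ^ 2 - Q 1 0 ^ 3 * x₂)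
    (fun h => h0 ?_) hf (D.closed.star_mem D.m0 h111) h1011 h1101 ?_
  · grind
  · simp only [star_dl_cons, star_eps_left, star_eps_right, pre_dl, pre_add, pre_smul, chi_cons,
    chi_nil, mul_one, D.h00, D.h11]
    match_scalars <;> grind

lemma dl_011101 (h : dl [0, 1, 1, 1] ∈ A) : dl [0, 1, 1, 1, 0, 1] ∈ A := by
  have hz := D.hz
  refine mem_of_comb₂ (c := q - 1) (a₁ := q) (a₂ := - (q * Q 0 1 ^ 2))
    (fun h => D.hq (by grind)) (D.closed.star_mem h D.dl_01) (D.closed.star_mem D.dl_01 h) ?_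
  simp only [star_dl_cons, star_eps_left, star_eps_right, pre_dl, pre_add, pre_smul, chi_cons,
    chi_nil, mul_one, D.h00, D.h11]
  match_scalars <;> grind

lemma dl_011011 (h : dl [0, 1, 1, 1] ∈ A) : dl [0, 1, 1, 0, 1, 1] ∈ A := by
  have hz := D.hz
  refine mem_of_comb₃ (c := q * (1 + q)) (a₁ := Q 0 1 * (1 + q + q ^ 2))
    (a₂ := - (Q 0 1 * (1 + q + q ^ 2) * Q 1 0 ^ 2 * q ^ 3)) (a₃ := - (1 + q))
    (mul_ne_zero D.q_ne_zero fun h => D.hq (by grind)) (D.closed.star_mem D.dl_01 h)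
    (D.dl_011101 h) (D.closed.star_mem D.dl_011 D.dl_011) ?_
  simp only [star_dl_cons, star_eps_left, star_eps_right, pre_dl, pre_add, pre_smul, chi_cons,
    chi_nil, mul_one, D.h00, D.h11]
  match_scalars <;> grind

lemma dl_010111_add (h4 : 1 + q ^ 2 ≠ 0) (h : dl [0, 1, 1, 1] ∈ A) :
    dl [0, 1, 0, 1, 1, 1] + (Q 0 1 * (1 + q ^ 2)) • dl [0, 0, 1, 1, 1, 1] ∈ A := by
  have hz := D.hz
  refine mem_of_comb₃ (c := (1 + q ^ 2) * (1 + q)) (a₁ := 1) (a₂ := - (Q 1 0 ^ 2 * q ^ 3))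
    (a₃ := - (Q 1 0 * q ^ 2 * (1 + q)))
    (mul_ne_zero h4 fun h => D.hq (by grind)) (D.closed.star_mem D.dl_01 h)
    (D.dl_011101 h) (D.dl_011011 h) ?_
  simp only [star_dl_cons, star_eps_left, star_eps_right, pre_dl, pre_add, pre_smul, chi_cons,
    chi_nil, mul_one, D.h00, D.h11]
  match_scalars <;> grind

end IsB2

end QShuffle

namespace QShuffle

variable {k : Type*} [Field k]

lemma shf_wd (u : List (Fin 2)) (f : List (Fin 2) → k) : shf (wd u) f = fun x => f (u ++ x) := by
  funext x
  simp [shf, ← wd_append]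

lemma top_shClosed (Q : Fin 2 → Fin 2 → k) : ShClosed Q ⊤ := ⟨trivial, fun _ _ => trivial⟩

lemma isBlocks_gen (Q : Fin 2 → Fin 2 → k) : IsBlocks Q Q Q (fun c => wd [c]) ⊤ where
  closed := top_shClosed Q
  shf_eps c := by funext x; simp [shf_wd]
  shf_mem _ _ _ := trivial
  twist_mem _ _ _ := trivial
  shf_twist c d f _ := by funext x; simp [shf_wd, mul_assoc]
  shf_star c f g _ _ := by funext x; simp [shf_wd, star, sh]

lemma til_gen (f : List (Fin 2) → k) : til (fun c => wd [c]) f = f := by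
  funext w
  rw [til_apply]
  have : (fun c => wd [c]) = (FreeAlgebra.ι k : Fin 2 → FreeAlgebra k (Fin 2)) :=
    funext fun c => by simp [wd]
  rw [this, ← wd, lin_wd]

variable {B : Type*} [Ring B] [Algebra k B] {π : FreeAlgebra k (Fin 2) →ₐ[k] B}
  {Q : Fin 2 → Fin 2 → k} {q : k}

lemma mem_map_til_gen {f : List (Fin 2) → k} (hf : f ∈ dualFns π) :
    f ∈ (dualFns π ⊓ ⊤).map (til fun c => wd [c]) := ⟨f, ⟨hf, trivial⟩, til_gen f⟩

lemma GKdim_eq_top_of_dl_010 (D : IsB2 Q q (dualFns π)) (h4 : q ^ 4 ≠ 1)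
    (h : dl [0, 1, 0] ∈ dualFns π) : GKdim k B = ⊤ := by
  refine (isBlocks_gen Q).GKdim_eq_top D.closed (Or.inl rfl) (mem_map_til_gen D.m1)
    (mem_map_til_gen D.dl_01) fun n => ?_
  by_cases hc : c₁ Q 1 n = 0
  · exact Or.inr ⟨mem_map_til_gen (D.dl_0101 h),
      c₂_ne_zero_one Q D.h00 D.h11 D.hz (fun h => D.hq (by grind)) h4 n hc⟩
  · exact Or.inl hc

lemma GKdim_eq_top_of_dl_0111 [CharZero k] (D : IsB2 Q q (dualFns π)) (h3 : q ^ 3 ≠ 1)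
    (h : dl [0, 1, 1, 1] ∈ dualFns π) : GKdim k B = ⊤ := by
  refine (isBlocks_gen Q).GKdim_eq_top D.closed (Or.inr rfl) (mem_map_til_gen D.m1)
    (mem_map_til_gen D.dl_011) fun n => ?_
  by_cases hc : c₁ Q 2 n = 0
  · exact Or.inr ⟨mem_map_til_gen (D.dl_011011 h),
      c₂_ne_zero_two Q D.h00 D.h11 D.hz D.hq h3 n hc⟩
  · exact Or.inl hc

/-- The product of the scalars obtained by moving the letters of `v` across `x`. -/
def tw (Q : Fin 2 → Fin 2 → k) (v x : List (Fin 2)) : k := (v.map fun d => chi Q d x).prod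

lemma chi_tw (Q : Fin 2 → Fin 2 → k) (v : Fin 2 → List (Fin 2)) (c : Fin 2) (x : List (Fin 2)) :
    chi (fun c e => tw Q (v c) [e]) c x = tw Q (v c) x := by
  induction x with
  | nil => simp [tw]
  | cons e x ih =>
    rw [chi_cons, ih]
    simp [tw, List.prod_map_mul]

lemma tw_append (Q : Fin 2 → Fin 2 → k) (v x y : List (Fin 2)) :
    tw Q v (x ++ y) = tw Q v x * tw Q v y := by
  simp [tw, List.prod_map_mul]

/-- The shuffle product of the remainders of `f` and `g` after they have taken the letters `u`
and `v`. -/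
def shRem (Q : Fin 2 → Fin 2 → k) (f g : List (Fin 2) → k) (w u v : List (Fin 2)) : k :=
  sh Q w (fun x => tw Q v x * f (u ++ x)) fun x => g (v ++ x)

lemma shRem_cons (f g : List (Fin 2) → k) (c : Fin 2) (w u v : List (Fin 2)) :
    shRem Q f g (c :: w) u v
      = tw Q v [c] * shRem Q f g w (u ++ [c]) v + shRem Q f g w u (v ++ [c]) := by
  have h1 : (fun x => tw Q v (c :: x) * f (u ++ c :: x))
      = tw Q v [c] • fun x => tw Q v x * f (u ++ [c] ++ x) := by
    funext x
    have := tw_append Q v [c] x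
    simp only [List.singleton_append] at this
    simp [this, mul_assoc]
  have h2 : (fun x => chi Q c x * (tw Q v x * f (u ++ x)))
      = fun x => tw Q (v ++ [c]) x * f (u ++ x) := by
    funext x; simp [tw]; ring
  simp only [shRem, sh, h1, h2, sh_smul_left]
  simp

lemma star_eq_shRem (f g : List (Fin 2) → k) (w : List (Fin 2)) :
    star Q f g w = shRem Q f g w [] [] := by
  simp [star, shRem, tw]

lemma shf_add (x y : FreeAlgebra k (Fin 2)) (f : List (Fin 2) → k) :
    shf (x + y) f = shf x f + shf y f := by
  funext w; simp [shf, add_mul]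

lemma shf_sub (x y : FreeAlgebra k (Fin 2)) (f : List (Fin 2) → k) :
    shf (x - y) f = shf x f - shf y f := by
  funext w; simp [shf, sub_mul]

lemma shf_smul (a : k) (x : FreeAlgebra k (Fin 2)) (f : List (Fin 2) → k) :
    shf (a • x) f = a • shf x f := by
  funext w; simp [shf]

/-- The element `x_{112}`. -/
def x112 (Q : Fin 2 → Fin 2 → k) (q : k) : FreeAlgebra k (Fin 2) :=
  wd [0, 0, 1] - ((1 + q ^ 2) * Q 0 1) • wd [0, 1, 0] + (q ^ 2 * Q 0 1 ^ 2) • wd [1, 0, 0]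

lemma shf_x112 (f : List (Fin 2) → k) (x : List (Fin 2)) :
    shf (x112 Q q) f x = f (0 :: 0 :: 1 :: x) - (1 + q ^ 2) * Q 0 1 * f (0 :: 1 :: 0 :: x)
      + q ^ 2 * Q 0 1 ^ 2 * f (1 :: 0 :: 0 :: x) := by
  simp [x112, shf_add, shf_sub, shf_smul, shf_wd]

lemma shf_x112_eq (f : List (Fin 2) → k) :
    shf (x112 Q q) f = (fun x => f ([0, 0, 1] ++ x))
      + (-((1 + q ^ 2) * Q 0 1)) • (fun x => f ([0, 1, 0] ++ x))
      + (q ^ 2 * Q 0 1 ^ 2) • fun x => f ([1, 0, 0] ++ x) := by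
  funext x
  simp [shf_x112, sub_eq_add_neg]

lemma sh_eq_shRem_left (f g : List (Fin 2) → k) (u w : List (Fin 2)) :
    sh Q w (fun x => f (u ++ x)) g = shRem Q f g w u [] := by
  simp [shRem, tw]

lemma sh_eq_shRem_right (f g : List (Fin 2) → k) (v v' w : List (Fin 2)) (h : tw Q v = tw Q v') :
    sh Q w (fun x => tw Q v x * f x) (fun x => g (v' ++ x)) = shRem Q f g w [] v' := by
  simp [shRem, h]

lemma tw_perm {v v' : List (Fin 2)} (h : v.Perm v') : tw Q v = tw Q v' := by
  funext x
  exact (h.map _).prod_eq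

/-- The words giving the degrees of the elements `x₂` and `x_{112}`. -/
def deg112 : Fin 2 → List (Fin 2) := ![[1], [0, 0, 1]]

/-- When `q ^ 2 = -1`, the elements `x₂` and `x_{112}` are primitive. -/
lemma isBlocks_x112 (D : IsB2 Q q (dualFns π)) (h4 : q ^ 4 = 1) :
    IsBlocks Q (fun c d => tw Q (deg112 c) (deg112 d)) (fun c e => tw Q (deg112 c) [e])
      ![wd [1], x112 Q q] ⊤ where
  closed := top_shClosed Q
  shf_eps c := by
    funext x
    fin_cases c <;> simp [shf_wd, shf_x112]
  shf_mem _ _ _ := trivial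
  twist_mem _ _ _ := trivial
  shf_twist c d f _ := by
    funext x
    fin_cases d
    · simp [shf_wd, deg112, mul_assoc]
    · fin_cases c <;> simp [shf_x112, deg112, tw] <;> ring
  shf_star c f g _ _ := by
    funext x
    fin_cases c
    · simp only [chi_tw]
      simp [shf_wd, star, sh, tw, deg112]
    · have hz := D.hz
      have h00 := D.h00
      have h11 := D.h11
      have hq := D.hq
      simp only [chi_tw]
      simp only [Fin.mk_one, Matrix.cons_val_one, Matrix.cons_val_fin_one, shf_x112,
        star_eq_shRem f g, shRem_cons, Pi.add_apply, List.nil_append, List.cons_append]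
      simp only [star, shf_x112_eq, sh_add_left, sh_add_right, sh_smul_left, sh_smul_right, deg112,
        Matrix.cons_val_one, Matrix.cons_val_fin_one]
      rw [sh_eq_shRem_left, sh_eq_shRem_left, sh_eq_shRem_left,
        sh_eq_shRem_right _ _ _ _ _ rfl,
        sh_eq_shRem_right _ _ [0, 0, 1] [0, 1, 0] _ (tw_perm (by decide)),
        sh_eq_shRem_right _ _ [0, 0, 1] [1, 0, 0] _ (tw_perm (by decide))]
      have h2 : q ^ 2 = -1 := by grind
      simp only [tw, List.map_cons, List.map_nil, List.prod_cons, List.prod_nil, chi_cons,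
        chi_nil, mul_one, one_mul, h00, h11, h2] at hz ⊢
      linear_combination -(1 - Q 0 1 * Q 1 0) * shRem Q f g x [0, 0] [1] * hz

end QShuffle

namespace QShuffle

variable {k : Type*} [Field k]

lemma til_eq_pre (p : Fin 2 → FreeAlgebra k (Fin 2)) (f : List (Fin 2) → k) (hf : f [] = 0) :
    til p f = pre [0] (til p (shf (p 0) f)) + pre [1] (til p (shf (p 1) f)) := by
  funext w
  rcases w with _ | ⟨c, w⟩
  · simp [til_nil, hf]
  · fin_cases c <;> simp [til_cons]

lemma pre_zero (c : Fin 2) : pre [c] (0 : List (Fin 2) → k) = 0 := by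
  funext w
  rcases w with _ | ⟨e, w⟩ <;> simp

variable {B : Type*} [Ring B] [Algebra k B] {π : FreeAlgebra k (Fin 2) →ₐ[k] B}
  {Q : Fin 2 → Fin 2 → k} {q : k}

/-- Blocks with braiding matrix of affine Cartan type `A₂⁽²⁾` force infinite Gelfand–Kirillov
dimension. -/
lemma IsBlocks.GKdim_eq_top_of_affine {Q' t : Fin 2 → Fin 2 → k}
    {p : Fin 2 → FreeAlgebra k (Fin 2)} {C : Submodule k (List (Fin 2) → k)}
    (H : IsBlocks Q Q' t p C) (hA : ShClosed Q (dualFns π))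
    (h0 : dl [0] ∈ (dualFns π ⊓ C).map (til p)) (h1 : dl [1] ∈ (dualFns π ⊓ C).map (til p))
    (ha : Q' 0 0 * (Q' 0 1 * Q' 1 0) * Q' 1 1 = 1) (hb : Q' 0 1 * Q' 1 0 * Q' 1 1 ^ 2 = 1)
    (hc : Q' 1 1 ^ 2 ≠ 1) : GKdim k B = ⊤ := by
  have hA' := H.map_shClosed hA
  refine H.GKdim_eq_top hA (Or.inl rfl) h1 ?_ fun n =>
    Or.inl (c₁_ne_zero_of_affine Q' ha hb hc n)
  refine mem_of_comb₂ (c := 1 - Q' 0 1 * Q' 1 0) (a₁ := 1) (a₂ := - Q' 1 0)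
    (f := dl [0, 1]) (fun h => hc (by grind)) (hA'.star_mem h0 h1) (hA'.star_mem h1 h0) ?_
  simp only [star_dl_cons, star_eps_left, star_eps_right, pre_dl, pre_add, pre_smul, chi_cons,
    chi_nil, mul_one]
  match_scalars <;> grind

lemma GKdim_eq_top_of_x112 (D : IsB2 Q q (dualFns π)) (h4 : q ^ 4 = 1) {x y w : k}
    (hf : x • dl [0, 0, 1] + y • dl [0, 1, 0] + w • dl [1, 0, 0] ∈ dualFns π)
    (h0 : x - (q ^ 2 * Q 0 1 + Q 0 1) * y + q ^ 2 * Q 0 1 ^ 2 * w ≠ 0) : GKdim k B = ⊤ := by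
  have H := isBlocks_x112 D h4
  have hq := D.hq
  have hz := D.hz
  have h00 := D.h00
  have h11 := D.h11
  have h2 : q ^ 2 = -1 := by grind
  refine H.GKdim_eq_top_of_affine D.closed ⟨dl [1], ⟨D.m1, trivial⟩, ?_⟩
    ((Submodule.smul_mem_iff _ h0).1 ⟨_, ⟨hf, trivial⟩, ?_⟩) ?_ ?_ ?_
  · have e0 : shf (wd [1]) (dl [1] : List (Fin 2) → k) = eps := by
      funext x; simp [shf_wd, dl]
    have e1 : shf (x112 Q q) (dl [1]) = 0 := by
      funext x; simp [shf_x112, dl]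
    rw [til_eq_pre _ _ (by simp [dl])]
    simp only [Matrix.cons_val_zero, Matrix.cons_val_one, Matrix.cons_val_fin_one, e0, e1,
      map_zero, pre_zero, add_zero, H.til_eps]
    rfl
  · have e0 : shf (wd [1]) (x • dl [0, 0, 1] + y • dl [0, 1, 0] + w • dl [1, 0, 0])
        = (w • dl [0, 0] : List (Fin 2) → k) := by
      funext x; simp [shf_wd, dl]
    have e1 : shf (x112 Q q) (x • dl [0, 0, 1] + y • dl [0, 1, 0] + w • dl [1, 0, 0])
        = (x - (q ^ 2 * Q 0 1 + Q 0 1) * y + q ^ 2 * Q 0 1 ^ 2 * w) • eps := by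
      funext x; simp [shf_x112, dl]; ring
    have e2 : til ![wd [1], x112 Q q] (dl [0, 0]) = (0 : List (Fin 2) → k) := by
      have e0 : shf (wd [1]) (dl [0, 0] : List (Fin 2) → k) = 0 := by
        funext x; simp [shf_wd, dl]
      have e1 : shf (x112 Q q) (dl [0, 0]) = 0 := by
        funext x; simp [shf_x112, dl]
      rw [til_eq_pre _ _ (by simp [dl])]
      simp only [Matrix.cons_val_zero, Matrix.cons_val_one, Matrix.cons_val_fin_one, e0, e1,
        map_zero, pre_zero, add_zero]
    rw [til_eq_pre _ _ (by simp [dl])]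
    simp only [Matrix.cons_val_zero, Matrix.cons_val_one, Matrix.cons_val_fin_one, e0, e1,
      map_smul, e2, smul_zero, pre_zero, zero_add, H.til_eps, pre_smul]
    rfl
  all_goals
    simp only [deg112, tw, Matrix.cons_val_zero, Matrix.cons_val_one, Matrix.cons_val_fin_one,
      List.map_cons, List.map_nil, List.prod_cons, List.prod_nil, chi_cons, chi_nil, mul_one, h00,
      h11]
    grind

end QShuffle

namespace QShuffle

variable {k : Type*} [Field k]

/-- Some prefix of the word has weight less than `-m`, where the letters `0` and `1` have weights
`2` and `-1`. -/
def Neg : ℤ → List (Fin 2) → Prop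
  | m, [] => m < 0
  | m, c :: w => m < 0 ∨ Neg (m + ![2, -1] c) w

lemma Neg.of_lt {m : ℤ} (hm : m < 0) (w : List (Fin 2)) : Neg m w := by
  cases w
  · exact hm
  · exact Or.inl hm

lemma Neg.append {m : ℤ} {u : List (Fin 2)} (h : Neg m u) (x : List (Fin 2)) : Neg m (u ++ x) := by
  induction u generalizing m with
  | nil => exact Neg.of_lt h _
  | cons c u ih => exact h.imp_right ih

/-- The functions vanishing on the words with a prefix of negative weight. -/
def cone (k : Type*) [Field k] : Submodule k (List (Fin 2) → k) where
  carrier := {f | ∀ x, Neg 0 x → f x = 0}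
  add_mem' hf hg x hx := by simp [hf x hx, hg x hx]
  zero_mem' _ _ := rfl
  smul_mem' a f hf x hx := by simp [hf x hx]

lemma sh_eq_zero_of_neg (Q : Fin 2 → Fin 2 → k) (w : List (Fin 2)) {a b : ℤ}
    {f g : List (Fin 2) → k} (hf : ∀ x, Neg a x → f x = 0) (hg : ∀ x, Neg b x → g x = 0)
    (hw : Neg (a + b) w) : sh Q w f g = 0 := by
  have key {a b : ℤ} {f g : List (Fin 2) → k} (w : List (Fin 2))
      (hf : ∀ x, Neg a x → f x = 0) (hg : ∀ x, Neg b x → g x = 0) (h : a + b < 0) :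
      sh Q w f g = 0 := by
    rcases lt_or_ge a 0 with ha | ha
    · rw [show f = fun _ => 0 from funext fun x => hf x (Neg.of_lt ha x), sh_zero_left]
    · rw [show g = fun _ => 0 from funext fun x => hg x (Neg.of_lt (by omega) x), sh_zero_right]
  induction w generalizing a b f g with
  | nil => exact key [] hf hg hw
  | cons c w ih =>
    rcases hw with hw | hw
    · exact key _ hf hg hw
    · have h1 := ih (a := a + ![2, -1] c) (b := b) (f := fun x => f (c :: x)) (g := g)
        (fun x hx => hf _ (Or.inr hx)) hg (by rwa [add_right_comm])
      have h2 := ih (a := a) (b := b + ![2, -1] c) (f := fun x => chi Q c x * f x)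
        (g := fun x => g (c :: x)) (fun x hx => by simp [hf x hx])
        (fun x hx => hg _ (Or.inr hx)) (by rwa [← add_assoc])
      simp only [sh, h1, h2, add_zero]

lemma cone_shClosed (Q : Fin 2 → Fin 2 → k) : ShClosed Q (cone k) where
  eps_mem x hx := by
    cases x with
    | nil => simp [Neg] at hx
    | cons c x => simp
  star_mem hf hg w hw := sh_eq_zero_of_neg Q w hf hg (by simpa using hw)

variable {B : Type*} [Ring B] [Algebra k B] {π : FreeAlgebra k (Fin 2) →ₐ[k] B}
  {Q : Fin 2 → Fin 2 → k} {q : k}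

lemma shRem_eq_zero_left {f : List (Fin 2) → k} (hf : f ∈ cone k) (g : List (Fin 2) → k)
    (w : List (Fin 2)) {u : List (Fin 2)} (v : List (Fin 2)) (hu : Neg 0 u) :
    shRem Q f g w u v = 0 := by
  have : (fun x => tw Q v x * f (u ++ x)) = fun _ => 0 := funext fun x => by simp [hf _ (hu.append x)]
  rw [shRem, this, sh_zero_left]

lemma shRem_eq_zero_right (f : List (Fin 2) → k) {g : List (Fin 2) → k} (hg : g ∈ cone k)
    (w u : List (Fin 2)) {v : List (Fin 2)} (hv : Neg 0 v) :
    shRem Q f g w u v = 0 := by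
  have : (fun x => g (v ++ x)) = fun _ => 0 := funext fun x => hg _ (hv.append x)
  rw [shRem, this, sh_zero_right]

/-- The two words used when `q` has order three. -/
def degCube : Fin 2 → List (Fin 2) := ![[0, 1, 1], [0, 1, 0, 1, 1, 1]]

/-- When `q` has order three, two words behave like primitive elements on the functions in
`cone k`. -/
lemma isBlocks_cube (D : IsB2 Q q (dualFns π)) (h3 : 1 + q + q ^ 2 = 0) :
    IsBlocks Q (fun c d => tw Q (degCube c) (degCube d)) (fun c e => tw Q (degCube c) [e])
      (fun c => wd (degCube c)) (cone k) where
  closed := cone_shClosed Q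
  shf_eps c := by
    funext x
    fin_cases c <;> simp [shf_wd, degCube]
  shf_mem c f hf x hx := by
    rw [shf_wd]
    refine hf _ ?_
    fin_cases c <;> simpa [degCube, Neg] using hx
  twist_mem c f hf x hx := by simp [hf x hx]
  shf_twist c d f _ := by
    funext x
    simp [shf_wd, chi_tw, tw_append, mul_assoc]
  shf_star c f g hf hg := by
    funext x
    have h00 := D.h00
    have h11 := D.h11
    have hL1 (u v) : shRem Q f g x (1 :: u) v = 0 :=
      shRem_eq_zero_left hf g x v (by simp [Neg, Neg.of_lt])
    have hL2 (u v) : shRem Q f g x (0 :: 1 :: 1 :: 1 :: u) v = 0 :=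
      shRem_eq_zero_left hf g x v (by simp [Neg, Neg.of_lt])
    have hR1 (u v) : shRem Q f g x u (1 :: v) = 0 :=
      shRem_eq_zero_right f hg x u (by simp [Neg, Neg.of_lt])
    have hR2 (u v) : shRem Q f g x u (0 :: 1 :: 1 :: 1 :: v) = 0 :=
      shRem_eq_zero_right f hg x u (by simp [Neg, Neg.of_lt])
    simp only [chi_tw, shf_wd, Pi.add_apply]
    have e1 : star Q (fun x => f (degCube c ++ x)) g x = shRem Q f g x (degCube c) [] :=
      sh_eq_shRem_left ..
    have e2 : star Q (fun x => tw Q (degCube c) x * f x) (fun x => g (degCube c ++ x)) x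
      = shRem Q f g x [] (degCube c) := rfl
    rw [e1, e2, star_eq_shRem]
    fin_cases c
    · simp [degCube, shRem_cons, hL1, hR1, tw]
    · simp [degCube, shRem_cons, hL1, hR1, hL2, hR2, tw, h00, h11]
      linear_combination (Q 0 1 + q ^ 4 * Q 1 0 * Q 0 1 ^ 2) * shRem Q f g x [0, 1, 1] [0, 1, 1] * h3

lemma GKdim_eq_top_of_cube (D : IsB2 Q q (dualFns π)) (h3 : 1 + q + q ^ 2 = 0)
    (h : dl [0, 1, 1, 1] ∈ dualFns π) : GKdim k B = ⊤ := by
  have H := isBlocks_cube D h3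
  have hq := D.hq
  have hz := D.hz
  have hc : q ^ 3 = 1 := by linear_combination (q - 1) * h3
  have hz' : Q 0 1 * Q 1 0 = q := by linear_combination q * hz - Q 0 1 * Q 1 0 * hc
  have h4 : 1 + q ^ 2 ≠ 0 := fun h => D.q_ne_zero (by linear_combination h3 - h)
  have ha : tw Q [0, 1, 1] [0, 1, 1] = q ^ 2 := by
    simp [tw, D.h00, D.h11]
    trans q ^ 6 * (Q 0 1 * Q 1 0) ^ 2
    · ring
    · rw [hz']
      linear_combination (q ^ 5 + q ^ 2) * hc
  have hb : tw Q [0, 1, 0, 1, 1, 1] [0, 1, 0, 1, 1, 1] = q ^ 2 := by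
    simp [tw, D.h00, D.h11]
    trans q ^ 24 * (Q 0 1 * Q 1 0) ^ 8
    · ring
    · rw [hz', show q ^ 24 * q ^ 8 = (q ^ 3) ^ 10 * q ^ 2 by ring, hc, one_pow, one_mul]
  have hab : tw Q [0, 1, 1] [0, 1, 0, 1, 1, 1] * tw Q [0, 1, 0, 1, 1, 1] [0, 1, 1] = q ^ 2 := by
    simp [tw, D.h00, D.h11]
    trans q ^ 24 * (Q 0 1 * Q 1 0) ^ 8
    · ring
    · rw [hz', show q ^ 24 * q ^ 8 = (q ^ 3) ^ 10 * q ^ 2 by ring, hc, one_pow, one_mul]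
  have hcone (w : List (Fin 2)) (hw : ¬ Neg 0 w) : dl w ∈ cone k := fun x hx => by
    rw [dl_apply, if_neg]
    rintro rfl
    exact hw hx
  refine H.GKdim_eq_top_of_affine D.closed
    ⟨dl [0, 1, 1], ⟨D.dl_011, hcone _ (by simp [Neg])⟩, ?_⟩
    ⟨_, ⟨D.dl_010111_add h4 h, add_mem (hcone _ (by simp [Neg]))
      (Submodule.smul_mem _ _ (hcone _ (by simp [Neg])))⟩, ?_⟩ ?_ ?_ ?_
  · have e0 : shf (wd (degCube 0)) (dl [0, 1, 1] : List (Fin 2) → k) = eps := by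
      funext x; simp [shf_wd, dl, degCube]
    have e1 : shf (wd (degCube 1)) (dl [0, 1, 1]) = (0 : List (Fin 2) → k) := by
      funext x; simp [shf_wd, dl, degCube]
    rw [til_eq_pre _ _ (by simp [dl])]
    simp only [e0, e1, map_zero, pre_zero, add_zero, H.til_eps]
    rfl
  · have e0 : shf (wd (degCube 0)) ((dl [0, 1, 0, 1, 1, 1] : List (Fin 2) → k)
        + (Q 0 1 * (1 + q ^ 2)) • dl [0, 0, 1, 1, 1, 1]) = 0 := by
      funext x; simp [shf_wd, dl, degCube]
    have e1 : shf (wd (degCube 1)) ((dl [0, 1, 0, 1, 1, 1] : List (Fin 2) → k)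
        + (Q 0 1 * (1 + q ^ 2)) • dl [0, 0, 1, 1, 1, 1]) = eps := by
      funext x; simp [shf_wd, dl, degCube]
    rw [til_eq_pre _ _ (by simp [dl])]
    simp only [e0, e1, map_zero, pre_zero, zero_add, H.til_eps]
    rfl
  all_goals
    simp only [degCube, Matrix.cons_val_zero, Matrix.cons_val_one, Matrix.cons_val_fin_one, ha, hb,
      hab]
  · linear_combination (q ^ 3 + 1) * hc
  · linear_combination (q ^ 3 + 1) * hc
  · exact fun h => hq (by linear_combination (q + 1) * (h - q * hc))

end QShuffle

namespace QShuffle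

variable {k : Type*} [Field k]

lemma mem_permutations'_of_dg {w u : List (Fin 2)} (h : dg w = dg u) : w ∈ u.permutations' := by
  rw [List.mem_permutations', List.perm_iff_count]
  intro a
  have := congrFun h a
  simpa [dg] using this

lemma eq_of_dg_001 {f : List (Fin 2) → k} (hf : ∀ w, dg w ≠ dg [0, 0, 1] → f w = 0) :
    f = f [0, 0, 1] • dl [0, 0, 1] + f [0, 1, 0] • dl [0, 1, 0] + f [1, 0, 0] • dl [1, 0, 0] := by
  funext w
  by_cases h : dg w = dg [0, 0, 1]
  · have key : ∀ w ∈ ([0, 0, 1] : List (Fin 2)).permutations',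
      w = [0, 0, 1] ∨ w = [0, 1, 0] ∨ w = [1, 0, 0] := by decide
    rcases key w (mem_permutations'_of_dg h) with rfl | rfl | rfl <;> simp [dl_apply]
  · have h1 : w ≠ [0, 0, 1] := fun e => h (by rw [e])
    have h2 : w ≠ [0, 1, 0] := fun e => h (by rw [e]; decide)
    have h3 : w ≠ [1, 0, 0] := fun e => h (by rw [e]; decide)
    simp [dl_apply, hf w h, h1, h2, h3]

lemma eq_of_dg_0111 {f : List (Fin 2) → k} (hf : ∀ w, dg w ≠ dg [0, 1, 1, 1] → f w = 0) :
    f = f [0, 1, 1, 1] • dl [0, 1, 1, 1] + f [1, 0, 1, 1] • dl [1, 0, 1, 1]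
      + f [1, 1, 0, 1] • dl [1, 1, 0, 1] + f [1, 1, 1, 0] • dl [1, 1, 1, 0] := by
  funext w
  by_cases h : dg w = dg [0, 1, 1, 1]
  · have key : ∀ w ∈ ([0, 1, 1, 1] : List (Fin 2)).permutations', w = [0, 1, 1, 1] ∨
      w = [1, 0, 1, 1] ∨ w = [1, 1, 0, 1] ∨ w = [1, 1, 1, 0] := by decide
    rcases key w (mem_permutations'_of_dg h) with rfl | rfl | rfl | rfl <;> simp [dl_apply]
  · have h1 : w ≠ [0, 1, 1, 1] := fun e => h (by rw [e])
    have h2 : w ≠ [1, 0, 1, 1] := fun e => h (by rw [e]; decide)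
    have h3 : w ≠ [1, 1, 0, 1] := fun e => h (by rw [e]; decide)
    have h4 : w ≠ [1, 1, 1, 0] := fun e => h (by rw [e]; decide)
    simp [dl_apply, hf w h, h1, h2, h3, h4]

lemma eq_111_of_dg {w : List (Fin 2)} (h : dg w = dg [1, 1, 1]) : w = [1, 1, 1] :=
  (by decide : ∀ w ∈ ([1, 1, 1] : List (Fin 2)).permutations', w = [1, 1, 1]) w
    (mem_permutations'_of_dg h)

lemma wd_mem_piece_of_dg {w u : List (Fin 2)} (h : dg w = dg u) : wd w ∈ piece k (dg u) :=
  h ▸ wd_mem_piece w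

lemma x112_mem_piece (Q : Fin 2 → Fin 2 → k) (q : k) : x112 Q q ∈ piece k (dg [0, 0, 1]) := by
  refine add_mem (sub_mem (wd_mem_piece _) (Submodule.smul_mem _ _ ?_)) (Submodule.smul_mem _ _ ?_)
  · exact wd_mem_piece_of_dg (by decide)
  · exact wd_mem_piece_of_dg (by decide)

/-- The element `x_{2221}`. -/
def x2221 (Q : Fin 2 → Fin 2 → k) (q : k) : FreeAlgebra k (Fin 2) :=
  wd [1, 1, 1, 0] - ((1 + q + q ^ 2) * Q 1 0) • wd [1, 1, 0, 1]
    + (q * (1 + q + q ^ 2) * Q 1 0 ^ 2) • wd [1, 0, 1, 1] - (q ^ 3 * Q 1 0 ^ 3) • wd [0, 1, 1, 1]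

lemma x2221_mem_piece (Q : Fin 2 → Fin 2 → k) (q : k) :
    x2221 Q q ∈ piece k (dg [0, 1, 1, 1]) := by
  refine sub_mem (add_mem (sub_mem ?_ (Submodule.smul_mem _ _ ?_)) (Submodule.smul_mem _ _ ?_))
    (Submodule.smul_mem _ _ (wd_mem_piece _))
  · exact wd_mem_piece_of_dg (by decide)
  · exact wd_mem_piece_of_dg (by decide)
  · exact wd_mem_piece_of_dg (by decide)

lemma qb_add_right (Q : Fin 2 → Fin 2 → kˣ) (α β γ : Fin 2 → ℤ) :
    qb Q α (β + γ) = qb Q α β * qb Q α γ := by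
  simp [qb, mul_add, zpow_add, Finset.prod_mul_distrib]

lemma qb_ee_ee (Q : Fin 2 → Fin 2 → kˣ) (a b : Fin 2) : qb Q (ee a) (ee b) = Q a b := by
  fin_cases a <;> fin_cases b <;> simp [qb, ee, Fin.prod_univ_two]

variable {q : kˣ} {Q : Fin 2 → Fin 2 → kˣ}

lemma brk_eq_x112 (h0 : Q 0 0 = q ^ 2) :
    (brk Q (gen k 0) (brk Q (gen k 0) (gen k 1))).1 = x112 (fun a b => (Q a b : k)) q := by
  simp only [brk, gen, qb_add_right, qb_ee_ee, h0, x112, wd_cons, wd_nil, Units.val_mul,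
    Units.val_pow_eq_pow_val, mul_sub, sub_mul, smul_sub, mul_smul_comm, smul_mul_assoc, smul_smul,
    mul_assoc, mul_one]
  module

lemma brk_eq_x2221 (h1 : Q 1 1 = q) :
    (brk Q (gen k 1) (brk Q (gen k 1) (brk Q (gen k 1) (gen k 0)))).1
      = x2221 (fun a b => (Q a b : k)) q := by
  simp only [brk, gen, qb_add_right, qb_ee_ee, h1, x2221, wd_cons, wd_nil, Units.val_mul,
    Units.val_pow_eq_pow_val, mul_sub, sub_mul, smul_sub, mul_smul_comm, smul_mul_assoc, smul_smul,
    mul_assoc, mul_one]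
  module

end QShuffle

open QShuffle

/-- Let `q` be of Cartan type `B_2`: `q_11 = q²`, `q_22 = q`,
`q_12 q_21 = q⁻²`, with `N = ord q > 2` finite.  Then in any pre-Nichols algebra of
`q` with finite GK-dimension the quantum Serre relations `(ad_c x_1)² x_2 = 0` and
`(ad_c x_2)³ x_1 = 0` hold, i.e. the distinguished pre-Nichols algebra of type `B_2`
is eminent. -/
theorem stmt17 {k : Type*} [Field k] [CharZero k] [IsAlgClosed k]
    (q : kˣ) (hfin : orderOf q ≠ 0) (hN : 2 < orderOf q)
    (Q : Fin 2 → Fin 2 → kˣ)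
    (hQ11 : Q 0 0 = q ^ 2) (hQ22 : Q 1 1 = q)
    (hQo : Q 0 1 * Q 1 0 = q ^ (-2 : ℤ))
    (m2 : (FreeAlgebra k (Fin 2) ⊗[k] FreeAlgebra k (Fin 2))
      →ₗ[k] (FreeAlgebra k (Fin 2) ⊗[k] FreeAlgebra k (Fin 2))
      →ₗ[k] (FreeAlgebra k (Fin 2) ⊗[k] FreeAlgebra k (Fin 2)))
    (hm2 : ∀ (a b c d : FreeAlgebra k (Fin 2)) (β γ : Fin 2 → ℤ),
      b ∈ piece k β → c ∈ piece k γ →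
      m2 (a ⊗ₜ b) (c ⊗ₜ d) = (qb Q β γ : k) • ((a * c) ⊗ₜ[k] (b * d)))
    (Δ : FreeAlgebra k (Fin 2) →ₗ[k] FreeAlgebra k (Fin 2) ⊗[k] FreeAlgebra k (Fin 2))
    (hΔmul : ∀ x y, Δ (x * y) = m2 (Δ x) (Δ y))
    (hΔone : Δ 1 = 1 ⊗ₜ 1)
    (hΔgen : ∀ a : Fin 2, Δ (FreeAlgebra.ι k a)
      = FreeAlgebra.ι k a ⊗ₜ 1 + 1 ⊗ₜ FreeAlgebra.ι k a)
    {B : Type*} [Ring B] [Algebra k B]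
    (π : FreeAlgebra k (Fin 2) →ₐ[k] B)
    (hsurj : Function.Surjective π)
    (hhom : ∀ x, π x = 0 → x ∈ Submodule.span k {y | π y = 0 ∧ ∃ d, y ∈ piece k d})
    (htriv : ∀ (a : k) (v : Fin 2 → k),
      π (algebraMap k (FreeAlgebra k (Fin 2)) a + ∑ s, v s • FreeAlgebra.ι k s) = 0 →
      a = 0 ∧ v = 0)
    (hhopf : ∀ x, π x = 0 →
      TensorProduct.map π.toLinearMap π.toLinearMap (Δ x) = 0)
    (hGK : GKdim k B ≠ ⊤) :
    π (brk Q (gen k 0) (brk Q (gen k 0) (gen k 1))).1 = 0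
    ∧ π (brk Q (gen k 1) (brk Q (gen k 1) (brk Q (gen k 1) (gen k 0)))).1 = 0 := by
  have hpow (n : ℕ) (hn : 0 < n) (h : (q : k) ^ n = 1) : orderOf q ≤ n :=
    orderOf_le_of_pow_eq_one hn (Units.ext (by simpa using h))
  have hz : (Q 0 1 : k) * Q 1 0 * (q : k) ^ 2 = 1 := by
    have : Q 0 1 * Q 1 0 * q ^ 2 = 1 := by
      rw [hQo, ← zpow_natCast, ← zpow_add]; simp
    simpa using congrArg Units.val this
  have D : IsB2 (fun a b => (Q a b : k)) (q : k) (dualFns π) :=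
    { closed := dualFns_shClosed hsurj hhom htriv hm2 hΔmul hΔone hΔgen hhopf
      h00 := by simp [hQ11]
      h11 := by simp [hQ22]
      hz := hz
      hq := fun h => absurd (hpow 2 two_pos h) (by omega)
      m0 := dl_singleton_mem_dualFns hsurj hhom htriv 0
      m1 := dl_singleton_mem_dualFns hsurj hhom htriv 1 }
  rw [brk_eq_x112 hQ11, brk_eq_x2221 hQ22]
  constructor
  · by_contra hu
    obtain ⟨f, hf, hfd, hfu⟩ := exists_homogeneous hsurj hhom (x112_mem_piece _ _) hu
    rw [eq_of_dg_001 hfd] at hf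
    have h0 : f [0, 0, 1] - ((q : k) ^ 2 * Q 0 1 + Q 0 1) * f [0, 1, 0]
        + (q : k) ^ 2 * (Q 0 1 : k) ^ 2 * f [1, 0, 0] ≠ 0 := by
      intro h
      apply hfu
      simp only [x112, map_add, map_sub, map_smul, lin_wd, smul_eq_mul]
      linear_combination h
    by_cases h4 : (q : k) ^ 4 = 1
    · exact hGK (GKdim_eq_top_of_x112 D h4 hf h0)
    · exact hGK (GKdim_eq_top_of_dl_010 D h4 (D.dl_010 hf h0))
  · by_contra hw
    obtain ⟨f, hf, hfd, hfw⟩ := exists_homogeneous hsurj hhom (x2221_mem_piece _ _) hw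
    rw [eq_of_dg_0111 hfd] at hf
    have h0 : f [0, 1, 1, 1] - (Q 0 1 : k) * (1 + q + (q : k) ^ 2) * f [1, 0, 1, 1]
        + q * (Q 0 1 : k) ^ 2 * (1 + q + (q : k) ^ 2) * f [1, 1, 0, 1]
        - (q : k) ^ 3 * (Q 0 1 : k) ^ 3 * f [1, 1, 1, 0] ≠ 0 := by
      intro h
      apply hfw
      simp only [x2221, map_add, map_sub, map_smul, lin_wd, smul_eq_mul]
      grind
    by_cases h3 : (q : k) ^ 3 = 1
    · have hq1 : (q : k) ≠ 1 := fun h => D.hq (by rw [h, one_pow])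
      have h3' : 1 + (q : k) + (q : k) ^ 2 = 0 :=
        mul_left_cancel₀ (sub_ne_zero.2 hq1) (by linear_combination h3)
      have h111 : π (wd [1, 1, 1]) ≠ 0 := by
        intro h
        apply hw
        have e1 : (wd [1, 1, 1, 0] : FreeAlgebra k (Fin 2)) = wd [1, 1, 1] * wd [0] :=
          wd_append [1, 1, 1] [0]
        have e2 : (wd [0, 1, 1, 1] : FreeAlgebra k (Fin 2)) = wd [0] * wd [1, 1, 1] :=
          wd_append [0] [1, 1, 1]
        simp [x2221, h3', e1, e2, h]
      exact hGK (GKdim_eq_top_of_cube D h3' (D.dl_0111_of_cube h3' hf h0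
        (dl_mem_dualFns_of_unique hsurj hhom _ h111 fun w => eq_111_of_dg)))
    · exact hGK (GKdim_eq_top_of_dl_0111 D h3 (D.dl_0111
        (fun h => h3 (by linear_combination ((q : k) - 1) * h)) hf h0))

end
end

section
/- Twist equivalence: let q = (q_ij) and p = (p_ij) be braiding matrices with q_ii = p_ii and q_ij q_ji = p_ij p_ji for all i, j. Then there is an isomorphism of posets between the sets of Z^θ-graded finite GK-dimensional pre-Nichols algebras of (V, c^q) and of (W, c^p); in particular, for each Z^θ-homogeneous Hopf ideal I of T(V), one has GK-dim T(V)/I = GK-dim T(V)_σ/I where σ is the 2-cocycle σ(α_i, α_j) = p_ij q_ij^{-1} for i ≤ j and 1 otherwise. -/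
open scoped TensorProduct ENNReal

noncomputable section

namespace Stmt18

variable (k : Type*) [Field k] {θ : ℕ}

/-- The Gelfand–Kirillov dimension of a `k`-algebra `A`. -/
def GKdim (k A : Type*) [Field k] [Ring A] [Algebra k A] : ℝ≥0∞ :=
  ⨆ S : Finset A,
    Filter.limsup
      (fun n : ℕ => ENNReal.ofReal (Real.logb n
        (Module.finrank k ((Submodule.span k (insert (1 : A) (S : Set A))) ^ n : Submodule k A))))
      Filter.atTop

/-- The `ℤ^θ`-homogeneous component of degree `d` of the free (tensor) algebra. -/
def piece (θ : ℕ) (d : Fin θ → ℤ) : Submodule k (FreeAlgebra k (Fin θ)) :=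
  Submodule.span k {y | ∃ l : List (Fin θ),
    (∀ i, (l.count i : ℤ) = d i) ∧ y = (l.map (FreeAlgebra.ι k)).prod}

/-- A `ℤ^θ`-homogeneous braided Hopf ideal of `T(V)` with trivial intersection with
`k ⊕ V`, whose quotient pre-Nichols algebra has finite GK-dimension:  these are
exactly the defining ideals of the `ℤ^θ`-graded finite GK-dimensional pre-Nichols
algebras. -/
def Good (Δ : FreeAlgebra k (Fin θ) →ₗ[k] FreeAlgebra k (Fin θ) ⊗[k] FreeAlgebra k (Fin θ))
    (I : Submodule k (FreeAlgebra k (Fin θ))) : Prop :=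
  (∀ (a x : FreeAlgebra k (Fin θ)), x ∈ I → a * x ∈ I) ∧
  (∀ (a x : FreeAlgebra k (Fin θ)), x ∈ I → x * a ∈ I) ∧
  (∀ x ∈ I, x ∈ Submodule.span k {y | y ∈ I ∧ ∃ d, y ∈ piece k θ d}) ∧
  (∀ (a : k) (v : Fin θ → k),
    (algebraMap k (FreeAlgebra k (Fin θ)) a + ∑ s, v s • FreeAlgebra.ι k s) ∈ I →
    a = 0 ∧ v = 0) ∧
  (∀ x ∈ I, Δ x ∈ Submodule.span k
    {t | ∃ a b : FreeAlgebra k (Fin θ), (a ∈ I ∨ b ∈ I) ∧ t = a ⊗ₜ[k] b}) ∧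
  GKdim k (RingQuot (fun a b : FreeAlgebra k (Fin θ) => a - b ∈ I)) ≠ ⊤

/-- The bicharacter on `ℤ^θ` extending a braiding matrix `Q`. -/
def qb (Q : Fin θ → Fin θ → kˣ) (α β : Fin θ → ℤ) : kˣ :=
  ∏ a, ∏ b, Q a b ^ (α a * β b)

/-- The bimultiplicative extension of the 2-cocycle
`σ(α_i,α_j) = p_ij q_ij⁻¹` for `i ≤ j` and `1` otherwise. -/
def σb (Q P : Fin θ → Fin θ → kˣ) (α β : Fin θ → ℤ) : kˣ :=
  ∏ i, ∏ j, (if i ≤ j then P i j * (Q i j)⁻¹ else 1) ^ (α i * β j)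

end Stmt18

open Stmt18

namespace Stmt18

section GKdim

variable {K A B : Type*} [Field K] [Ring A] [Algebra K A] [Ring B] [Algebra K B]

lemma pow_mono_of_one_mem {U : Submodule K A} (h1 : (1 : A) ∈ U) :
    Monotone fun n : ℕ => U ^ n :=
  fun _ _ h => pow_le_pow_right₀ (Submodule.one_le.2 h1) h

lemma exists_finset_subset_pow {U : Submodule K A} (h1 : (1 : A) ∈ U)
    (hgen : ∀ a : A, ∃ n : ℕ, a ∈ U ^ n) (S : Finset A) :
    ∃ m : ℕ, (S : Set A) ⊆ (U ^ m : Submodule K A) := by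
  choose f hf using hgen
  exact ⟨S.sup f, fun a ha => pow_mono_of_one_mem h1 (Finset.le_sup (f := f) ha) (hf a)⟩

lemma logb_natCast_mono (n : ℕ) {a b : ℕ} (hab : a ≤ b) :
    Real.logb n a ≤ Real.logb n b := by
  rcases Nat.eq_zero_or_pos a with rfl | ha
  · simpa [Real.logb] using div_nonneg (Real.log_natCast_nonneg b) (Real.log_natCast_nonneg n)
  · exact div_le_div_of_nonneg_right
      (Real.log_le_log (by exact_mod_cast ha) (by exact_mod_cast hab))
      (Real.log_natCast_nonneg n)

lemma GKdim_le_of_finrank_pow_le {U : Submodule K A} {U' : Submodule K B}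
    (hU : U.FG) (hU' : U'.FG) (h1 : (1 : A) ∈ U) (h1' : (1 : B) ∈ U')
    (hgen : ∀ a : A, ∃ n : ℕ, a ∈ U ^ n)
    (hle : ∀ n : ℕ, Module.finrank K (U ^ n : Submodule K A)
      ≤ Module.finrank K (U' ^ n : Submodule K B)) :
    GKdim K A ≤ GKdim K B := by
  refine iSup_le fun S => ?_
  obtain ⟨m, hm⟩ := exists_finset_subset_pow h1 hgen S
  obtain ⟨T, hT⟩ := hU'.pow m
  refine le_trans (Filter.limsup_le_limsup (Filter.Eventually.of_forall fun n => ?_))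
    (le_iSup (fun T : Finset B => Filter.limsup (fun n : ℕ => ENNReal.ofReal (Real.logb n
      (Module.finrank K
        ((Submodule.span K (insert (1 : B) (T : Set B))) ^ n : Submodule K B)))) Filter.atTop) T)
  refine ENNReal.ofReal_le_ofReal (logb_natCast_mono n ?_)
  have hone : (1 : A) ∈ U ^ m := Submodule.one_le.1 (one_le_pow₀ (Submodule.one_le.2 h1))
  have hone' : (1 : B) ∈ U' ^ m := Submodule.one_le.1 (one_le_pow₀ (Submodule.one_le.2 h1'))
  have hS : Submodule.span K (insert (1 : A) (S : Set A)) ≤ U ^ m :=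
    Submodule.span_le.2 (Set.insert_subset hone hm)
  have hT' : Submodule.span K (insert (1 : B) (T : Set B)) = U' ^ m := by
    rw [Submodule.span_insert_eq_span (by rwa [hT]), hT]
  rw [hT', ← pow_mul]
  refine le_trans ?_ (hle (m * n))
  have : Module.Finite K (U ^ (m * n) : Submodule K A) :=
    Module.Finite.iff_fg.2 (hU.pow _)
  exact Submodule.finrank_mono (by rw [pow_mul]; exact pow_le_pow_left' hS n)

end GKdim

section Quotient

variable {K A : Type*} [Field K] [Ring A] [Algebra K A]

lemma ker_mkAlgHom_ringQuot (I : Submodule K A)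
    (hl : ∀ a x : A, x ∈ I → a * x ∈ I) (hr : ∀ a x : A, x ∈ I → x * a ∈ I) :
    LinearMap.ker (RingQuot.mkAlgHom K (fun a b : A => a - b ∈ I)).toLinearMap = I := by
  let T : TwoSidedIdeal A := TwoSidedIdeal.mk' I I.zero_mem I.add_mem I.neg_mem
    (fun {x y} h => hl x y h) (fun {x y} h => hr y x h)
  have hT : ∀ x, x ∈ T ↔ x ∈ I := fun x => TwoSidedIdeal.mem_mk' _ _ _ _ _ _ x
  have hmk : ∀ x y, T.ringCon.mk' x = T.ringCon.mk' y ↔ x - y ∈ I := fun x y => by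
    rw [← hT, ← TwoSidedIdeal.rel_iff]
    exact RingCon.eq _
  ext x
  rw [LinearMap.mem_ker, AlgHom.toLinearMap_apply]
  constructor
  · intro hx
    rw [← AlgHom.coe_toRingHom, RingQuot.mkAlgHom_coe] at hx
    let L : RingQuot (fun a b : A => a - b ∈ I) →+* T.ringCon.Quotient :=
      RingQuot.lift ⟨T.ringCon.mk', fun x y h => (hmk x y).2 h⟩
    have := congrArg L hx
    rw [RingQuot.lift_mkRingHom_apply, map_zero L, ← map_zero T.ringCon.mk', hmk] at this
    simpa using this
  · intro hx
    rw [RingQuot.mkAlgHom_rel (y := 0) K (by simpa using hx), map_zero]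

end Quotient

section Homogeneous

variable {k : Type*} [Field k] {θ : ℕ}

/-- A subspace of the free algebra spanned by its `ℤ^θ`-homogeneous elements. -/
def IsHom (M : Submodule k (FreeAlgebra k (Fin θ))) : Prop :=
  ∀ x ∈ M, x ∈ Submodule.span k {y | y ∈ M ∧ ∃ d, y ∈ piece k θ d}

lemma IsHom.span_eq {M : Submodule k (FreeAlgebra k (Fin θ))} (h : IsHom M) :
    Submodule.span k {y | y ∈ M ∧ ∃ d, y ∈ piece k θ d} = M :=
  le_antisymm (Submodule.span_le.2 fun _ hy => hy.1) h

lemma isHom_span {S : Set (FreeAlgebra k (Fin θ))} (h : ∀ y ∈ S, ∃ d, y ∈ piece k θ d) :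
    IsHom (Submodule.span k S) := by
  intro x hx
  refine Submodule.span_mono ?_ hx
  exact fun y hy => ⟨Submodule.subset_span hy, h y hy⟩

/-- The `ℤ^θ`-degree of a word. -/
def wdeg (l : List (Fin θ)) : Fin θ → ℤ := fun i => l.count i

/-- The monomial of the free algebra attached to a word. -/
def word (k : Type*) [Field k] {θ : ℕ} (l : List (Fin θ)) : FreeAlgebra k (Fin θ) :=
  (l.map (FreeAlgebra.ι k)).prod

lemma word_nil : word k ([] : List (Fin θ)) = 1 := rfl

lemma word_cons (i : Fin θ) (l : List (Fin θ)) :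
    word k (i :: l) = FreeAlgebra.ι k i * word k l := by simp [word]

lemma word_singleton (i : Fin θ) : word k [i] = FreeAlgebra.ι k i := by simp [word]

lemma word_append (u v : List (Fin θ)) : word k (u ++ v) = word k u * word k v := by
  simp [word]

lemma wdeg_nil : wdeg ([] : List (Fin θ)) = 0 := by ext; simp [wdeg]

lemma wdeg_append (u v : List (Fin θ)) : wdeg (u ++ v) = wdeg u + wdeg v := by
  ext; simp [wdeg]

lemma wdeg_cons (i : Fin θ) (v : List (Fin θ)) : wdeg (i :: v) = wdeg [i] + wdeg v :=
  wdeg_append [i] v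

lemma word_mem_piece (l : List (Fin θ)) : word k l ∈ piece k θ (wdeg l) :=
  Submodule.subset_span ⟨l, fun _ => rfl, rfl⟩

lemma one_mem_piece : (1 : FreeAlgebra k (Fin θ)) ∈ piece k θ 0 := by
  simpa [word_nil, wdeg_nil] using word_mem_piece (k := k) ([] : List (Fin θ))

lemma piece_induction {d : Fin θ → ℤ} {p : FreeAlgebra k (Fin θ) → Prop}
    (hw : ∀ l, wdeg l = d → p (word k l)) (h0 : p 0) (hadd : ∀ x y, p x → p y → p (x + y))
    (hsmul : ∀ (c : k) x, p x → p (c • x)) {x : FreeAlgebra k (Fin θ)} (hx : x ∈ piece k θ d) :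
    p x := by
  refine Submodule.span_induction ?_ h0 (fun x y _ _ => hadd x y) (fun c x _ => hsmul c x) hx
  rintro y ⟨l, hl, rfl⟩
  exact hw l (funext hl)

lemma mul_mem_piece {d e : Fin θ → ℤ} {x y : FreeAlgebra k (Fin θ)}
    (hx : x ∈ piece k θ d) (hy : y ∈ piece k θ e) : x * y ∈ piece k θ (d + e) := by
  refine piece_induction (p := fun x => x * y ∈ piece k θ (d + e)) (fun l hl => ?_)
    (by simp) (fun a b ha hb => by simpa [add_mul] using add_mem ha hb)
    (fun c a ha => by simpa using Submodule.smul_mem _ c ha) hx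
  refine piece_induction (p := fun y => word k l * y ∈ piece k θ (d + e)) (fun l' hl' => ?_)
    (by simp) (fun a b ha hb => by simpa [mul_add] using add_mem ha hb)
    (fun c a ha => by simpa using Submodule.smul_mem _ c ha) hy
  rw [← word_append, ← hl, ← hl', ← wdeg_append]
  exact word_mem_piece _

/-- The basis of words of the free algebra. -/
def wordBasis (k : Type*) [Field k] (θ : ℕ) :
    Module.Basis (List (Fin θ)) k (FreeAlgebra k (Fin θ)) :=
  (FreeAlgebra.basisFreeMonoid k (Fin θ)).reindex FreeMonoid.toList

lemma wordBasis_apply (l : List (Fin θ)) : wordBasis k θ l = word k l := by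
  simp [wordBasis, FreeAlgebra.basisFreeMonoid, FreeAlgebra.equivMonoidAlgebraFreeMonoid, word,
    FreeMonoid.lift_apply]

lemma span_range_word : Submodule.span k (Set.range (word k (θ := θ))) = ⊤ := by
  rw [← (wordBasis k θ).span_eq]
  exact congrArg _ (congrArg _ (funext fun l => (wordBasis_apply l).symm))

lemma isHom_top : IsHom (⊤ : Submodule k (FreeAlgebra k (Fin θ))) := by
  rw [← span_range_word]
  exact isHom_span (by rintro _ ⟨l, rfl⟩; exact ⟨_, word_mem_piece l⟩)

lemma IsHom.mul {M N : Submodule k (FreeAlgebra k (Fin θ))} (hM : IsHom M) (hN : IsHom N) :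
    IsHom (M * N) := by
  rw [← hM.span_eq, ← hN.span_eq, Submodule.span_mul_span]
  refine isHom_span ?_
  rintro _ ⟨x, ⟨-, d, hx⟩, y, ⟨-, e, hy⟩, rfl⟩
  exact ⟨_, mul_mem_piece hx hy⟩

/-- The span of `1` and the generators. -/
def genSpan (k : Type*) [Field k] (θ : ℕ) : Submodule k (FreeAlgebra k (Fin θ)) :=
  Submodule.span k (insert 1 (Set.range (FreeAlgebra.ι k)))

lemma isHom_genSpan : IsHom (genSpan k θ) := by
  refine isHom_span ?_
  rintro _ (rfl | ⟨i, rfl⟩)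
  · exact ⟨_, one_mem_piece⟩
  · exact ⟨_, word_singleton (k := k) i ▸ word_mem_piece [i]⟩

lemma one_mem_genSpan : (1 : FreeAlgebra k (Fin θ)) ∈ genSpan k θ :=
  Submodule.subset_span (Set.mem_insert _ _)

lemma genSpan_fg : (genSpan k θ).FG :=
  Submodule.fg_span ((Set.finite_range _).insert _)

lemma isHom_genSpan_pow (n : ℕ) : IsHom (genSpan k θ ^ n) := by
  induction n with
  | zero =>
    rw [pow_zero, Submodule.one_eq_span]
    exact isHom_span (by rintro _ rfl; exact ⟨_, one_mem_piece⟩)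
  | succ n ih => rw [pow_succ]; exact ih.mul isHom_genSpan

lemma exists_mem_genSpan_pow (x : FreeAlgebra k (Fin θ)) : ∃ n : ℕ, x ∈ genSpan k θ ^ n := by
  have hx : x ∈ Submodule.span k (Set.range (word k (θ := θ))) := by simp [span_range_word]
  induction hx using Submodule.span_induction with
  | mem y hy =>
    obtain ⟨l, rfl⟩ := hy
    refine ⟨l.length, ?_⟩
    induction l with
    | nil => simp [word_nil, Submodule.one_eq_span]
    | cons i l ih =>
      rw [word_cons, List.length_cons, pow_succ']
      exact Submodule.mul_mem_mul
        (Submodule.subset_span (Set.mem_insert_of_mem _ (Set.mem_range_self i))) ih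
  | zero => exact ⟨0, zero_mem _⟩
  | add y z _ _ hy hz =>
    obtain ⟨m, hm⟩ := hy
    obtain ⟨n, hn⟩ := hz
    have mono := pow_mono_of_one_mem (one_mem_genSpan (k := k) (θ := θ))
    exact ⟨max m n, add_mem (mono (le_max_left m n) hm) (mono (le_max_right m n) hn)⟩
  | smul c y _ hy =>
    obtain ⟨n, hn⟩ := hy
    exact ⟨n, Submodule.smul_mem _ c hn⟩

end Homogeneous

section TwistedMul

variable {k : Type*} [Field k] {θ : ℕ} {B : Type*} [Ring B] [Algebra k B]
  (ρ : FreeAlgebra k (Fin θ) ≃ₗ[k] B) (c : (Fin θ → ℤ) → (Fin θ → ℤ) → kˣ)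

/-- `ρ` is multiplicative up to the scalars `c` on homogeneous elements. -/
def IsTwistedMul : Prop :=
  ∀ (α β : Fin θ → ℤ) (x y : FreeAlgebra k (Fin θ)), x ∈ piece k θ α → y ∈ piece k θ β →
    ρ x * ρ y = (c α β : k) • ρ (x * y)

variable {ρ c}

lemma IsTwistedMul.map_mul (h : IsTwistedMul ρ c) {M N : Submodule k (FreeAlgebra k (Fin θ))}
    (hM : IsHom M) (hN : IsHom N) :
    (M * N).map ρ.toLinearMap = M.map ρ.toLinearMap * N.map ρ.toLinearMap := by
  rw [← hM.span_eq, ← hN.span_eq, Submodule.span_mul_span, Submodule.map_span,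
    Submodule.map_span, Submodule.map_span, Submodule.span_mul_span]
  apply le_antisymm <;> rw [Submodule.span_le]
  · rintro _ ⟨_, ⟨x, ⟨hxM, d, hx⟩, y, ⟨hyN, e, hy⟩, rfl⟩, rfl⟩
    have : ρ (x * y) = ((c d e)⁻¹ : kˣ) • (ρ x * ρ y) := by
      rw [h d e x y hx hy, ← Units.smul_def, inv_smul_smul]
    change ρ (x * y) ∈ _
    rw [this]
    exact Submodule.smul_mem _ _ (Submodule.subset_span
      ⟨_, ⟨x, ⟨hxM, d, hx⟩, rfl⟩, _, ⟨y, ⟨hyN, e, hy⟩, rfl⟩, rfl⟩)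
  · rintro _ ⟨_, ⟨x, ⟨hxM, d, hx⟩, rfl⟩, _, ⟨y, ⟨hyN, e, hy⟩, rfl⟩, rfl⟩
    change ρ x * ρ y ∈ _
    rw [h d e x y hx hy]
    exact Submodule.smul_mem _ _ (Submodule.subset_span
      ⟨_, ⟨x, ⟨hxM, d, hx⟩, y, ⟨hyN, e, hy⟩, rfl⟩, rfl⟩)

lemma IsTwistedMul.map_one (h : IsTwistedMul ρ c) (hc : ∀ β, c 0 β = 1) : ρ 1 = 1 := by
  have key : ∀ x, ρ 1 * ρ x = ρ x := fun x => by
    have hx := isHom_top x (Submodule.mem_top : x ∈ (⊤ : Submodule k _))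
    induction hx using Submodule.span_induction with
    | mem y hy =>
      obtain ⟨-, d, hy⟩ := hy
      simpa [hc] using h 0 d 1 y one_mem_piece hy
    | zero => simp
    | add y z _ _ hy hz => rw [map_add, mul_add, hy, hz]
    | smul c y _ hy => rw [map_smul, mul_smul_comm, hy]
  simpa using key (ρ.symm 1)

lemma IsTwistedMul.map_genSpan_pow (h : IsTwistedMul ρ c) (h1 : ρ 1 = 1) (n : ℕ) :
    (genSpan k θ ^ n).map ρ.toLinearMap = (genSpan k θ).map ρ.toLinearMap ^ n := by
  induction n with
  | zero => simp [Submodule.one_eq_span, Submodule.map_span, h1]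
  | succ n ih => rw [pow_succ, pow_succ, h.map_mul (isHom_genSpan_pow n) isHom_genSpan, ih]

lemma IsTwistedMul.mul_mem_map (h : IsTwistedMul ρ c) {I : Submodule k (FreeAlgebra k (Fin θ))}
    (hl : ∀ a x, x ∈ I → a * x ∈ I) (hI : IsHom I) (a x : B) (hx : x ∈ I.map ρ.toLinearMap) :
    a * x ∈ I.map ρ.toLinearMap := by
  have hle : ⊤ * I ≤ I := Submodule.mul_le.2 fun a _ x hx => hl a x hx
  refine Submodule.map_mono hle ?_
  rw [h.map_mul isHom_top hI]
  exact Submodule.mul_mem_mul ⟨ρ.symm a, trivial, by simp⟩ hx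

lemma IsTwistedMul.mul_mem_map_right (h : IsTwistedMul ρ c)
    {I : Submodule k (FreeAlgebra k (Fin θ))}
    (hr : ∀ a x, x ∈ I → x * a ∈ I) (hI : IsHom I) (a x : B) (hx : x ∈ I.map ρ.toLinearMap) :
    x * a ∈ I.map ρ.toLinearMap := by
  have hle : I * ⊤ ≤ I := Submodule.mul_le.2 fun x hx a _ => hr a x hx
  refine Submodule.map_mono hle ?_
  rw [h.map_mul hI isHom_top]
  exact Submodule.mul_mem_mul hx ⟨ρ.symm a, trivial, by simp⟩

lemma IsTwistedMul.GKdim_ringQuot_eq (h : IsTwistedMul ρ c) (h1 : ρ 1 = 1)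
    {I : Submodule k (FreeAlgebra k (Fin θ))} (hl : ∀ a x, x ∈ I → a * x ∈ I)
    (hr : ∀ a x, x ∈ I → x * a ∈ I) (hI : IsHom I) :
    GKdim k (RingQuot (fun a b : FreeAlgebra k (Fin θ) => a - b ∈ I))
      = GKdim k (RingQuot (fun a b : B => a - b ∈ I.map ρ.toLinearMap)) := by
  set f := RingQuot.mkAlgHom k (fun a b : FreeAlgebra k (Fin θ) => a - b ∈ I) with hf
  set g := RingQuot.mkAlgHom k (fun a b : B => a - b ∈ I.map ρ.toLinearMap) with hg
  have hfs : Function.Surjective f := RingQuot.mkAlgHom_surjective k _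
  have hgs : Function.Surjective g := RingQuot.mkAlgHom_surjective k _
  have hfk : LinearMap.ker f.toLinearMap = I := ker_mkAlgHom_ringQuot I hl hr
  have hgk : LinearMap.ker g.toLinearMap = I.map ρ.toLinearMap :=
    ker_mkAlgHom_ringQuot _ (h.mul_mem_map hl hI) (h.mul_mem_map_right hr hI)
  have hk : LinearMap.ker f.toLinearMap = LinearMap.ker (g.toLinearMap ∘ₗ ρ.toLinearMap) := by
    rw [LinearMap.ker_comp, hgk, hfk, Submodule.comap_map_eq_of_injective ρ.injective]
  let ε := (f.toLinearMap.quotKerEquivOfSurjective hfs).symm ≪≫ₗ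
    Submodule.quotEquivOfEq _ _ hk ≪≫ₗ
    (g.toLinearMap ∘ₗ ρ.toLinearMap).quotKerEquivOfSurjective (hgs.comp ρ.surjective)
  have hε : ∀ x, ε (f x) = g (ρ x) := fun x => by
    have : (f.toLinearMap.quotKerEquivOfSurjective hfs).symm (f x) = Submodule.Quotient.mk x := by
      rw [LinearEquiv.symm_apply_eq]; rfl
    simp only [ε, LinearEquiv.trans_apply, this]
    rfl
  have hpow : ∀ n : ℕ, (((genSpan k θ).map ρ.toLinearMap).map g.toLinearMap) ^ n
      = (((genSpan k θ).map f.toLinearMap) ^ n).map ε.toLinearMap := fun n => by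
    rw [← Submodule.map_pow, ← Submodule.map_pow, ← h.map_genSpan_pow h1, ← Submodule.map_comp,
      ← Submodule.map_comp]
    exact congrArg (fun l => Submodule.map l _) (LinearMap.ext fun x => (hε x).symm)
  have hrank : ∀ n : ℕ, Module.finrank k
      ((((genSpan k θ).map ρ.toLinearMap).map g.toLinearMap) ^ n : Submodule k _)
      = Module.finrank k (((genSpan k θ).map f.toLinearMap) ^ n : Submodule k _) := fun n => by
    rw [hpow]
    exact LinearEquiv.finrank_map_eq ε _
  have hfg := (genSpan_fg (k := k) (θ := θ)).map f.toLinearMap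
  have hfg' := ((genSpan_fg (k := k) (θ := θ)).map ρ.toLinearMap).map g.toLinearMap
  have hone : 1 ∈ (genSpan k θ).map f.toLinearMap := ⟨1, one_mem_genSpan, by simp⟩
  have hone' : 1 ∈ ((genSpan k θ).map ρ.toLinearMap).map g.toLinearMap :=
    ⟨1, ⟨1, one_mem_genSpan, h1⟩, by simp⟩
  have hgen : ∀ a, ∃ n : ℕ, a ∈ (genSpan k θ).map f.toLinearMap ^ n := fun a => by
    obtain ⟨x, rfl⟩ := hfs a
    obtain ⟨n, hn⟩ := exists_mem_genSpan_pow x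
    exact ⟨n, by rw [← Submodule.map_pow]; exact ⟨x, hn, rfl⟩⟩
  refine le_antisymm
    (GKdim_le_of_finrank_pow_le hfg hfg' hone hone' hgen fun n => (hrank n).ge)
    (GKdim_le_of_finrank_pow_le hfg' hfg hone' hone (fun b => ?_) fun n => (hrank n).le)
  obtain ⟨n, hn⟩ := hgen (ε.symm b)
  exact ⟨n, by rw [hpow]; exact ⟨_, hn, by simp⟩⟩

end TwistedMul

section Bicharacter

variable {k : Type*} [Field k] {θ : ℕ}

lemma qb_add_left (M : Fin θ → Fin θ → kˣ) (α β γ : Fin θ → ℤ) :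
    qb k M (α + β) γ = qb k M α γ * qb k M β γ := by
  simp only [qb, ← Finset.prod_mul_distrib, Pi.add_apply, add_mul, zpow_add]

lemma qb_add_right (M : Fin θ → Fin θ → kˣ) (α β γ : Fin θ → ℤ) :
    qb k M α (β + γ) = qb k M α β * qb k M α γ := by
  simp only [qb, ← Finset.prod_mul_distrib, Pi.add_apply, mul_add, zpow_add]

lemma qb_zero_left (M : Fin θ → Fin θ → kˣ) (β : Fin θ → ℤ) : qb k M 0 β = 1 := by
  simp [qb]

lemma qb_zero_right (M : Fin θ → Fin θ → kˣ) (β : Fin θ → ℤ) : qb k M β 0 = 1 := by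
  simp [qb]

lemma qb_inv (M : Fin θ → Fin θ → kˣ) (α β : Fin θ → ℤ) :
    qb k M⁻¹ α β = (qb k M α β)⁻¹ := by
  simp [qb]

/-- The matrix of the cocycle `σ`. -/
def cocycleMatrix (Q P : Fin θ → Fin θ → kˣ) (i j : Fin θ) : kˣ :=
  if i ≤ j then P i j * (Q i j)⁻¹ else 1

lemma σb_eq_qb (Q P : Fin θ → Fin θ → kˣ) (α β : Fin θ → ℤ) :
    σb k Q P α β = qb k (cocycleMatrix Q P) α β := rfl

lemma cocycleMatrix_swap (Q P : Fin θ → Fin θ → kˣ) :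
    cocycleMatrix P Q = (cocycleMatrix Q P)⁻¹ := by
  ext i j
  simp only [cocycleMatrix, Pi.inv_apply]
  split_ifs <;> simp

/-- `M` intertwines the braiding matrices `Q` and `P`. -/
def Intertwines (M Q P : Fin θ → Fin θ → kˣ) : Prop :=
  ∀ i j, Q i j * M i j = P i j * M j i

lemma intertwines_cocycleMatrix {Q P : Fin θ → Fin θ → kˣ} (hdiag : ∀ i, Q i i = P i i)
    (hsym : ∀ i j, Q i j * Q j i = P i j * P j i) : Intertwines (cocycleMatrix Q P) Q P := by
  intro i j
  rcases lt_trichotomy i j with h | rfl | h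
  · simp [cocycleMatrix, h.le, not_le.2 h]
  · rw [hdiag]
  · simp only [cocycleMatrix, h.le, not_le.2 h, if_true, if_false, mul_one]
    rw [← mul_assoc, ← hsym, mul_inv_cancel_right]

lemma Intertwines.qb_mul {M Q P : Fin θ → Fin θ → kˣ} (h : Intertwines M Q P)
    (α β : Fin θ → ℤ) : qb k Q α β * qb k M α β = qb k P α β * qb k M β α := by
  have : qb k M β α = ∏ a, ∏ b, M b a ^ (α a * β b) := by
    rw [qb, Finset.prod_comm]
    simp only [mul_comm]
  rw [this]
  simp only [qb, ← Finset.prod_mul_distrib, ← mul_zpow]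
  exact Finset.prod_congr rfl fun a _ => Finset.prod_congr rfl fun b _ => by rw [h a b]

end Bicharacter

section Twist

variable {k : Type*} [Field k] {θ : ℕ} (M : Fin θ → Fin θ → kˣ)

/-- The scalar by which the twist with bicharacter `M` rescales a word. -/
def wordScalar : List (Fin θ) → kˣ
  | [] => 1
  | i :: l => qb k M (wdeg [i]) (wdeg l) * wordScalar l

lemma wordScalar_append (u v : List (Fin θ)) :
    wordScalar M (u ++ v) = wordScalar M u * wordScalar M v * qb k M (wdeg u) (wdeg v) := by
  induction u with
  | nil => simp [wordScalar, wdeg_nil, qb_zero_left]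
  | cons i u ih =>
    rw [List.cons_append, wordScalar, wordScalar, ih, wdeg_append, qb_add_right,
      wdeg_cons i u, qb_add_left]
    ac_rfl

lemma wordScalar_singleton (i : Fin θ) : wordScalar M [i] = 1 := by
  simp [wordScalar, wdeg_nil, qb_zero_right]

lemma wordScalar_inv (l : List (Fin θ)) : wordScalar M⁻¹ l = (wordScalar M l)⁻¹ := by
  induction l with
  | nil => simp [wordScalar]
  | cons i l ih => rw [wordScalar, wordScalar, ih, qb_inv, mul_inv]

/-- The diagonal rescaling of words by `wordScalar M`. -/
def twistHom : FreeAlgebra k (Fin θ) →ₗ[k] FreeAlgebra k (Fin θ) :=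
  (wordBasis k θ).constr k fun l => (wordScalar M l : k) • word k l

lemma twistHom_word (l : List (Fin θ)) :
    twistHom M (word k l) = (wordScalar M l : k) • word k l := by
  rw [← wordBasis_apply, twistHom, Module.Basis.constr_basis, wordBasis_apply]

lemma twistHom_inv_twistHom (x : FreeAlgebra k (Fin θ)) :
    twistHom M⁻¹ (twistHom M x) = x := by
  have : twistHom M⁻¹ ∘ₗ twistHom M = LinearMap.id :=
    (wordBasis k θ).ext fun l => by
      simp [wordBasis_apply, twistHom_word, wordScalar_inv, smul_smul]
  exact LinearMap.congr_fun this x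

/-- The diagonal rescaling of words by `wordScalar M`, as a linear automorphism. -/
def twist : FreeAlgebra k (Fin θ) ≃ₗ[k] FreeAlgebra k (Fin θ) :=
  LinearEquiv.ofLinearMap (twistHom M) (twistHom M⁻¹)
    (LinearMap.ext fun x => by simpa using twistHom_inv_twistHom M⁻¹ x)
    (LinearMap.ext fun x => twistHom_inv_twistHom M x)

lemma twist_word (l : List (Fin θ)) :
    twist M (word k l) = (wordScalar M l : k) • word k l :=
  twistHom_word M l

lemma twist_inv_twist (x : FreeAlgebra k (Fin θ)) : twist M⁻¹ (twist M x) = x :=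
  twistHom_inv_twistHom M x

lemma map_twist_inv_map_twist (I : Submodule k (FreeAlgebra k (Fin θ))) :
    (I.map (twist M).toLinearMap).map (twist M⁻¹).toLinearMap = I := by
  rw [← Submodule.map_comp]
  convert Submodule.map_id I
  exact LinearMap.ext (twist_inv_twist M)

lemma twist_one : twist M 1 = 1 := by
  simpa [word_nil, wordScalar] using twist_word M []

lemma twist_ι (i : Fin θ) : twist M (FreeAlgebra.ι k i) = FreeAlgebra.ι k i := by
  simpa [word_singleton, wordScalar_singleton] using twist_word M [i]

lemma twist_mem_piece {d : Fin θ → ℤ} {x : FreeAlgebra k (Fin θ)} (hx : x ∈ piece k θ d) :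
    twist M x ∈ piece k θ d := by
  refine piece_induction (p := fun x => twist M x ∈ piece k θ d) (fun l hl => ?_)
    (by simp) (fun a b ha hb => by simpa using add_mem ha hb)
    (fun c a ha => by simpa using Submodule.smul_mem _ c ha) hx
  rw [twist_word, ← hl]
  exact Submodule.smul_mem _ _ (word_mem_piece l)

/-- Two linear maps of two variables that agree on words agree on homogeneous elements. -/
lemma eq_of_eq_on_words {N : Type*} [AddCommGroup N] [Module k N]
    {f g : FreeAlgebra k (Fin θ) →ₗ[k] FreeAlgebra k (Fin θ) →ₗ[k] N} {d e : Fin θ → ℤ}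
    (h : ∀ u v, wdeg u = d → wdeg v = e → f (word k u) (word k v) = g (word k u) (word k v))
    {x y : FreeAlgebra k (Fin θ)} (hx : x ∈ piece k θ d) (hy : y ∈ piece k θ e) :
    f x y = g x y := by
  refine piece_induction (p := fun x => f x y = g x y) (fun u hu => ?_) (by simp)
    (fun a b ha hb => by simp [ha, hb]) (fun c a ha => by simp [ha]) hx
  exact piece_induction (p := fun y => f (word k u) y = g (word k u) y)
    (fun v hv => h u v hu hv) (by simp)
    (fun a b ha hb => by simp [ha, hb]) (fun c a ha => by simp [ha]) hy

lemma isTwistedMul_twist :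
    IsTwistedMul (twist M) (fun α β => (qb k M α β)⁻¹) := by
  intro α β x y hx hy
  refine eq_of_eq_on_words
    (f := (LinearMap.mul k _).compl₁₂ (twist M).toLinearMap (twist M).toLinearMap)
    (g := (((qb k M α β)⁻¹ : kˣ) : k) • (LinearMap.mul k _).compr₂ (twist M).toLinearMap)
    (fun u v hu hv => ?_) hx hy
  simp only [LinearMap.compl₁₂_apply, LinearEquiv.coe_coe, LinearMap.mul_apply', twist_word,
    LinearMap.smul_apply, LinearMap.compr₂_apply, ← word_append, wordScalar_append, hu, hv,
    smul_mul_smul_comm, smul_smul]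
  simp [mul_comm]

/-- The rescaling of pairs of words corresponding to `twist M` under the comultiplication. -/
def twistTensor : FreeAlgebra k (Fin θ) ⊗[k] FreeAlgebra k (Fin θ)
    →ₗ[k] FreeAlgebra k (Fin θ) ⊗[k] FreeAlgebra k (Fin θ) :=
  ((wordBasis k θ).tensorProduct (wordBasis k θ)).constr k fun p =>
    (wordScalar M (p.1 ++ p.2) : k) • (word k p.1 ⊗ₜ[k] word k p.2)

lemma twistTensor_word (u v : List (Fin θ)) :
    twistTensor M (word k u ⊗ₜ[k] word k v)
      = (wordScalar M (u ++ v) : k) • (word k u ⊗ₜ[k] word k v) := by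
  have := ((wordBasis k θ).tensorProduct (wordBasis k θ)).constr_basis k
    (fun p => (wordScalar M (p.1 ++ p.2) : k) • (word k p.1 ⊗ₜ[k] word k p.2)) (u, v)
  rwa [Module.Basis.tensorProduct_apply, wordBasis_apply, wordBasis_apply] at this

lemma twistTensor_tmul {d e : Fin θ → ℤ} {x y : FreeAlgebra k (Fin θ)}
    (hx : x ∈ piece k θ d) (hy : y ∈ piece k θ e) :
    twistTensor M (x ⊗ₜ[k] y) = (qb k M d e : k) • (twist M x ⊗ₜ[k] twist M y) := by
  refine eq_of_eq_on_words
    (f := (TensorProduct.mk k _ _).compr₂ (twistTensor M))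
    (g := (qb k M d e : k) •
      (TensorProduct.mk k _ _).compl₁₂ (twist M).toLinearMap (twist M).toLinearMap)
    (fun u v hu hv => ?_) hx hy
  simp only [LinearMap.compl₁₂_apply, LinearEquiv.coe_coe, TensorProduct.mk_apply, twist_word,
    LinearMap.smul_apply, LinearMap.compr₂_apply, twistTensor_word, wordScalar_append, hu, hv,
    TensorProduct.smul_tmul_smul, smul_smul]
  congr 1
  push_cast
  ring

end Twist

section Comul

variable {k : Type*} [Field k] {θ : ℕ}

/-- `Δ` is the braided comultiplication of the tensor algebra for the braiding matrix `Q`, with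
`m` the braided multiplication of the tensor square. -/
structure IsBraidedComul (Q : Fin θ → Fin θ → kˣ)
    (m : (FreeAlgebra k (Fin θ) ⊗[k] FreeAlgebra k (Fin θ))
      →ₗ[k] (FreeAlgebra k (Fin θ) ⊗[k] FreeAlgebra k (Fin θ))
      →ₗ[k] (FreeAlgebra k (Fin θ) ⊗[k] FreeAlgebra k (Fin θ)))
    (Δ : FreeAlgebra k (Fin θ) →ₗ[k] FreeAlgebra k (Fin θ) ⊗[k] FreeAlgebra k (Fin θ)) :
    Prop where
  mul_tmul : ∀ (a b c d : FreeAlgebra k (Fin θ)) (β γ : Fin θ → ℤ),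
    b ∈ piece k θ β → c ∈ piece k θ γ →
    m (a ⊗ₜ b) (c ⊗ₜ d) = (qb k Q β γ : k) • ((a * c) ⊗ₜ[k] (b * d))
  map_mul : ∀ x y, Δ (x * y) = m (Δ x) (Δ y)
  map_one : Δ 1 = 1 ⊗ₜ 1
  map_ι : ∀ a : Fin θ, Δ (FreeAlgebra.ι k a) = FreeAlgebra.ι k a ⊗ₜ 1 + 1 ⊗ₜ FreeAlgebra.ι k a

variable {M Q P : Fin θ → Fin θ → kˣ}
  {mQ mP : (FreeAlgebra k (Fin θ) ⊗[k] FreeAlgebra k (Fin θ))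
      →ₗ[k] (FreeAlgebra k (Fin θ) ⊗[k] FreeAlgebra k (Fin θ))
      →ₗ[k] (FreeAlgebra k (Fin θ) ⊗[k] FreeAlgebra k (Fin θ))}
  {ΔQ ΔP : FreeAlgebra k (Fin θ) →ₗ[k] FreeAlgebra k (Fin θ) ⊗[k] FreeAlgebra k (Fin θ)}

lemma IsBraidedComul.map_ι_mul (hQ : IsBraidedComul Q mQ ΔQ) (i : Fin θ)
    (u v : List (Fin θ)) :
    mQ (ΔQ (FreeAlgebra.ι k i)) (word k u ⊗ₜ[k] word k v)
      = word k (i :: u) ⊗ₜ[k] word k v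
        + (qb k Q (wdeg [i]) (wdeg u) : k) • (word k u ⊗ₜ[k] word k (i :: v)) := by
  have hi : FreeAlgebra.ι k i ∈ piece k θ (wdeg [i]) :=
    word_singleton (k := k) i ▸ word_mem_piece [i]
  rw [hQ.map_ι, map_add, LinearMap.add_apply, hQ.mul_tmul _ _ _ _ _ _ one_mem_piece
    (word_mem_piece u), hQ.mul_tmul _ _ _ _ _ _ hi (word_mem_piece u)]
  simp [qb_zero_left, word_cons]

/-- The span of the tensors of pairs of words of total degree `d`. -/
def tensorPiece (k : Type*) [Field k] {θ : ℕ} (d : Fin θ → ℤ) :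
    Submodule k (FreeAlgebra k (Fin θ) ⊗[k] FreeAlgebra k (Fin θ)) :=
  Submodule.span k {t | ∃ u v, wdeg u + wdeg v = d ∧ t = word k u ⊗ₜ[k] word k v}

lemma IsBraidedComul.word_mem_tensorPiece (hQ : IsBraidedComul Q mQ ΔQ) (l : List (Fin θ)) :
    ΔQ (word k l) ∈ tensorPiece k (wdeg l) := by
  induction l with
  | nil =>
    rw [word_nil, hQ.map_one]
    exact Submodule.subset_span ⟨[], [], by simp [wdeg_nil], rfl⟩
  | cons i l ih =>
    rw [word_cons, hQ.map_mul]
    generalize ΔQ (word k l) = t at ih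
    refine Submodule.span_induction (p := fun t _ => mQ (ΔQ (FreeAlgebra.ι k i)) t ∈ _)
      ?_ (by simp) (fun a b _ _ ha hb => by simpa using add_mem ha hb)
      (fun c a _ ha => by simpa using Submodule.smul_mem _ c ha) ih
    rintro _ ⟨u, v, huv, rfl⟩
    rw [hQ.map_ι_mul]
    refine add_mem (Submodule.subset_span ⟨i :: u, v, ?_, rfl⟩)
      (Submodule.smul_mem _ _ (Submodule.subset_span ⟨u, i :: v, ?_, rfl⟩))
    · rw [wdeg_cons, wdeg_cons i l, ← huv, add_assoc]
    · rw [wdeg_cons, wdeg_cons i l, ← huv, add_left_comm]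

lemma IsBraidedComul.mul_twistTensor (hQ : IsBraidedComul Q mQ ΔQ) (hP : IsBraidedComul P mP ΔP)
    (hM : Intertwines M Q P) (i : Fin θ) {d : Fin θ → ℤ}
    {t : FreeAlgebra k (Fin θ) ⊗[k] FreeAlgebra k (Fin θ)} (ht : t ∈ tensorPiece k d) :
    (qb k M (wdeg [i]) d : k) • mQ (ΔQ (FreeAlgebra.ι k i)) (twistTensor M t)
      = twistTensor M (mP (ΔP (FreeAlgebra.ι k i)) t) := by
  refine Submodule.span_induction (p := fun t _ =>
    (qb k M (wdeg [i]) d : k) • mQ (ΔQ (FreeAlgebra.ι k i)) (twistTensor M t)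
      = twistTensor M (mP (ΔP (FreeAlgebra.ι k i)) t))
    ?_ (by simp) (fun a b _ _ ha hb => by simp only [map_add, smul_add, ha, hb])
    (fun c a _ ha => by simp only [map_smul, smul_comm _ c, ha]) ht
  rintro _ ⟨u, v, rfl, rfl⟩
  rw [twistTensor_word, map_smul, hQ.map_ι_mul, hP.map_ι_mul, map_add, map_smul,
    twistTensor_word, twistTensor_word]
  simp only [smul_add, smul_smul]
  congr 2
  · rw [List.cons_append, wordScalar, wdeg_append, Units.val_mul]
  · norm_cast
    rw [wordScalar_append, wordScalar_append, wordScalar, wdeg_cons i v, qb_add_right,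
      qb_add_right]
    calc _ = (qb k Q (wdeg [i]) (wdeg u) * qb k M (wdeg [i]) (wdeg u)) *
          (qb k M (wdeg [i]) (wdeg v) * wordScalar M u * wordScalar M v
            * qb k M (wdeg u) (wdeg v)) := by ac_rfl
      _ = _ := by rw [hM.qb_mul]; ac_rfl

lemma IsBraidedComul.comul_twist (hQ : IsBraidedComul Q mQ ΔQ) (hP : IsBraidedComul P mP ΔP)
    (hM : Intertwines M Q P) (x : FreeAlgebra k (Fin θ)) :
    ΔQ (twist M x) = twistTensor M (ΔP x) := by
  suffices h : ΔQ ∘ₗ (twist M).toLinearMap = twistTensor M ∘ₗ ΔP from LinearMap.congr_fun h x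
  refine (wordBasis k θ).ext fun l => ?_
  rw [wordBasis_apply]
  change ΔQ (twist M (word k l)) = twistTensor M (ΔP (word k l))
  induction l with
  | nil =>
    have := twistTensor_word M ([] : List (Fin θ)) []
    rw [word_nil] at this ⊢
    rw [twist_one, hQ.map_one, hP.map_one, this]
    simp [wordScalar]
  | cons i l ih =>
    rw [word_cons, hP.map_mul, ← hQ.mul_twistTensor hP hM i (hP.word_mem_tensorPiece l), ← ih,
      ← word_cons, twist_word, twist_word, word_cons, map_smul, hQ.map_mul, map_smul, map_smul,
      smul_smul, wordScalar, Units.val_mul]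

/-- The subspace `I ⊗ T + T ⊗ I` of the tensor square. -/
def coidealSpan (I : Submodule k (FreeAlgebra k (Fin θ))) :
    Submodule k (FreeAlgebra k (Fin θ) ⊗[k] FreeAlgebra k (Fin θ)) :=
  Submodule.span k {t | ∃ a b : FreeAlgebra k (Fin θ), (a ∈ I ∨ b ∈ I) ∧ t = a ⊗ₜ[k] b}

lemma twistTensor_mem_coidealSpan_of_isHom (M : Fin θ → Fin θ → kˣ)
    {I N N' : Submodule k (FreeAlgebra k (Fin θ))} (hN : IsHom N) (hN' : IsHom N')
    (h : ∀ a ∈ N, ∀ b ∈ N', a ∈ I ∨ b ∈ I) {a b : FreeAlgebra k (Fin θ)}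
    (ha : a ∈ N) (hb : b ∈ N') :
    twistTensor M (a ⊗ₜ[k] b) ∈ coidealSpan (I.map (twist M).toLinearMap) := by
  have ha' := hN a ha
  have hb' := hN' b hb
  clear ha hb
  induction ha' using Submodule.span_induction with
  | zero => simp
  | add x y _ _ hx hy => rw [TensorProduct.add_tmul, map_add]; exact add_mem hx hy
  | smul c x _ hx => rw [← TensorProduct.smul_tmul', map_smul]; exact Submodule.smul_mem _ c hx
  | mem x hx =>
    induction hb' using Submodule.span_induction with
    | zero => simp
    | add y z _ _ hy hz => rw [TensorProduct.tmul_add, map_add]; exact add_mem hy hz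
    | smul c y _ hy => rw [TensorProduct.tmul_smul, map_smul]; exact Submodule.smul_mem _ c hy
    | mem y hy =>
      obtain ⟨hxN, d, hx⟩ := hx
      obtain ⟨hyN, e, hy⟩ := hy
      rw [twistTensor_tmul M hx hy]
      exact Submodule.smul_mem _ _ (Submodule.subset_span ⟨_, _,
        (h x hxN y hyN).imp (fun h => ⟨x, h, rfl⟩) (fun h => ⟨y, h, rfl⟩), rfl⟩)

lemma twistTensor_mem_coidealSpan (M : Fin θ → Fin θ → kˣ)
    {I : Submodule k (FreeAlgebra k (Fin θ))} (hI : IsHom I)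
    {t : FreeAlgebra k (Fin θ) ⊗[k] FreeAlgebra k (Fin θ)} (ht : t ∈ coidealSpan I) :
    twistTensor M t ∈ coidealSpan (I.map (twist M).toLinearMap) := by
  induction ht using Submodule.span_induction with
  | zero => simp
  | add x y _ _ hx hy => rw [map_add]; exact add_mem hx hy
  | smul c x _ hx => rw [map_smul]; exact Submodule.smul_mem _ c hx
  | mem t ht =>
    obtain ⟨a, b, ha | hb, rfl⟩ := ht
    · exact twistTensor_mem_coidealSpan_of_isHom M hI isHom_top
        (fun _ h _ _ => .inl h) ha Submodule.mem_top
    · exact twistTensor_mem_coidealSpan_of_isHom M isHom_top hI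
        (fun _ _ _ h => .inr h) Submodule.mem_top hb

lemma IsHom.map_twist (M : Fin θ → Fin θ → kˣ) {I : Submodule k (FreeAlgebra k (Fin θ))}
    (hI : IsHom I) : IsHom (I.map (twist M).toLinearMap) := by
  rw [← hI.span_eq, Submodule.map_span]
  refine isHom_span ?_
  rintro _ ⟨y, ⟨-, d, hy⟩, rfl⟩
  exact ⟨d, twist_mem_piece M hy⟩

lemma twist_algebraMap_add_sum (M : Fin θ → Fin θ → kˣ) (a : k) (v : Fin θ → k) :
    twist M (algebraMap k (FreeAlgebra k (Fin θ)) a + ∑ s, v s • FreeAlgebra.ι k s)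
      = algebraMap k (FreeAlgebra k (Fin θ)) a + ∑ s, v s • FreeAlgebra.ι k s := by
  simp [Algebra.algebraMap_eq_smul_one, twist_one, twist_ι]

lemma Good.map_twist (hQ : IsBraidedComul Q mQ ΔQ) (hP : IsBraidedComul P mP ΔP)
    (hM : Intertwines M Q P) {I : Submodule k (FreeAlgebra k (Fin θ))} (hI : Good k ΔP I) :
    Good k ΔQ (I.map (twist M).toLinearMap) := by
  obtain ⟨hl, hr, hhom, hprim, hco, hgk⟩ := hI
  have htw := isTwistedMul_twist M
  refine ⟨htw.mul_mem_map hl hhom, htw.mul_mem_map_right hr hhom, IsHom.map_twist M hhom,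
    fun a v h => ?_, ?_, ?_⟩
  · obtain ⟨y, hy, hyx⟩ := h
    rw [← twist_algebraMap_add_sum M] at hyx
    exact hprim a v ((twist M).injective hyx ▸ hy)
  · rintro _ ⟨y, hy, rfl⟩
    change ΔQ (twist M y) ∈ _
    rw [hQ.comul_twist hP hM]
    exact twistTensor_mem_coidealSpan M hhom (hco y hy)
  · rwa [← htw.GKdim_ringQuot_eq (twist_one M) hl hr hhom]

end Comul

end Stmt18

/-- **twist equivalence.**  Let `q = (q_ij)` and `p = (p_ij)` be
braiding matrices with `q_ii = p_ii` and `q_ij q_ji = p_ij p_ji` for all `i, j`.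
Then the posets of `ℤ^θ`-graded finite GK-dimensional pre-Nichols algebras of
`(V, c^q)` and `(W, c^p)` (equivalently, of their defining ideals) are isomorphic;
in particular, for each `ℤ^θ`-homogeneous Hopf ideal `I` of `T(V)`,
`GKdim T(V)/I = GKdim T(V)_σ/I`, where `T(V)_σ` is the cocycle deformation of `T(V)`
by `σ(α_i,α_j) = p_ij q_ij⁻¹` (for `i ≤ j`, `= 1` otherwise). -/
theorem stmt18 {k : Type*} [Field k] {θ : ℕ}
    (Q P : Fin θ → Fin θ → kˣ)
    (hdiag : ∀ i, Q i i = P i i)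
    (hsym : ∀ i j, Q i j * Q j i = P i j * P j i)
    -- the braided comultiplication of `T(V)` for the braiding matrix `Q`
    (m2Q : (FreeAlgebra k (Fin θ) ⊗[k] FreeAlgebra k (Fin θ))
      →ₗ[k] (FreeAlgebra k (Fin θ) ⊗[k] FreeAlgebra k (Fin θ))
      →ₗ[k] (FreeAlgebra k (Fin θ) ⊗[k] FreeAlgebra k (Fin θ)))
    (hm2Q : ∀ (a b c d : FreeAlgebra k (Fin θ)) (β γ : Fin θ → ℤ),
      b ∈ piece k θ β → c ∈ piece k θ γ →
      m2Q (a ⊗ₜ b) (c ⊗ₜ d) = (qb k Q β γ : k) • ((a * c) ⊗ₜ[k] (b * d)))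
    (ΔQ : FreeAlgebra k (Fin θ) →ₗ[k] FreeAlgebra k (Fin θ) ⊗[k] FreeAlgebra k (Fin θ))
    (hΔQmul : ∀ x y, ΔQ (x * y) = m2Q (ΔQ x) (ΔQ y))
    (hΔQone : ΔQ 1 = 1 ⊗ₜ 1)
    (hΔQgen : ∀ a : Fin θ, ΔQ (FreeAlgebra.ι k a)
      = FreeAlgebra.ι k a ⊗ₜ 1 + 1 ⊗ₜ FreeAlgebra.ι k a)
    -- the braided comultiplication of `T(W)` for the braiding matrix `P`
    (m2P : (FreeAlgebra k (Fin θ) ⊗[k] FreeAlgebra k (Fin θ))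
      →ₗ[k] (FreeAlgebra k (Fin θ) ⊗[k] FreeAlgebra k (Fin θ))
      →ₗ[k] (FreeAlgebra k (Fin θ) ⊗[k] FreeAlgebra k (Fin θ)))
    (hm2P : ∀ (a b c d : FreeAlgebra k (Fin θ)) (β γ : Fin θ → ℤ),
      b ∈ piece k θ β → c ∈ piece k θ γ →
      m2P (a ⊗ₜ b) (c ⊗ₜ d) = (qb k P β γ : k) • ((a * c) ⊗ₜ[k] (b * d)))
    (ΔP : FreeAlgebra k (Fin θ) →ₗ[k] FreeAlgebra k (Fin θ) ⊗[k] FreeAlgebra k (Fin θ))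
    (hΔPmul : ∀ x y, ΔP (x * y) = m2P (ΔP x) (ΔP y))
    (hΔPone : ΔP 1 = 1 ⊗ₜ 1)
    (hΔPgen : ∀ a : Fin θ, ΔP (FreeAlgebra.ι k a)
      = FreeAlgebra.ι k a ⊗ₜ 1 + 1 ⊗ₜ FreeAlgebra.ι k a)
    -- the cocycle deformation `T(V)_σ`
    {Fσ : Type*} [Ring Fσ] [Algebra k Fσ]
    (φ : FreeAlgebra k (Fin θ) ≃ₗ[k] Fσ)
    (hφ : ∀ (α β : Fin θ → ℤ) (x y : FreeAlgebra k (Fin θ)),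
      x ∈ piece k θ α → y ∈ piece k θ β →
      φ x * φ y = (σb k Q P α β : k) • φ (x * y)) :
    (∃ e : {I : Submodule k (FreeAlgebra k (Fin θ)) // Good k ΔQ I}
        ≃ {I : Submodule k (FreeAlgebra k (Fin θ)) // Good k ΔP I},
      ∀ I J, I.1 ≤ J.1 ↔ (e I).1 ≤ (e J).1)
    ∧ ∀ I : Submodule k (FreeAlgebra k (Fin θ)),
        (∀ (a x : FreeAlgebra k (Fin θ)), x ∈ I → a * x ∈ I) →
        (∀ (a x : FreeAlgebra k (Fin θ)), x ∈ I → x * a ∈ I) →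
        (∀ x ∈ I, x ∈ Submodule.span k {y | y ∈ I ∧ ∃ d, y ∈ piece k θ d}) →
        (∀ x ∈ I, ΔQ x ∈ Submodule.span k
          {t | ∃ a b : FreeAlgebra k (Fin θ), (a ∈ I ∨ b ∈ I) ∧ t = a ⊗ₜ[k] b}) →
        GKdim k (RingQuot (fun a b : FreeAlgebra k (Fin θ) => a - b ∈ I))
          = GKdim k (RingQuot (fun a b : Fσ => a - b ∈ Submodule.map φ.toLinearMap I)) := by
  have hQ : IsBraidedComul Q m2Q ΔQ := ⟨hm2Q, hΔQmul, hΔQone, hΔQgen⟩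
  have hP : IsBraidedComul P m2P ΔP := ⟨hm2P, hΔPmul, hΔPone, hΔPgen⟩
  have hM : Intertwines (cocycleMatrix Q P) Q P := intertwines_cocycleMatrix hdiag hsym
  have hM' : Intertwines (cocycleMatrix Q P)⁻¹ P Q := cocycleMatrix_swap Q P ▸
    intertwines_cocycleMatrix (fun i => (hdiag i).symm) (fun i j => (hsym i j).symm)
  refine ⟨⟨⟨fun I => ⟨_, I.2.map_twist hP hQ hM'⟩, fun J => ⟨_, J.2.map_twist hQ hP hM⟩,
    fun I => Subtype.ext ?_, fun J => Subtype.ext (map_twist_inv_map_twist _ J.1)⟩,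
    fun I J => ?_⟩, fun I hl hr hhom _ => ?_⟩
  · simpa using map_twist_inv_map_twist (cocycleMatrix Q P)⁻¹ I.1
  · exact (Submodule.map_le_map_iff_of_injective (twist _).injective _ _).symm
  · have htw : IsTwistedMul φ (σb k Q P) := hφ
    exact htw.GKdim_ringQuot_eq
      (htw.map_one fun β => by rw [σb_eq_qb, qb_zero_left]) hl hr hhom

end
end
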